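/- Let Q be a finite quiver with no oriented cycles, K an algebraically closed field, and let d' ≤ d be dimension vectors (componentwise). Then the following are equivalent: (a) generically, the representations of KQ of dimension vector d have a subrepresentation of dimension vector d', i.e., there is a dense open subset of Rep_d(KQ) each of whose points encodes a module possessing a submodule of dimension vector d'; (b) every representation of KQ of dimension vector d has a subrepresentation of dimension vector d'; (c) ext(d', d − d') = 0. -/

import Mathlib

open Finset

/-! # Varieties of representations of a quiver with relations: basic setup -/

/-- The Zariski topology on the affine space `ι → K`: it is generated by the basic open
sets `D(p) = {x | p(x) ≠ 0}`, where `p` ranges over multivariate polynomials. -/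
def zariskiTopology (ι K : Type) [CommSemiring K] : TopologicalSpace (ι → K) :=
  TopologicalSpace.generateFrom
    {U | ∃ p : MvPolynomial ι K, U = {x | MvPolynomial.eval x p ≠ 0}}

/-- A finite quiver `Q`: vertices `Fin n`, arrows `Fin numArrows` with source and
target maps. -/
structure QuiverData where
  n : ℕ
  numArrows : ℕ
  src : Fin numArrows → Fin n
  tgt : Fin numArrows → Fin n

namespace QuiverData

variable (Q : QuiverData) (d : Fin Q.n → ℕ) (K : Type) [Field K]

/-- Index of the coordinates of the affine space of `d`-dimensional representations:
for each arrow `a` a matrix entry index in `Fin (d (tgt a)) × Fin (d (src a))`. -/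
abbrev Coords := Σ a : Fin Q.numArrows, Fin (d (Q.tgt a)) × Fin (d (Q.src a))

/-- The affine space of `d`-dimensional representations of `Q`:
a point `x` assigns to each arrow `a` a `d (tgt a) × d (src a)` matrix over `K`. -/
abbrev RepSpace := Coords Q d → K

/-- `RepSpace` carries the Zariski topology. -/
noncomputable instance instRepTop : TopologicalSpace (RepSpace Q d K) :=
  zariskiTopology (Coords Q d) K

/-- The underlying `K`-vector space `⊕ᵢ K^{dᵢ}` of any `d`-dimensional representation. -/
abbrev Carrier := (Σ i : Fin Q.n, Fin (d i)) → K

/-- The projection onto the component of the `i`-th vertex (action of the primitive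
idempotent `eᵢ`). -/
def proj (i : Fin Q.n) : Carrier Q d K →ₗ[K] Carrier Q d K where
  toFun m := fun jv => if jv.1 = i then m jv else 0
  map_add' u v := by
    funext jv; by_cases h : jv.1 = i <;> simp [h]
  map_smul' c u := by
    funext jv; by_cases h : jv.1 = i <;> simp [h]

/-- The action of the arrow `a` on the carrier space of the representation `x`. -/
noncomputable def arrowMap (x : RepSpace Q d K) (a : Fin Q.numArrows) :
    Carrier Q d K →ₗ[K] Carrier Q d K where
  toFun m := fun jv =>
    if h : jv.1 = Q.tgt a then
      ∑ w : Fin (d (Q.src a)), x ⟨a, (Fin.cast (congrArg d h) jv.2, w)⟩ * m ⟨Q.src a, w⟩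
    else 0
  map_add' u v := by
    funext jv
    by_cases h : jv.1 = Q.tgt a <;> simp [h, mul_add, Finset.sum_add_distrib]
  map_smul' c u := by
    funext jv
    by_cases h : jv.1 = Q.tgt a <;>
      simp [h, Finset.mul_sum, mul_comm, mul_left_comm, mul_assoc]

/-- The action of a word `w = [a_k, …, a_1]` of arrows on the representation `x`
(the arrow `a_1` acts first; non-composable words act as `0`). -/
noncomputable def wordMap (x : RepSpace Q d K) (w : List (Fin Q.numArrows)) :
    Module.End K (Carrier Q d K) :=
  (w.map fun a => (arrowMap Q d K x a : Module.End K (Carrier Q d K))).prod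

/-- The submodule `J^l · M_x` of the module `M_x`: the sum of the images of all words of
arrows of length `l` (for an admissible ideal, the radical acts through the arrows). -/
noncomputable def radPow (x : RepSpace Q d K) (l : ℕ) : Submodule K (Carrier Q d K) :=
  ⨆ w : {w : List (Fin Q.numArrows) // w.length = l},
    LinearMap.range (wordMap Q d K x w.1)

/-- The socle series of `M_x`: `socPow x l = soc_l(M_x)`. -/
noncomputable def socPow (x : RepSpace Q d K) : ℕ → Submodule K (Carrier Q d K)
  | 0 => ⨅ a, LinearMap.ker (arrowMap Q d K x a)
  | (l+1) => ⨅ a, (socPow x l).comap (arrowMap Q d K x a)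

/-- The dimension, at the vertex `i`, of a (vertex-graded) subspace `N`. -/
noncomputable def vdim (N : Submodule K (Carrier Q d K)) (i : Fin Q.n) : ℕ :=
  Module.finrank K (N.map (proj Q d K i))

/-- The radical layering `S(M_x) = (M/JM, JM/J²M, …, J^L M/J^{L+1} M)` of the module `M_x`,
recorded through the dimension vectors of its semisimple layers. -/
noncomputable def radLayering (L : ℕ) (x : RepSpace Q d K) :
    Fin (L+1) → Fin Q.n → ℕ :=
  fun l i => vdim Q d K (radPow Q d K x l) i - vdim Q d K (radPow Q d K x (l+1)) i

/-- The socle layering `S*(M_x) = (soc₀M, soc₁M/soc₀M, …)` of the module `M_x`, recorded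
through the dimension vectors of its semisimple layers. -/
noncomputable def socLayering (L : ℕ) (x : RepSpace Q d K) :
    Fin (L+1) → Fin Q.n → ℕ :=
  fun l i => vdim Q d K (socPow Q d K x l) i -
    (if (l : ℕ) = 0 then 0 else vdim Q d K (socPow Q d K x ((l : ℕ) - 1)) i)

end QuiverData

/-- The dominance order on semisimple sequences (recorded as sequences of dimension
vectors): `dominates S S'` means `S ≤ S'`, i.e. `⊕_{j≤l} S_j ⊆ ⊕_{j≤l} S'_j` for all `l`. -/
def dominates {n L : ℕ} (S S' : Fin (L+1) → Fin n → ℕ) : Prop :=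
  ∀ (l : Fin (L+1)) (i : Fin n),
    ∑ j ∈ Finset.univ.filter (fun j => j ≤ l), S j i ≤
      ∑ j ∈ Finset.univ.filter (fun j => j ≤ l), S' j i

/-- A semisimple sequence has dimension vector `d` if its layers' dimension vectors sum
to `d`. -/
def hasDimVec {n L : ℕ} (S : Fin (L+1) → Fin n → ℕ) (d : Fin n → ℕ) : Prop :=
  ∀ i, ∑ l, S l i = d i

namespace QuiverData

variable (Q : QuiverData) (d : Fin Q.n → ℕ) (K : Type) [Field K]

/-- Evaluation of a formal noncommutative polynomial in the vertices (`Sum.inl`) and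
arrows (`Sum.inr`) of `Q` on the representation `x`; an element of the path algebra `KQ`
is represented by such a polynomial. -/
noncomputable def evalRel (x : RepSpace Q d K) :
    FreeAlgebra K (Fin Q.n ⊕ Fin Q.numArrows) →ₐ[K] Module.End K (Carrier Q d K) :=
  FreeAlgebra.lift K
    (Sum.elim (fun i => (proj Q d K i : Module.End K (Carrier Q d K)))
      (fun a => (arrowMap Q d K x a : Module.End K (Carrier Q d K))))

/-- The affine variety `Rep_d(Λ)` for `Λ = KQ/I`, where the ideal `I` is generated by the
set `R` of relations: the set of points of `RepSpace` annihilating every relation. -/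
def RepVar (R : Set (FreeAlgebra K (Fin Q.n ⊕ Fin Q.numArrows))) :
    Set (RepSpace Q d K) :=
  {x | ∀ r ∈ R, evalRel Q d K x r = 0}

/-- The affine variety `Rep_d(Λ)` for the truncated path algebra
`Λ = KQ/⟨all paths of length L+1⟩`. -/
def TruncRepVar (L : ℕ) : Set (RepSpace Q d K) :=
  {x | ∀ w : List (Fin Q.numArrows), w.length = L + 1 → wordMap Q d K x w = 0}

/-- A submodule of `M_x`, i.e. a subspace stable under the arrows and the vertex
idempotents. -/
def Stable (x : RepSpace Q d K) (N : Submodule K (Carrier Q d K)) : Prop :=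
  (∀ a, N.map (arrowMap Q d K x a) ≤ N) ∧ ∀ i, N.map (proj Q d K i) ≤ N

/-- A submodule `N` of `M_x` is indecomposable (as a module). -/
def IndecompSub (x : RepSpace Q d K) (N : Submodule K (Carrier Q d K)) : Prop :=
  N ≠ ⊥ ∧ ∀ N₁ N₂ : Submodule K (Carrier Q d K),
    Stable Q d K x N₁ → Stable Q d K x N₂ → N₁ ≤ N → N₂ ≤ N →
    N₁ ⊔ N₂ = N → N₁ ⊓ N₂ = ⊥ → N₁ = ⊥ ∨ N₂ = ⊥

/-- The module `M_x` is indecomposable. -/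
def IndecompRep (x : RepSpace Q d K) : Prop :=
  IndecompSub Q d K x ⊤

/-- The module `M_x` is uniserial: its submodules form a chain. -/
def UniserialRep (x : RepSpace Q d K) : Prop :=
  ∀ N₁ N₂ : Submodule K (Carrier Q d K),
    Stable Q d K x N₁ → Stable Q d K x N₂ → N₁ ≤ N₂ ∨ N₂ ≤ N₁

/-- `M_x` decomposes as a direct sum of `s` indecomposable submodules whose dimension
vectors are `D 0, …, D (s-1)`. -/
def DecompWith (x : RepSpace Q d K) (s : ℕ) (D : Fin s → Fin Q.n → ℕ) : Prop :=
  ∃ N : Fin s → Submodule K (Carrier Q d K),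
    (∀ r, Stable Q d K x (N r)) ∧
    (∀ r, Disjoint (N r) (⨆ t, ⨆ (_ : t ≠ r), N t)) ∧
    (⨆ r, N r) = ⊤ ∧
    (∀ r, IndecompSub Q d K x (N r)) ∧
    ∀ r i, vdim Q d K (N r) i = D r i

/-- A homomorphism of representations `M_x → M_y` (for possibly different dimension
vectors): a linear map commuting with the arrow actions and the vertex projections. -/
def RepHom (dx dy : Fin Q.n → ℕ) (x : RepSpace Q dx K) (y : RepSpace Q dy K)
    (φ : Carrier Q dx K →ₗ[K] Carrier Q dy K) : Prop :=
  (∀ a, φ ∘ₗ arrowMap Q dx K x a = arrowMap Q dy K y a ∘ₗ φ) ∧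
  ∀ i, φ ∘ₗ proj Q dx K i = proj Q dy K i ∘ₗ φ

/-- The submodule `N` of `M_x` is isomorphic, as a representation, to `M_y`. -/
def SubrepIso (dy : Fin Q.n → ℕ) (x : RepSpace Q d K)
    (N : Submodule K (Carrier Q d K)) (y : RepSpace Q dy K) : Prop :=
  ∃ φ : Carrier Q d K →ₗ[K] Carrier Q dy K,
    N ⊓ LinearMap.ker φ = ⊥ ∧ N.map φ = ⊤ ∧
    (∀ a, ∀ m ∈ N, φ (arrowMap Q d K x a m) = arrowMap Q dy K y a (φ m)) ∧
    (∀ i, ∀ m ∈ N, φ (proj Q d K i m) = proj Q dy K i (φ m))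

/-- The representations `M_x` and `M_y` are isomorphic; the isomorphism classes are
exactly the orbits of the `GL(d)`-action. -/
def IsoRep (x y : RepSpace Q d K) : Prop :=
  ∃ φ : Carrier Q d K ≃ₗ[K] Carrier Q d K,
    (∀ a m, φ (arrowMap Q d K x a m) = arrowMap Q d K y a (φ m)) ∧
    ∀ i m, φ (proj Q d K i m) = proj Q d K i (φ m)

/-- The `GL(d)`-orbit of the point `x`, i.e. the set of points encoding modules
isomorphic to `M_x`. -/
def orbitSet (x : RepSpace Q d K) : Set (RepSpace Q d K) :=
  {y | IsoRep Q d K x y}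

/-- Given a family `P` of varieties `Rep_dv(Λ)` (one for every dimension vector `dv`),
`Ext¹_Λ(M_x, M_y) = 0`: every extension `0 → M_y → E → M_x → 0` of `Λ`-modules splits. -/
def Ext1Zero (P : ∀ dv : Fin Q.n → ℕ, Set (RepSpace Q dv K))
    (dx dy : Fin Q.n → ℕ) (x : RepSpace Q dx K) (y : RepSpace Q dy K) : Prop :=
  ∀ z ∈ P (fun i => dx i + dy i),
    ∀ (ι : Carrier Q dy K →ₗ[K] Carrier Q (fun i => dx i + dy i) K)
      (π : Carrier Q (fun i => dx i + dy i) K →ₗ[K] Carrier Q dx K),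
      RepHom Q K dy (fun i => dx i + dy i) y z ι →
      RepHom Q K (fun i => dx i + dy i) dx z x π →
      Function.Injective ι → Function.Surjective π →
      LinearMap.ker π = LinearMap.range ι →
      ∃ σ : Carrier Q dx K →ₗ[K] Carrier Q (fun i => dx i + dy i) K,
        RepHom Q K dx (fun i => dx i + dy i) x z σ ∧ π ∘ₗ σ = LinearMap.id

/-- The direct sum `C₁ ⊕ ⋯ ⊕ C_s` of subvarieties `C_r ⊆ Rep_{D r}(Λ)`: the set of
points `x ∈ Rep_d(Λ)` whose module decomposes as `M_x ≅ ⊕_r M^{(r)}` with `M^{(r)}`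
encoded by a point of `C_r`. -/
def DirectSumSet (s : ℕ) (D : Fin s → Fin Q.n → ℕ)
    (Cs : ∀ r : Fin s, Set (RepSpace Q (D r) K)) : Set (RepSpace Q d K) :=
  {x | ∃ N : Fin s → Submodule K (Carrier Q d K),
    (∀ r, Stable Q d K x (N r)) ∧
    (∀ r, Disjoint (N r) (⨆ t, ⨆ (_ : t ≠ r), N t)) ∧
    (⨆ r, N r) = ⊤ ∧
    ∀ r, ∃ y ∈ Cs r, SubrepIso Q d K (D r) x (N r) y}

/-- The endomorphism space `End_Λ(M_x)` of the module `M_x`. -/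
def endSpace (x : RepSpace Q d K) :
    Submodule K (Carrier Q d K →ₗ[K] Carrier Q d K) where
  carrier := {φ | RepHom Q K d d x x φ}
  add_mem' := by
    intro φ ψ hφ hψ
    exact ⟨fun a => by rw [LinearMap.add_comp, LinearMap.comp_add, hφ.1 a, hψ.1 a],
      fun i => by rw [LinearMap.add_comp, LinearMap.comp_add, hφ.2 i, hψ.2 i]⟩
  zero_mem' := by
    exact ⟨fun a => by simp, fun i => by simp⟩
  smul_mem' := by
    intro c φ hφ
    exact ⟨fun a => by rw [LinearMap.smul_comp, LinearMap.comp_smul, hφ.1 a],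
      fun i => by rw [LinearMap.smul_comp, LinearMap.comp_smul, hφ.2 i]⟩

/-- A word of arrows is a (composable) path when read in function-composition order. -/
def IsPathWord (w : List (Fin Q.numArrows)) : Prop :=
  List.Chain' (fun a b => Q.src a = Q.tgt b) w

/-- The quiver `Q` has no oriented cycles. -/
def Acyclic : Prop :=
  ∀ (a : Fin Q.numArrows) (w : List (Fin Q.numArrows)),
    IsPathWord Q (a :: w) →
      Q.tgt a ≠ Q.src ((a :: w).getLast (List.cons_ne_nil a w))

/-- A filtration `M_x = F 0 ⊇ F 1 ⊇ ⋯ ⊇ F (L+1) = 0` by submodules which is governed by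
the semisimple sequence `S`: each layer `F l / F (l+1)` is semisimple, isomorphic to `S l`. -/
def Governed (L : ℕ) (x : RepSpace Q d K) (S : Fin (L+1) → Fin Q.n → ℕ)
    (F : Fin (L+2) → Submodule K (Carrier Q d K)) : Prop :=
  F 0 = ⊤ ∧ F (Fin.last (L+1)) = ⊥ ∧
  (∀ l : Fin (L+1), F l.succ ≤ F l.castSucc) ∧
  (∀ (l : Fin (L+2)) (i : Fin Q.n), (F l).map (proj Q d K i) ≤ F l) ∧
  (∀ (l : Fin (L+1)) (a : Fin Q.numArrows),
      (F l.castSucc).map (arrowMap Q d K x a) ≤ F l.succ) ∧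
  ∀ (l : Fin (L+1)) (i : Fin Q.n),
      vdim Q d K (F l.castSucc) i = S l i + vdim Q d K (F l.succ) i

/-- `Filt S`: the set of points whose module has a filtration governed by `S`. -/
def FiltSet (L : ℕ) (S : Fin (L+1) → Fin Q.n → ℕ) : Set (RepSpace Q d K) :=
  {x | ∃ F, Governed Q d K L x S F}

/-- `Γ(M_x)`: the number of semisimple sequences which are realizable (i.e. occur as the
radical layering of a module in the variety `P`) and which govern some filtration of `M_x`. -/
noncomputable def gammaCount (L : ℕ) (P : Set (RepSpace Q d K))
    (x : RepSpace Q d K) : ℕ :=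
  Set.ncard {S : Fin (L+1) → Fin Q.n → ℕ |
    (∃ y ∈ P, radLayering Q d K L y = S) ∧ ∃ F, Governed Q d K L x S F}

/-- `Sstar` is the generic (= minimal, attained) socle layering of the modules in `W`. -/
def GenSoc (L : ℕ) (W : Set (RepSpace Q d K))
    (Sstar : Fin (L+1) → Fin Q.n → ℕ) : Prop :=
  (∀ x ∈ W, dominates Sstar (socLayering Q d K L x)) ∧
  ∃ x ∈ W, socLayering Q d K L x = Sstar

end QuiverData

namespace QuiverData

variable (Q : QuiverData)

/-- The `i`-th entry of the row vector `e·A` (over `ℤ`), where `A` is the adjacency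
matrix of `Q`: the sum of `e (src a)` over all arrows `a` ending at `i`. -/
def inflowZ (e : Fin Q.n → ℤ) (i : Fin Q.n) : ℤ :=
  ∑ a ∈ Finset.univ.filter (fun a => Q.tgt a = i), e (Q.src a)

/-- The `i`-th entry of the row vector `e·B` (over `ℤ`), where `B` is the transpose of
the adjacency matrix of `Q`. -/
def outflowZ (e : Fin Q.n → ℤ) (i : Fin Q.n) : ℤ :=
  ∑ a ∈ Finset.univ.filter (fun a => Q.src a = i), e (Q.tgt a)

/-- Partial sums `t⁽⁰⁾ + ⋯ + t⁽ˡ⁾` of the recursion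
`t⁽⁰⁾ = sup{0, d − d·A}`, `t⁽ˡ⁺¹⁾ = sup{0, (d − ∑_{k≤l} t⁽ᵏ⁾) − (d − ∑_{k≤l} t⁽ᵏ⁾)·A}`
(computed componentwise). -/
def cumLayer (dz : Fin Q.n → ℤ) : ℕ → Fin Q.n → ℤ
  | 0 => fun i => max 0 (dz i - inflowZ Q dz i)
  | (l+1) => fun i =>
      cumLayer dz l i +
        max 0 ((dz i - cumLayer dz l i) -
          inflowZ Q (fun j => dz j - cumLayer dz l j) i)

/-- The positive part `∑ᵢ eᵢ fᵢ` of the Euler form of `Q`. -/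
def eulerHomPart (e f : Fin Q.n → ℕ) : ℕ := ∑ i, e i * f i

/-- The negative part `∑_{α} e_{src α} f_{tgt α}` of the Euler form of `Q`, so that
`⟨e, f⟩ = eulerHomPart e f − eulerExtPart e f`. -/
def eulerExtPart (e f : Fin Q.n → ℕ) : ℕ :=
  ∑ a, e (Q.src a) * f (Q.tgt a)

end QuiverData

/-- The quiver with a single vertex and `r` loops. -/
def QuiverData.loopQuiver (r : ℕ) : QuiverData :=
  ⟨1, r, fun _ => 0, fun _ => 0⟩

namespace QuiverData

variable (Q : QuiverData) (d : Fin Q.n → ℕ) (K : Type) [Field K]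

/-- The variety `Rep_d(Λ)` for `Λ = KQ/⟨Rels⟩`, regarded as a topological space with the
(subspace) Zariski topology. -/
abbrev GenV (Rels : Set (FreeAlgebra K (Fin Q.n ⊕ Fin Q.numArrows))) :=
  {y : RepSpace Q d K // y ∈ RepVar Q d K Rels}

/-- The variety `Rep_d(Λ)` for the truncated path algebra
`Λ = KQ/⟨paths of length L+1⟩`, regarded as a topological space. -/
abbrev TruncV (L : ℕ) := {y : RepSpace Q d K // y ∈ TruncRepVar Q d K L}

end QuiverData

/-! Up to reordering the basis, a representation with a subrepresentation of dimension vector `d'`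
has the form `X = (1 + m) B (1 + m)⁻¹` with `m` strictly block lower and `B` block upper triangular,
so everything depends on whether the parametrisation `(m, B) ↦ X` of flagged representations is
dominant.

If `Ext¹` vanishes between two representations, then the parametrisation is a submersion at their
direct sum, hence dominant, and the generic representation preserves a flag. Normalising a basis of
its subrepresentation by a maximal minor of largest valuation, one specialises it along a valuation
ring to every representation; this replaces the properness of the Grassmannian.

Conversely, if a dense set of representations preserves a flag, then no polynomial relation holds
among the coordinates of `X`, so the parametrisation is dominant. Consider the generic commutator
map `f ↦ B f - f B` on maps from the lower to the upper step of the flag, whose cokernel is the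
`Ext¹` in question, and let `f` be a generic element of its kernel. Kernel and image of `f` refine
the flag to four steps. Submodularity of the transcendence degree shows that the Euler form of the
bottom and the top step is nonnegative; comparing this with a parameter count for `(f, B)`, in which
`f` identifies the two middle steps, forces the commutator map to be surjective. A nonvanishing
maximal minor then gives a point over `K` at which `Ext¹` vanishes. -/

theorem aeval_mul_of_isHomogeneous {σ R A : Type*} [CommSemiring R] [CommSemiring A]
    [Algebra R A] {φ : MvPolynomial σ R} {n : ℕ} (hφ : φ.IsHomogeneous n) (t : A) (u : σ → A) :
    MvPolynomial.aeval (fun i => t * u i) φ = t ^ n * MvPolynomial.aeval u φ := by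
  simp only [MvPolynomial.aeval_def, MvPolynomial.eval₂_eq, Finset.mul_sum]
  refine Finset.sum_congr rfl fun e he => ?_
  have hn : ∑ i ∈ e.support, e i = n := by
    have := hφ (MvPolynomial.mem_support_iff.mp he)
    simpa [Finsupp.weight_apply, Finsupp.sum] using this
  simp only [mul_pow, Finset.prod_mul_distrib, Finset.prod_pow_eq_pow_sum, hn]
  ring

theorem exists_homogeneousComponent_ne_zero {σ R : Type*} [CommSemiring R]
    {p : MvPolynomial σ R} (hp : p ≠ 0) :
    ∃ k, MvPolynomial.homogeneousComponent k p ≠ 0 := by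
  contrapose! hp
  rw [← MvPolynomial.sum_homogeneousComponent p]
  exact Finset.sum_eq_zero fun k _ => hp k

open Polynomial in
-- Along the curve `t ↦ t • u t` a polynomial agrees to leading order with its lowest-degree part.
theorem eval_homogeneousComponent_eq_zero {σ K : Type*} [CommRing K] {p : MvPolynomial σ K}
    {k : ℕ} (hk : ∀ j < k, MvPolynomial.homogeneousComponent j p = 0) {u : σ → K[X]}
    (hp : MvPolynomial.aeval (fun i => X * u i) p = 0) :
    MvPolynomial.eval (fun i => (u i).eval 0) (MvPolynomial.homogeneousComponent k p) = 0 := by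
  have hcomp (j : ℕ) : MvPolynomial.aeval (fun i => X * u i)
      (MvPolynomial.homogeneousComponent j p) =
        X ^ j * MvPolynomial.aeval u (MvPolynomial.homogeneousComponent j p) :=
    aeval_mul_of_isHomogeneous (MvPolynomial.homogeneousComponent_isHomogeneous j p) _ _
  have hcoeff (j : ℕ) (hj : j ≠ k) : (MvPolynomial.aeval (fun i => X * u i)
      (MvPolynomial.homogeneousComponent j p)).coeff k = 0 := by
    rcases hj.lt_or_gt with hlt | hgt
    · simp [hk j hlt]
    · rw [hcomp, coeff_X_pow_mul', if_neg hgt.not_ge]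
  have hsum : ∑ j ∈ Finset.range (p.totalDegree + 1), (MvPolynomial.aeval (fun i => X * u i)
      (MvPolynomial.homogeneousComponent j p)).coeff k = 0 := by
    rw [← finsetSum_coeff, ← map_sum, MvPolynomial.sum_homogeneousComponent, hp, coeff_zero]
  have hzero : (MvPolynomial.aeval (fun i => X * u i)
      (MvPolynomial.homogeneousComponent k p)).coeff k = 0 := by
    by_cases hmem : k ∈ Finset.range (p.totalDegree + 1)
    · rwa [Finset.sum_eq_single_of_mem k hmem fun j _ => hcoeff j] at hsum
    · rw [MvPolynomial.homogeneousComponent_eq_zero _ _ (by simpa using hmem), map_zero, coeff_zero]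
  rw [hcomp, coeff_X_pow_mul', if_pos le_rfl, Nat.sub_self, coeff_zero_eq_eval_zero] at hzero
  refine Eq.trans ?_ hzero
  rw [← MvPolynomial.aeval_eq_eval, ← coe_aeval_eq_eval, ← MvPolynomial.comp_aeval_apply]

open Polynomial in
theorem aeval_dualNumber_eps {K : Type*} [CommRing K] (g : K[X]) :
    aeval (DualNumber.eps : DualNumber K) g =
      TrivSqZeroExt.inl (g.coeff 0) + TrivSqZeroExt.inr (g.coeff 1) := by
  have hg : g = C (g.coeff 0) + X * (C (g.coeff 1) + X * g.divX.divX) := by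
    conv_lhs => rw [← g.X_mul_divX_add, ← g.divX.X_mul_divX_add]
    simp [add_comm]
  conv_lhs => rw [hg]
  ext <;> simp [mul_add, ← mul_assoc, TrivSqZeroExt.algebraMap_eq_inl]

open Polynomial in
theorem exists_polynomial_curve_of_dualNumber {σ ι K : Type*} [CommRing K]
    {f : ι → MvPolynomial σ K} {w : σ → DualNumber K} {x y : ι → K}
    (hw : ∀ i, MvPolynomial.aeval w (f i) =
      TrivSqZeroExt.inl (x i) + TrivSqZeroExt.inr (y i)) :
    ∃ (W : σ → K[X]) (u : ι → K[X]),
      ∀ i, MvPolynomial.aeval W (f i) = C (x i) + X * u i ∧ (u i).eval 0 = y i := by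
  let W (s : σ) : K[X] := C (w s).fst + C (w s).snd * X
  let g (i : ι) : K[X] := MvPolynomial.aeval W (f i)
  refine ⟨W, fun i => (g i).divX, fun i => ?_⟩
  have hWw : (fun s => aeval (DualNumber.eps : DualNumber K) (W s)) = w := by
    funext s
    ext <;> simp [W, TrivSqZeroExt.algebraMap_eq_inl]
  have hgi : aeval (DualNumber.eps : DualNumber K) (g i) =
      TrivSqZeroExt.inl (x i) + TrivSqZeroExt.inr (y i) := by
    rw [← hw i, MvPolynomial.comp_aeval_apply, hWw]
  rw [aeval_dualNumber_eps] at hgi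
  have h0 : (g i).coeff 0 = x i := by simpa using congrArg TrivSqZeroExt.fst hgi
  have h1 : (g i).coeff 1 = y i := by simpa using congrArg TrivSqZeroExt.snd hgi
  exact ⟨by rw [← h0, add_comm, X_mul_divX_add], by rw [← coeff_zero_eq_eval_zero, coeff_divX, h1]⟩

theorem aeval_C_add_X_ne_zero {ι K : Type*} [CommRing K] {p : MvPolynomial ι K} (hp : p ≠ 0)
    (x : ι → K) : MvPolynomial.aeval (fun i => MvPolynomial.C (x i) + MvPolynomial.X i) p ≠
      (0 : MvPolynomial ι K) := by
  intro h0
  refine hp ?_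
  have := congrArg (MvPolynomial.aeval fun i =>
    (MvPolynomial.X i - MvPolynomial.C (x i) : MvPolynomial ι K)) h0
  rw [MvPolynomial.comp_aeval_apply] at this
  simpa [MvPolynomial.algebraMap_eq] using this

/- If a relation `p` among the `f i` existed, its lowest-degree part at `x` would vanish at every
tangent vector `y`. -/
theorem algebraicIndependent_of_dualNumber {σ ι K : Type*} [Field K] [Infinite K]
    (f : ι → MvPolynomial σ K) (x : ι → K)
    (h : ∀ y : ι → K, ∃ w : σ → DualNumber K, ∀ i, MvPolynomial.aeval w (f i) =
      TrivSqZeroExt.inl (x i) + TrivSqZeroExt.inr (y i)) :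
    AlgebraicIndependent K f := by
  classical
  rw [algebraicIndependent_iff]
  by_contra! ⟨p, hpf, hp⟩
  have hex := exists_homogeneousComponent_ne_zero (aeval_C_add_X_ne_zero hp x)
  refine Nat.find_spec hex (MvPolynomial.funext fun y => ?_)
  obtain ⟨w, hw⟩ := h y
  obtain ⟨W, u, hWu⟩ := exists_polynomial_curve_of_dualNumber hw
  rw [map_zero, ← funext fun i => (hWu i).2]
  refine eval_homogeneousComponent_eq_zero (fun j hj => not_not.mp (Nat.find_min hex hj)) ?_
  have hcurve : (fun i => MvPolynomial.aeval (fun i => Polynomial.X * u i)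
      (MvPolynomial.C (x i) + MvPolynomial.X i : MvPolynomial ι K)) =
        fun i => MvPolynomial.aeval W (f i) := by
    funext i
    simp [(hWu i).1]
  rw [MvPolynomial.comp_aeval_apply, hcurve, ← MvPolynomial.comp_aeval_apply, hpf, map_zero]

/-- The matrix `m` vanishes outside the positions `(p, q)` with `r p q`. -/
def SupportedOn {I J R : Type*} [Zero R] (r : I → J → Prop) (m : Matrix I J R) : Prop :=
  ∀ p q, ¬ r p q → m p q = 0

namespace SupportedOn

variable {I J L R S : Type*} {r : I → J → Prop}

theorem mono [Zero R] {m : Matrix I J R} {s : I → J → Prop} (hm : SupportedOn r m)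
    (h : ∀ p q, r p q → s p q) : SupportedOn s m :=
  fun p q hs => hm p q (mt (h p q) hs)

theorem add [AddZeroClass R] {m m' : Matrix I J R} (hm : SupportedOn r m)
    (hm' : SupportedOn r m') : SupportedOn r (m + m') := fun p q h => by
  rw [Matrix.add_apply, hm p q h, hm' p q h, add_zero]

theorem sub [AddGroup R] {m m' : Matrix I J R} (hm : SupportedOn r m)
    (hm' : SupportedOn r m') : SupportedOn r (m - m') := fun p q h => by
  rw [Matrix.sub_apply, hm p q h, hm' p q h, sub_zero]

theorem neg [AddGroup R] {m : Matrix I J R} (hm : SupportedOn r m) : SupportedOn r (-m) :=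
  fun p q h => by rw [Matrix.neg_apply, hm p q h, neg_zero]

theorem one [DecidableEq I] [Zero R] [One R] {r : I → I → Prop} (hr : ∀ p, r p p) :
    SupportedOn r (1 : Matrix I I R) := fun p _ h =>
  Matrix.one_apply_ne fun hpq => h (hpq ▸ hr p)

theorem mul [Fintype J] [NonUnitalNonAssocSemiring R] {s : J → L → Prop} {t : I → L → Prop}
    {m : Matrix I J R} {m' : Matrix J L R} (hm : SupportedOn r m) (hm' : SupportedOn s m')
    (h : ∀ p q k, r p q → s q k → t p k) : SupportedOn t (m * m') := fun p k hpk => by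
  rw [Matrix.mul_apply]
  refine Finset.sum_eq_zero fun q _ => ?_
  by_cases hr : r p q
  · rw [hm' q k fun hs => hpk (h p q k hr hs), mul_zero]
  · rw [hm p q hr, zero_mul]

theorem mul_eq_zero [Fintype J] [NonUnitalNonAssocSemiring R] {s : J → L → Prop}
    {m : Matrix I J R} {m' : Matrix J L R} (hm : SupportedOn r m) (hm' : SupportedOn s m')
    (h : ∀ p q k, r p q → ¬ s q k) : m * m' = 0 :=
  Matrix.ext fun p k =>
    hm.mul hm' (t := fun _ _ => False) (fun p q k hr hs => h p q k hr hs) p k not_false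

theorem map [Zero R] [Zero S] {m : Matrix I J R} (hm : SupportedOn r m) {f : R → S}
    (hf : f 0 = 0) : SupportedOn r (m.map f) := fun p q h => by
  rw [Matrix.map_apply, hm p q h, hf]

theorem submatrix [Zero R] {m : Matrix I J R} (hm : SupportedOn r m) {I' J' : Type*}
    (e : I' → I) (e' : J' → J) : SupportedOn (fun p q => r (e p) (e' q)) (m.submatrix e e') :=
  fun p q => hm (e p) (e' q)

end SupportedOn

/-- The positions `(p, q)` at which a matrix supported on `r` may be nonzero. -/
abbrev Entry {I J : Type*} (r : I → J → Prop) := {t : I × J // r t.1 t.2}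

open Classical in
/-- The matrix supported on `r` with prescribed entries. -/
noncomputable def ofEntries {I J R : Type*} [Zero R] {r : I → J → Prop} (w : Entry r → R) :
    Matrix I J R :=
  Matrix.of fun p q => if h : r p q then w ⟨(p, q), h⟩ else 0

section Entries

variable {I J R S : Type*} {r : I → J → Prop}

theorem supportedOn_ofEntries [Zero R] (w : Entry r → R) : SupportedOn r (ofEntries w) :=
  fun _ _ h => dif_neg h

theorem ofEntries_apply [Zero R] (w : Entry r → R) {p : I} {q : J} (h : r p q) :
    ofEntries w p q = w ⟨(p, q), h⟩ :=
  dif_pos h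

theorem ofEntries_eq_self [Zero R] {m : Matrix I J R} (hm : SupportedOn r m) :
    ofEntries (fun t : Entry r => m t.1.1 t.1.2) = m := by
  ext p q
  by_cases h : r p q
  · exact ofEntries_apply _ h
  · rw [supportedOn_ofEntries _ p q h, hm p q h]

theorem map_ofEntries [Zero R] [Zero S] (w : Entry r → R) {f : R → S} (hf : f 0 = 0) :
    (ofEntries w).map f = ofEntries (f ∘ w) := by
  ext p q
  by_cases h : r p q
  · simp only [ofEntries, Matrix.map_apply, Matrix.of_apply, dif_pos h, Function.comp_apply]
  · simp only [ofEntries, Matrix.map_apply, Matrix.of_apply, dif_neg h, hf]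

end Entries

/-- The matrix `m` is homogeneous of degree zero for gradings `v` of its rows and `v'` of its
columns: the matrix of a graded linear map. -/
abbrev Graded {I J V R : Type*} [Zero R] (v : I → V) (v' : J → V) (m : Matrix I J R) : Prop :=
  SupportedOn (fun p q => v p = v' q) m

/-- The homogeneous part of degree zero of `m`. -/
noncomputable def gradedPart {I J V R : Type*} [Zero R] (v : I → V) (v' : J → V)
    (m : Matrix I J R) : Matrix I J R :=
  ofEntries fun t : Entry fun p q => v p = v' q => m t.1.1 t.1.2

section Graded

variable {I J L V R : Type*} {v : I → V} {v' : J → V} {v'' : L → V}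

theorem graded_gradedPart [Zero R] (m : Matrix I J R) : Graded v v' (gradedPart v v' m) :=
  supportedOn_ofEntries _

theorem gradedPart_eq_self [Zero R] {m : Matrix I J R} (hm : Graded v v' m) :
    gradedPart v v' m = m :=
  ofEntries_eq_self hm

theorem gradedPart_mul_left [Fintype J] [NonUnitalNonAssocSemiring R] {P : Matrix I J R}
    (hP : Graded v v' P) (m : Matrix J L R) :
    gradedPart v v'' (P * m) = P * gradedPart v' v'' m := by
  ext p k
  by_cases h : v p = v'' k
  · simp only [gradedPart, ofEntries, Matrix.of_apply, dif_pos h, Matrix.mul_apply]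
    refine Finset.sum_congr rfl fun q _ => ?_
    by_cases hpq : v p = v' q
    · rw [dif_pos (hpq.symm.trans h)]
    · rw [hP p q hpq, zero_mul, zero_mul]
  · rw [graded_gradedPart _ p k h]
    exact (hP.mul (graded_gradedPart m) (fun _ _ _ => Eq.trans) p k h).symm

theorem gradedPart_mul_right [Fintype J] [NonUnitalNonAssocSemiring R] (m : Matrix I J R)
    {P : Matrix J L R} (hP : Graded v' v'' P) :
    gradedPart v v'' (m * P) = gradedPart v v' m * P := by
  ext p k
  by_cases h : v p = v'' k
  · simp only [gradedPart, ofEntries, Matrix.of_apply, dif_pos h, Matrix.mul_apply]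
    refine Finset.sum_congr rfl fun q _ => ?_
    by_cases hqk : v' q = v'' k
    · rw [dif_pos (h.trans hqk.symm)]
    · rw [hP q k hqk, mul_zero, mul_zero]
  · rw [graded_gradedPart _ p k h]
    exact ((graded_gradedPart m).mul hP (fun _ _ _ => Eq.trans) p k h).symm

theorem Graded.inv [Fintype I] [DecidableEq I] [CommRing R] {P : Matrix I I R}
    (hP : Graded v v P) : Graded v v P⁻¹ := by
  by_cases hdet : IsUnit P.det
  · have h : P * gradedPart v v P⁻¹ = 1 := by
      rw [← gradedPart_mul_left hP, Matrix.mul_nonsing_inv _ hdet]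
      exact gradedPart_eq_self (.one fun _ => rfl)
    rw [Matrix.inv_eq_right_inv h]
    exact graded_gradedPart _
  · rw [Matrix.nonsing_inv_apply_not_isUnit _ hdet]
    exact fun _ _ _ => rfl

end Graded

section Minors

variable {I J V : Type*} [Fintype J] [DecidableEq J]

-- Expanding `det (b * z) = 1` in the rows of `z`, some summand is nonzero.
theorem exists_det_submatrix_ne_zero [Fintype I] {R : Type*} [CommRing R] [Nontrivial R]
    {z : Matrix I J R} {b : Matrix J I R} (h : b * z = 1) :
    ∃ e : J → I, (z.submatrix e id).det ≠ 0 := by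
  classical
  by_contra! hall
  have hrows : b * z = Matrix.of fun q => ∑ p, b q p • z p := by
    ext q k
    simp [Matrix.mul_apply, Finset.sum_apply]
  have hdet : (b * z).det = 0 := by
    rw [hrows]
    refine (Matrix.detRowAlternating.toMultilinearMap.map_sum fun q p => b q p • z p).trans ?_
    refine Finset.sum_eq_zero fun e _ => ?_
    rw [MultilinearMap.map_smul_univ]
    exact (congrArg _ (hall e)).trans (smul_zero _)
  rw [h, Matrix.det_one] at hdet
  exact one_ne_zero hdet

theorem exists_perm_of_det_ne_zero {R : Type*} [CommRing R] {A : Matrix J J R}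
    (h : A.det ≠ 0) : ∃ σ : Equiv.Perm J, ∀ q, A (σ q) q ≠ 0 := by
  rw [Matrix.det_apply] at h
  obtain ⟨σ, -, hσ⟩ := Finset.exists_ne_zero_of_sum_ne_zero h
  refine ⟨σ, fun q hq => hσ ?_⟩
  exact smul_eq_zero_of_right _ (Finset.prod_eq_zero (Finset.mem_univ q) hq)

variable {F : Type*} [Field F]

theorem mul_inv_submatrix_apply (z : Matrix I J F) (e : J → I) (p : I) (q : J) :
    (z * (z.submatrix e id)⁻¹) p q =
      (z.submatrix (Function.update e q p) id).det / (z.submatrix e id).det := by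
  have hupdate : z.submatrix (Function.update e q p) id =
      (z.submatrix e id).updateRow q (z p) := by
    ext i j
    rcases eq_or_ne i q with rfl | h
    · simp
    · simp [h]
  rw [hupdate, ← Matrix.cramer_transpose_apply, Matrix.cramer_eq_adjugate_mulVec, Matrix.inv_def,
    ← Matrix.adjugate_transpose, Matrix.mul_apply, Matrix.mulVec, dotProduct, Finset.sum_div]
  refine Finset.sum_congr rfl fun j _ => ?_
  simp only [Matrix.smul_apply, Ring.inverse_eq_inv', smul_eq_mul, Matrix.transpose_apply]
  ring

/- Among all maximal minors choose one of largest valuation: by Cramer's rule the normalised matrix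
is then integral. -/
theorem exists_normalized_columns [Fintype I] (O : ValuationSubring F) {v : I → V} {v' : J → V}
    {z : Matrix I J F} (hz : Graded v v' z) {b : Matrix J I F} (hb : b * z = 1) :
    ∃ (e : J → I) (E : Matrix J J F), (∀ q, v (e q) = v' q) ∧ Graded v' v' E ∧ IsUnit E.det ∧
      (z * E).submatrix e id = 1 ∧ ∀ p q, (z * E) p q ∈ O := by
  classical
  obtain ⟨e₀, he₀⟩ := exists_det_submatrix_ne_zero hb
  have : Nonempty (J → I) := ⟨e₀⟩
  obtain ⟨e₁, hmax⟩ := Finite.exists_max fun e : J → I => O.valuation (z.submatrix e id).det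
  have he₁ : (z.submatrix e₁ id).det ≠ 0 := fun h0 => by
    have := hmax e₀
    rw [h0, map_zero, le_zero_iff, map_eq_zero] at this
    exact he₀ this
  obtain ⟨σ, hσ⟩ := exists_perm_of_det_ne_zero he₁
  let e := e₁ ∘ σ
  have hv (q : J) : v (e q) = v' q := not_not.mp fun h => hσ q (hz _ _ h)
  have hdet : (z.submatrix e id).det = Equiv.Perm.sign σ * (z.submatrix e₁ id).det :=
    Matrix.det_permute σ (z.submatrix e₁ id)
  have hunit : IsUnit (z.submatrix e id).det := by
    rw [hdet]
    exact ((Equiv.Perm.sign σ).isUnit.map (Int.castRingHom F)).mul he₁.isUnit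
  have hval : O.valuation (z.submatrix e id).det = O.valuation (z.submatrix e₁ id).det := by
    rw [hdet]
    rcases Int.units_eq_one_or (Equiv.Perm.sign σ) with h | h <;> simp [h, Valuation.map_neg]
  have hgraded : Graded v' v' (z.submatrix e id) :=
    (hz.submatrix e id).mono fun q k h => (hv q).symm.trans h
  refine ⟨e, (z.submatrix e id)⁻¹, hv, hgraded.inv, Matrix.isUnit_nonsing_inv_det _ hunit, ?_,
    fun p q => ?_⟩
  · exact Matrix.mul_nonsing_inv _ hunit
  · rw [mul_inv_submatrix_apply, ← ValuationSubring.valuation_le_one_iff, map_div₀, hval]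
    exact div_le_one_of_le₀ (hmax _) zero_le

end Minors

section Places

variable {K : Type*} [Field K]

theorem exists_algHom_forall_mem_eq_zero [IsAlgClosed K] {R : Type*} [CommRing R] [Algebra K R]
    [Algebra.FiniteType K R] {N : Ideal R} (hN : N ≠ ⊤) : ∃ φ : R →ₐ[K] K, ∀ r ∈ N, φ r = 0 := by
  obtain ⟨m, hm, hNm⟩ := N.exists_le_maximal hN
  let := Ideal.Quotient.field m
  have : Module.Finite K (R ⧸ m) := finite_of_finite_type_of_isJacobsonRing K (R ⧸ m)
  let e : K ≃ₐ[K] (R ⧸ m) := AlgEquiv.ofBijective (Algebra.ofId K (R ⧸ m))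
    IsAlgClosed.algebraMap_bijective_of_isIntegral
  refine ⟨e.symm.toAlgHom.comp (Ideal.Quotient.mkₐ K m), fun r hr => ?_⟩
  simp [Ideal.Quotient.eq_zero_iff_mem.mpr (hNm hr)]

variable {F σ : Type*} [Field F] [Algebra K F]

theorem exists_valuationSubring_sub_mem_nonunits {M : σ → F} (hM : AlgebraicIndependent K M)
    (x : σ → K) : ∃ O : ValuationSubring F, (∀ k, algebraMap K F k ∈ O) ∧
      ∀ t, M t - algebraMap K F (x t) ∈ O.nonunits := by
  let A := Algebra.adjoin K (Set.range M)
  let φ : A →ₐ[K] K := (MvPolynomial.aeval x).comp hM.aevalEquiv.symm.toAlgHom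
  have hφ (t : σ) (h : M t ∈ A) : φ ⟨M t, h⟩ = x t := by
    have : hM.aevalEquiv.symm ⟨M t, h⟩ = MvPolynomial.X t := by
      rw [AlgEquiv.symm_apply_eq]
      exact Subtype.ext (by simp)
    simp [φ, this]
  obtain ⟨O, hAO, hφO⟩ := Ideal.image_subset_nonunits_valuationSubring (A := A.toSubring)
    (RingHom.ker φ) (RingHom.ker_ne_top φ)
  refine ⟨O, fun k => hAO (A.algebraMap_mem k), fun t => hφO ?_⟩
  have hMt : M t ∈ A := Algebra.subset_adjoin ⟨t, rfl⟩
  refine ⟨(⟨M t, hMt⟩ : A) - algebraMap K A (x t), ?_, rfl⟩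
  rw [SetLike.mem_coe, RingHom.mem_ker, map_sub, hφ]
  exact sub_eq_zero.mpr (φ.commutes (x t)).symm

/- A valuation ring dominating the local ring of the point `x`: whatever is integral for it can be
specialised together with `M ↦ x`. -/
theorem exists_valuationSubring_specialization [IsAlgClosed K] [Finite σ] {M : σ → F}
    (hM : AlgebraicIndependent K M) (x : σ → K) :
    ∃ O : ValuationSubring F, ∀ S : Set F, S.Finite → (∀ s ∈ S, s ∈ O) →
      ∃ (R : Subalgebra K F) (φ : R →ₐ[K] K), S ⊆ R ∧ ∀ t, ∃ h : M t ∈ R, φ ⟨M t, h⟩ = x t := by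
  obtain ⟨O, hK, hO⟩ := exists_valuationSubring_sub_mem_nonunits hM x
  refine ⟨O, fun S hS hSO => ?_⟩
  let R := Algebra.adjoin K (Set.range M ∪ S)
  have hRO : R.toSubring ≤ O.toSubring := by
    let O' : Subalgebra K F := { O.toSubring with algebraMap_mem' := hK }
    refine Algebra.adjoin_le (S := O') (Set.union_subset ?_ hSO)
    rintro _ ⟨t, rfl⟩
    exact sub_add_cancel (M t) _ ▸
      O.add_mem _ _ (ValuationSubring.nonunits_subset (hO t)) (hK (x t))
  let N : Ideal R := (IsLocalRing.maximalIdeal O).comap (Subring.inclusion hRO)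
  have : Algebra.FiniteType K R :=
    R.fg_iff_finiteType.mp ⟨((Set.finite_range M).union hS).toFinset, by simp [R]⟩
  obtain ⟨φ, hφ⟩ := exists_algHom_forall_mem_eq_zero (K := K) (N := N)
    (Ideal.IsPrime.ne_top inferInstance)
  refine ⟨R, φ, Set.subset_union_right.trans Algebra.subset_adjoin, fun t => ?_⟩
  have hMt : M t ∈ R := Algebra.subset_adjoin (Or.inl ⟨t, rfl⟩)
  refine ⟨hMt, ?_⟩
  have := hφ (⟨M t, hMt⟩ - algebraMap K R (x t))
    ((ValuationSubring.coe_mem_nonunits_iff (a := Subring.inclusion hRO _)).mp (hO t))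
  rwa [map_sub, AlgHom.commutes, sub_eq_zero] at this

end Places

section AlgebraicRank

variable (K : Type*) {F : Type*} [Field K] [Field F] [Algebra K F]

/-- The relative algebraic closure in `F` of the field generated by `S` over `K`, i.e. the closure
of `S` in the matroid of algebraic independence. -/
noncomputable def relAlgClosure (S : Set F) : Subfield F :=
  { (Subalgebra.algebraicClosure (Algebra.adjoin K S) F).toSubring with
    inv_mem' := fun x hx => (show IsAlgebraic (Algebra.adjoin K S) x from hx).inv }

/-- The transcendence degree of the field generated by `S` over `K`, i.e. the rank of `S` in the
matroid of algebraic independence. -/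
noncomputable def algRank (S : Set F) : ℕ∞ := (AlgebraicIndependent.matroid K F).eRk S

theorem coe_relAlgClosure (S : Set F) :
    (relAlgClosure K S : Set F) = (AlgebraicIndependent.matroid K F).closure S := by
  rw [AlgebraicIndependent.matroid_closure_eq]
  rfl

theorem subset_relAlgClosure (S : Set F) : S ⊆ relAlgClosure K S := by
  rw [coe_relAlgClosure]
  exact Matroid.subset_closure _ _ (by simp)

theorem algRank_mono {S T : Set F} (h : S ⊆ relAlgClosure K T) : algRank K S ≤ algRank K T := by
  rw [coe_relAlgClosure] at h
  simpa only [algRank, Matroid.eRk_closure_eq] using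
    (AlgebraicIndependent.matroid K F).eRk_mono h

theorem algRank_range_le {ι : Type*} [Finite ι] (w : ι → F) :
    algRank K (Set.range w) ≤ Nat.card ι := by
  refine (Matroid.eRk_le_encard _ _).trans ?_
  rw [← Set.image_univ, ← ENat.card_eq_coe_natCard, ← Set.encard_univ]
  exact Set.encard_image_le _ _

theorem algRank_range_of_algebraicIndependent {ι : Type*} [Finite ι] {w : ι → F}
    (hw : AlgebraicIndependent K w) : algRank K (Set.range w) = Nat.card ι := by
  have hindep : (AlgebraicIndependent.matroid K F).Indep (Set.range w) := hw.coe_range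
  rw [algRank, hindep.eRk_eq_encard, ← Set.image_univ, hw.injective.encard_image, Set.encard_univ,
    ENat.card_eq_coe_natCard]

theorem algRank_inter_add_algRank_union_le (S T : Set F) :
    algRank K (S ∩ T) + algRank K (S ∪ T) ≤ algRank K S + algRank K T :=
  (AlgebraicIndependent.matroid K F).eRk_inter_add_eRk_union_le S T

end AlgebraicRank

section Cells

variable {Q : QuiverData} {V I α β R : Type*}

/-- Positions of matrices of vertex-preserving maps, restricted to `s`. -/
abbrev homRel (v : I → V) (s : I → I → Prop) (p q : I) : Prop := v p = v q ∧ s p q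

/-- Positions of matrices of maps along the arrow `a`, restricted to `s`. -/
abbrev arrowRel (Q : QuiverData) (v : I → Fin Q.n) (s : I → I → Prop) (a : Fin Q.numArrows)
    (p q : I) : Prop := (v p = Q.tgt a ∧ v q = Q.src a) ∧ s p q

/-- Coordinates of the space of representations of `Q` on the `v`-graded free module with basis
`I` whose arrows have matrices supported on `s`. -/
abbrev ArrowEntry (Q : QuiverData) (v : I → Fin Q.n) (s : I → I → Prop) : Type _ :=
  Σ a, Entry (arrowRel Q v s a)

/-- The coordinates on `s` of a representation given by its arrow matrices. -/
def arrowEntries (v : I → Fin Q.n) (s : I → I → Prop) (X : Fin Q.numArrows → Matrix I I R) :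
    ArrowEntry Q v s → R := fun t => X t.1 t.2.1.1 t.2.1.2

/-- The representation with prescribed coordinates on `s`. -/
noncomputable def ofArrowEntries [Zero R] {v : I → Fin Q.n} {s : I → I → Prop}
    (w : ArrowEntry Q v s → R) (a : Fin Q.numArrows) : Matrix I I R :=
  ofEntries fun t => w ⟨a, t⟩

theorem ofArrowEntries_arrowEntries [Zero R] {v : I → Fin Q.n} {s : I → I → Prop}
    {X : Fin Q.numArrows → Matrix I I R} (hX : ∀ a, SupportedOn (arrowRel Q v s a) (X a)) :
    ofArrowEntries (arrowEntries v s X) = X :=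
  funext fun a => ofEntries_eq_self (hX a)

theorem graded_prodMk_iff [Zero R] {v : I → V} {c : I → α} {m : Matrix I I R} :
    Graded (fun p => (v p, c p)) (fun p => (v p, c p)) m ↔
      SupportedOn (homRel v fun p q => c p = c q) m := by
  simp only [Graded, SupportedOn, Prod.mk.injEq]

theorem SupportedOn.graded_of_homRel [Zero R] {v : I → V} {s : I → I → Prop} {m : Matrix I I R}
    (hm : SupportedOn (homRel v s) m) : Graded v v m :=
  hm.mono fun _ _ => And.left

theorem SupportedOn.mul_mul_of_graded [Fintype I] [NonUnitalNonAssocSemiring R] {v : I → Fin Q.n}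
    {s : I → I → Prop} {a : Fin Q.numArrows} {P X P' : Matrix I I R}
    (hX : SupportedOn (arrowRel Q v s a) X) (hP : Graded v v P) (hP' : Graded v v P') :
    SupportedOn (arrowRel Q v ⊤ a) (P * X * P') := by
  have hPX := hP.mul hX (t := arrowRel Q v ⊤ a)
    fun p q k hpq hqk => ⟨⟨hpq.trans hqk.1.1, hqk.1.2⟩, trivial⟩
  exact hPX.mul hP' fun p q k hpq hqk => ⟨⟨hpq.1.1, hqk.symm.trans hpq.1.2⟩, trivial⟩

theorem graded_one_add_of_homRel [DecidableEq I] [LT α] [NonAssocSemiring R] {v : I → V}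
    {c : I → α} {g : α → β} {m : Matrix I I R}
    (hm : SupportedOn (homRel v fun p q => c q < c p ∧ g (c p) = g (c q)) m) :
    Graded (fun p => (v p, g (c p))) (fun p => (v p, g (c p))) (1 + m) :=
  .add (.one fun _ => rfl) (hm.mono fun _ _ h => Prod.ext h.1 h.2.2)

variable [Fintype I] [DecidableEq I] [LinearOrder α] [LinearOrder β] [CommRing R]

theorem det_one_add_of_supportedOn_lt {c : I → α} {m : Matrix I I R}
    (hm : SupportedOn (fun p q => c q < c p) m) : (1 + m).det = 1 := by
  have htri : (1 + m).BlockTriangular (OrderDual.toDual ∘ c) := fun p q h => by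
    have hlt : c p < c q := h
    rw [Matrix.add_apply, Matrix.one_apply_ne fun hpq => hlt.ne (congrArg c hpq),
      hm p q hlt.not_gt, add_zero]
  rw [htri.det]
  refine Finset.prod_eq_one fun k _ => ?_
  have hblock : (1 + m).toSquareBlock (OrderDual.toDual ∘ c) k = 1 := by
    ext ⟨p, hp⟩ ⟨q, hq⟩
    have hpq : c p = c q := hp.trans hq.symm
    rw [Matrix.toSquareBlock_def, Matrix.of_apply, Matrix.add_apply,
      hm p q fun h => h.ne hpq.symm, add_zero]
    simp only [Matrix.one_apply, Subtype.mk.injEq]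
  rw [hblock, Matrix.det_one]

theorem exists_one_add_mul_one_add_eq {v : I → V} {c : I → α} {m : Matrix I I R}
    (hm : SupportedOn (homRel v fun p q => c q < c p) m) {g : α → β} (hg : Monotone g) :
    ∃ m' n : Matrix I I R, SupportedOn (homRel v fun p q => c q < c p ∧ g (c p) = g (c q)) m' ∧
      SupportedOn (homRel v fun p q => g (c q) < g (c p)) n ∧ (1 + n) * (1 + m') = 1 + m ∧
      ∀ q, (∀ r, c q < c r → g (c r) ≠ g (c q)) → ∀ p, n p q = m p q := by
  let s := homRel v fun p q => c q < c p ∧ g (c p) = g (c q)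
  let w : Entry s → R := fun t => m t.1.1 t.1.2
  let m' : Matrix I I R := ofEntries w
  have hm' : SupportedOn s m' := supportedOn_ofEntries _
  have hdet : IsUnit (1 + m').det := by
    rw [det_one_add_of_supportedOn_lt (hm'.mono fun _ _ h => h.2.1)]
    exact isUnit_one
  have hdiff : SupportedOn (homRel v fun p q => g (c q) < g (c p)) (m - m') := fun p q hpq => by
    by_cases hlow : homRel v (fun p q => c q < c p) p q
    · have heq : g (c q) = g (c p) :=
        (hg hlow.2.le).lt_or_eq.resolve_left fun hlt => hpq ⟨hlow.1, hlt⟩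
      have hs : s p q := ⟨hlow.1, hlow.2, heq.symm⟩
      rw [Matrix.sub_apply, sub_eq_zero]
      exact (ofEntries_apply w hs).symm
    · rw [Matrix.sub_apply, hm p q hlow, hm' p q fun hr => hlow ⟨hr.1, hr.2.1⟩, sub_zero]
  let n := (m - m') * (1 + m')⁻¹
  have hn : n * (1 + m') = m - m' := Matrix.nonsing_inv_mul_cancel_right _ _ hdet
  refine ⟨m', n, hm', ?_, ?_, fun q hq p => ?_⟩
  · exact hdiff.mul (graded_prodMk_iff.mp (graded_one_add_of_homRel hm').inv)
      fun p q k hpq hqk => ⟨hpq.1.trans hqk.1, hqk.2.symm.trans_lt hpq.2⟩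
  · rw [add_mul, hn, one_mul]
    abel
  · have hzero (r : I) : m' r q = 0 := hm' r q fun hr => hq r hr.2.1 hr.2.2
    have hnm : n p q + (n * m') p q = m p q - m' p q := by
      rw [← Matrix.add_apply, ← Matrix.sub_apply, ← hn, mul_add, mul_one]
    rwa [Matrix.mul_apply, Finset.sum_eq_zero fun r _ => by rw [hzero r, mul_zero], hzero p,
      add_zero, sub_zero] at hnm

/-- The representation `X` preserves the flag that the unipotent matrix `1 + m` moves off the
coordinate flag `{c ≤ k}`, and `B` is `X` in the basis adapted to that flag. -/
structure IsFlagged (v : I → Fin Q.n) (c : I → α) (X : Fin Q.numArrows → Matrix I I R)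
    (m : Matrix I I R) (B : Fin Q.numArrows → Matrix I I R) : Prop where
  lower : SupportedOn (homRel v fun p q => c q < c p) m
  upper : ∀ a, SupportedOn (arrowRel Q v (fun p q => c p ≤ c q) a) (B a)
  comm : ∀ a, X a * (1 + m) = (1 + m) * B a

namespace IsFlagged

variable {v : I → Fin Q.n} {c : I → α} {X B : Fin Q.numArrows → Matrix I I R}
  {m : Matrix I I R}

theorem det_eq_one (h : IsFlagged v c X m B) : (1 + m).det = 1 :=
  det_one_add_of_supportedOn_lt (h.lower.mono fun _ _ => And.right)

theorem isUnit_det (h : IsFlagged v c X m B) : IsUnit (1 + m).det :=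
  h.det_eq_one ▸ isUnit_one

theorem eq_mul (h : IsFlagged v c X m B) (a : Fin Q.numArrows) :
    X a = (1 + m) * B a * (1 + m)⁻¹ := by
  rw [← h.comm a, Matrix.mul_nonsing_inv_cancel_right _ _ h.isUnit_det]

theorem graded (h : IsFlagged v c X m B) : Graded v v (1 + m) :=
  .add (.one fun _ => rfl) h.lower.graded_of_homRel

theorem supportedOn (h : IsFlagged v c X m B) (a : Fin Q.numArrows) :
    SupportedOn (arrowRel Q v ⊤ a) (X a) := by
  rw [h.eq_mul a]
  exact (h.upper a).mul_mul_of_graded h.graded h.graded.inv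

/-- Forgetting steps of the flag along `g` absorbs the factor of `1 + m` that preserves the classes
of `g` into the change of basis. -/
theorem coarsen (h : IsFlagged v c X m B) {g : α → β} (hg : Monotone g) :
    ∃ n B', IsFlagged v (g ∘ c) X n B' ∧
      ∀ q, (∀ r, c q < c r → g (c r) ≠ g (c q)) → ∀ p, n p q = m p q := by
  obtain ⟨m', n, hm', hn, hfactor, hcol⟩ := exists_one_add_mul_one_add_eq h.lower hg
  have hdet : IsUnit (1 + m').det := by
    rw [det_one_add_of_supportedOn_lt (hm'.mono fun _ _ h => h.2.1)]
    exact isUnit_one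
  have hu := graded_one_add_of_homRel hm'
  have hu' := graded_prodMk_iff.mp hu.inv
  refine ⟨n, fun a => (1 + m') * B a * (1 + m')⁻¹, ⟨hn, fun a => ?_, fun a => ?_⟩, hcol⟩
  · refine SupportedOn.mul (r := arrowRel Q v (fun p q => g (c p) ≤ g (c q)) a) ?_ hu'
      fun p q k hpq hqk => ⟨⟨hpq.1.1, hqk.1.symm.trans hpq.1.2⟩, hpq.2.trans_eq hqk.2⟩
    exact (graded_prodMk_iff.mp hu).mul (h.upper a) fun p q k hpq hqk =>
      ⟨⟨hpq.1.trans hqk.1.1, hqk.1.2⟩, hpq.2.trans_le (hg hqk.2)⟩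
  · rw [← mul_assoc, ← mul_assoc, hfactor, ← h.comm a, ← hfactor, ← mul_assoc,
      Matrix.mul_nonsing_inv_cancel_right _ _ hdet]

end IsFlagged
end Cells

section Counting

open QuiverData

variable {Q : QuiverData} {I κ : Type*} [Finite I]

/-- The dimension vector of the span of the basis vectors of class `i`. -/
noncomputable def classDim (v : I → Fin Q.n) (c : I → κ) (i : κ) (u : Fin Q.n) : ℕ :=
  Nat.card {p // v p = u ∧ c p = i}

variable [Fintype κ] (v : I → Fin Q.n) (c : I → κ) (σ : κ → κ → Prop) [DecidableRel σ]

theorem card_entry_block (u₁ u₂ : Fin Q.n) :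
    Nat.card (Entry fun p q => (v p = u₁ ∧ v q = u₂) ∧ σ (c p) (c q)) =
      ∑ i, ∑ j, if σ i j then classDim v c j u₂ * classDim v c i u₁ else 0 := by
  let e : (Entry fun p q => (v p = u₁ ∧ v q = u₂) ∧ σ (c p) (c q)) ≃
      Σ t : {t : κ × κ // σ t.1 t.2},
        {q // v q = u₂ ∧ c q = t.1.2} × {p // v p = u₁ ∧ c p = t.1.1} :=
    { toFun := fun t => ⟨⟨(c t.1.1, c t.1.2), t.2.2⟩, ⟨t.1.2, t.2.1.2, rfl⟩, ⟨t.1.1, t.2.1.1, rfl⟩⟩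
      invFun := fun t => ⟨(t.2.2.1, t.2.1.1), ⟨t.2.2.2.1, t.2.1.2.1⟩, by
        rw [t.2.2.2.2, t.2.1.2.2]
        exact t.1.2⟩
      left_inv := fun _ => rfl
      right_inv := by
        rintro ⟨⟨⟨i, j⟩, _⟩, ⟨q, _, hq⟩, ⟨p, _, hp⟩⟩
        obtain rfl : c q = j := hq
        obtain rfl : c p = i := hp
        rfl }
  rw [Nat.card_congr e, Nat.card_sigma, ← Fintype.sum_prod_type', ← Finset.sum_filter,
    ← Finset.sum_subtype_eq_sum_filter]
  simp only [Nat.card_prod]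
  exact Finset.sum_congr (by simp) fun _ _ => rfl

theorem card_entry_homRel :
    Nat.card (Entry (homRel v fun p q => σ (c p) (c q))) =
      ∑ i, ∑ j, if σ i j then eulerHomPart Q (classDim v c j) (classDim v c i) else 0 := by
  let e : (Entry (homRel v fun p q => σ (c p) (c q))) ≃
      Σ u, Entry fun p q => (v p = u ∧ v q = u) ∧ σ (c p) (c q) :=
    { toFun := fun t => ⟨v t.1.2, t.1, ⟨t.2.1, rfl⟩, t.2.2⟩
      invFun := fun t => ⟨t.2.1, t.2.2.1.1.trans t.2.2.1.2.symm, t.2.2.2⟩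
      left_inv := fun _ => rfl
      right_inv := by
        rintro ⟨_, ⟨_, _⟩, ⟨_, rfl⟩, _⟩
        rfl }
  rw [Nat.card_congr e, Nat.card_sigma]
  simp only [card_entry_block, eulerHomPart]
  rw [Finset.sum_comm]
  refine Finset.sum_congr rfl fun i _ => ?_
  rw [Finset.sum_comm]
  refine Finset.sum_congr rfl fun j _ => ?_
  split_ifs
  · rfl
  · exact Finset.sum_const_zero

theorem card_arrowEntry :
    Nat.card (ArrowEntry Q v fun p q => σ (c p) (c q)) =
      ∑ i, ∑ j, if σ i j then eulerExtPart Q (classDim v c j) (classDim v c i) else 0 := by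
  rw [Nat.card_sigma]
  simp only [card_entry_block, eulerExtPart]
  rw [Finset.sum_comm]
  refine Finset.sum_congr rfl fun i _ => ?_
  rw [Finset.sum_comm]
  refine Finset.sum_congr rfl fun j _ => ?_
  split_ifs
  · rfl
  · exact Finset.sum_const_zero

end Counting

section GenericFlags

variable {Q : QuiverData} {I α β R S K F : Type*} [LinearOrder α]

/-- Parameters for the pairs `(m, B)` of a lower triangular change of basis and an upper
triangular representation. -/
abbrev FlagParam (Q : QuiverData) (v : I → Fin Q.n) (c : I → α) : Type _ :=
  Entry (homRel v fun p q => c q < c p) ⊕ ArrowEntry Q v fun p q => c p ≤ c q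

open QuiverData in
theorem card_flagParam [Finite I] {κ : Type*} [Fintype κ] (v : I → Fin Q.n) (c : I → κ)
    (g : κ → α) :
    Nat.card (FlagParam Q v (g ∘ c)) =
      (∑ i, ∑ j, if g j < g i then eulerHomPart Q (classDim v c j) (classDim v c i) else 0) +
        ∑ i, ∑ j, if g i ≤ g j then eulerExtPart Q (classDim v c j) (classDim v c i) else 0 := by
  rw [Nat.card_sum]
  exact congrArg₂ _ (card_entry_homRel v c fun i j => g j < g i)
    (card_arrowEntry v c fun i j => g i ≤ g j)

/-- The field of rational functions in the parameters of the flags of type `c`. -/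
abbrev FlagField (K : Type*) [Field K] (v : I → Fin Q.n) (c : I → α) : Type _ :=
  FractionRing (MvPolynomial (FlagParam Q v c) K)

/-- The parameters themselves, as a point over their function field. -/
noncomputable def genericParam (K : Type*) [Field K] (v : I → Fin Q.n) (c : I → α) :
    FlagParam Q v c → FlagField K v c :=
  fun t => algebraMap _ _ (MvPolynomial.X t : MvPolynomial (FlagParam Q v c) K)

theorem algebraicIndependent_genericParam [Field K] {v : I → Fin Q.n} {c : I → α} :
    AlgebraicIndependent K (genericParam K v c) :=
  (MvPolynomial.algebraicIndependent_X _ K).map'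
    (f := IsScalarTower.toAlgHom K (MvPolynomial (FlagParam Q v c) K) (FlagField K v c))
    (IsFractionRing.injective _ _)

variable {v : I → Fin Q.n} {c : I → α} [Fintype I] [DecidableEq I] [CommRing R] [CommRing S]
  [Field K] [Field F] [Algebra K F]

/-- The representation preserving a flag with the given parameters. -/
noncomputable def flagPoint (w : FlagParam Q v c → R) (a : Fin Q.numArrows) : Matrix I I R :=
  (1 + ofEntries (w ∘ Sum.inl)) * ofArrowEntries (w ∘ Sum.inr) a * (1 + ofEntries (w ∘ Sum.inl))⁻¹

theorem isFlagged_flagPoint (w : FlagParam Q v c → R) :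
    IsFlagged v c (flagPoint w) (ofEntries (w ∘ Sum.inl)) (ofArrowEntries (w ∘ Sum.inr)) where
  lower := supportedOn_ofEntries _
  upper _ := supportedOn_ofEntries _
  comm _ := Matrix.nonsing_inv_mul_cancel_right _ _ <| by
    rw [det_one_add_of_supportedOn_lt ((supportedOn_ofEntries _).mono fun _ _ => And.right)]
    exact isUnit_one

theorem IsFlagged.flagPoint_eq {X B : Fin Q.numArrows → Matrix I I R} {m : Matrix I I R}
    (h : IsFlagged v c X m B) :
    flagPoint (c := c) (Sum.elim (fun t => m t.1.1 t.1.2) (arrowEntries v _ B)) = X := by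
  funext a
  rw [flagPoint, Sum.elim_comp_inl, Sum.elim_comp_inr, ofEntries_eq_self h.lower,
    ofArrowEntries_arrowEntries h.upper, ← h.eq_mul]

theorem IsFlagged.map {X B : Fin Q.numArrows → Matrix I I R} {m : Matrix I I R}
    (h : IsFlagged v c X m B) (f : R →+* S) :
    IsFlagged v c (fun a => (X a).map f) (m.map f) (fun a => (B a).map f) where
  lower := h.lower.map f.map_zero
  upper a := (h.upper a).map f.map_zero
  comm a := by
    have hm : (1 + m).map f = 1 + m.map f := by
      rw [Matrix.map_add f f.map_add, Matrix.map_one f f.map_zero f.map_one]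
    rw [← hm, ← Matrix.map_mul, ← Matrix.map_mul, h.comm a]

theorem flagPoint_map (f : R →+* S) (w : FlagParam Q v c → R) (a : Fin Q.numArrows) :
    (flagPoint w a).map f = flagPoint (f ∘ w) a := by
  rw [((isFlagged_flagPoint w).map f).eq_mul a, ofArrowEntries, map_ofEntries _ f.map_zero,
    map_ofEntries _ f.map_zero]
  rfl

variable (K) in
/-- The coordinates of the representation preserving a flag, as polynomials in the parameters. -/
noncomputable def flagPolynomial (v : I → Fin Q.n) (c : I → α) :
    ArrowEntry Q v ⊤ → MvPolynomial (FlagParam Q v c) K :=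
  arrowEntries v ⊤ (flagPoint MvPolynomial.X)

theorem aeval_flagPolynomial [Algebra K R] (w : FlagParam Q v c → R) (t : ArrowEntry Q v ⊤) :
    MvPolynomial.aeval w (flagPolynomial K v c t) = arrowEntries v ⊤ (flagPoint w) t := by
  have h := flagPoint_map (MvPolynomial.aeval (R := K) w).toRingHom MvPolynomial.X t.1
  have hw : (MvPolynomial.aeval (R := K) w).toRingHom ∘ MvPolynomial.X = w :=
    funext fun i => MvPolynomial.aeval_X w i
  rw [hw] at h
  exact congrFun (congrFun h t.2.1.1) t.2.1.2

variable (K) in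
/-- Generic representations preserve a flag of type `c`: the parametrisation of such
representations is dominant. -/
def GenericallyFlagged (v : I → Fin Q.n) (c : I → α) : Prop :=
  AlgebraicIndependent K (flagPolynomial K v c)

theorem IsFlagged.genericallyFlagged [Algebra K R] {X B : Fin Q.numArrows → Matrix I I R}
    {m : Matrix I I R} (h : IsFlagged v c X m B)
    (hX : AlgebraicIndependent K (arrowEntries v ⊤ X)) : GenericallyFlagged K v c := by
  let w : FlagParam Q v c → R := Sum.elim (fun t => m t.1.1 t.1.2) (arrowEntries v _ B)
  refine AlgebraicIndependent.of_comp (MvPolynomial.aeval w) ?_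
  convert hX using 1
  funext t
  rw [Function.comp_apply, aeval_flagPolynomial, h.flagPoint_eq]

theorem GenericallyFlagged.algebraicIndependent (h : GenericallyFlagged K v c)
    {w : FlagParam Q v c → F} (hw : AlgebraicIndependent K w) :
    AlgebraicIndependent K (arrowEntries v ⊤ (flagPoint w)) := by
  have := AlgebraicIndependent.map' h (f := MvPolynomial.aeval w) hw
  convert this using 1
  exact funext fun t => (aeval_flagPolynomial w t).symm

end GenericFlags

section FlagInequality

variable {Q : QuiverData} {I J α β K F : Type*} [Fintype I] [DecidableEq I] [Field F]

theorem inv_mem_matrix {L : Subfield F} {P : Matrix I I F} (hP : P ∈ L.toSubring.matrix) :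
    P⁻¹ ∈ L.toSubring.matrix (n := I) := fun p q => by
  let P₀ : Matrix I I L := Matrix.of fun p q => ⟨P p q, hP p q⟩
  have hP₀ : P = L.subtype.mapMatrix P₀ := rfl
  rw [Matrix.inv_def, hP₀, ← RingHom.map_det, ← RingHom.map_adjugate, Ring.inverse_eq_inv',
    ← map_inv₀]
  exact L.mul_mem (P₀.det⁻¹).2 (P₀.adjugate p q).2

theorem SupportedOn.mem_matrix {r : I → I → Prop} {m : Matrix I I F} (hm : SupportedOn r m)
    {L : Subring F} (h : ∀ t : Entry r, m t.1.1 t.1.2 ∈ L) : m ∈ L.matrix := fun p q => by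
  by_cases hr : r p q
  · exact h ⟨(p, q), hr⟩
  · rw [hm p q hr]
    exact zero_mem L

variable [LinearOrder α] [LinearOrder β] [Field K] [Algebra K F] {v : I → Fin Q.n} {c : I → α}
  {X B : Fin Q.numArrows → Matrix I I F} {m : Matrix I I F}

theorem mem_of_flagPoint_mem {w : FlagParam Q v c → F} {L : Subfield F}
    (hX : ∀ t, arrowEntries v ⊤ (flagPoint w) t ∈ L)
    (hm : ∀ t : Entry (homRel v fun p q => c q < c p),
      ofEntries (w ∘ Sum.inl) t.1.1 t.1.2 ∈ L) (i : FlagParam Q v c) : w i ∈ L := by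
  have h := isFlagged_flagPoint w
  rcases i with t | ⟨a, t⟩
  · have ht := hm t
    rwa [ofEntries_apply _ t.2] at ht
  · have hm' : 1 + ofEntries (w ∘ Sum.inl) ∈ L.toSubring.matrix (n := I) :=
      add_mem (one_mem _) (h.lower.mem_matrix hm)
    have hXa : flagPoint w a ∈ L.toSubring.matrix :=
      (h.supportedOn a).mem_matrix fun t => hX ⟨a, t⟩
    have hB : ofArrowEntries (w ∘ Sum.inr) a ∈ L.toSubring.matrix := by
      rw [← Matrix.nonsing_inv_mul_cancel_left _ (ofArrowEntries _ a) h.isUnit_det, ← h.comm a]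
      exact mul_mem (inv_mem_matrix hm') (mul_mem hXa hm')
    exact ofEntries_apply (fun t => w (.inr ⟨a, t⟩)) t.2 ▸ hB t.1.1 t.1.2

variable (K) in
theorem IsFlagged.algRank_le (h : IsFlagged v c X m B) :
    algRank K (Set.range (arrowEntries v ⊤ X) ∪ Set.range fun t : I × I => m t.1 t.2) ≤
      Nat.card (FlagParam Q v c) := by
  let w : FlagParam Q v c → F := Sum.elim (fun t => m t.1.1 t.1.2) (arrowEntries v _ B)
  let L := relAlgClosure K (Set.range w)
  have hw (i) : w i ∈ L := subset_relAlgClosure K _ (Set.mem_range_self i)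
  have hm : m ∈ L.toSubring.matrix := h.lower.mem_matrix fun t => hw (.inl t)
  have hX (a) : X a ∈ L.toSubring.matrix := by
    have hB : B a ∈ L.toSubring.matrix := (h.upper a).mem_matrix fun t => hw (.inr ⟨a, t⟩)
    have hm' : 1 + m ∈ L.toSubring.matrix := add_mem (one_mem _) hm
    rw [h.eq_mul a]
    exact mul_mem (mul_mem hm' hB) (inv_mem_matrix hm')
  refine (algRank_mono K (Set.union_subset ?_ ?_)).trans (algRank_range_le K w)
  · rintro _ ⟨t, rfl⟩
    exact hX t.1 t.2.1.1 t.2.1.2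
  · rintro _ ⟨t, rfl⟩
    exact hm t.1 t.2

/-- The two coarsenings share the coordinates of `X`, and together they determine all the
parameters; so this is submodularity of the transcendence degree. -/
theorem GenericallyFlagged.card_add_card_le (h : GenericallyFlagged K v c) {g₁ g₂ : α → β}
    (hg₁ : Monotone g₁) (hg₂ : Monotone g₂)
    (hg : ∀ i j, i < j → (∀ k, i < k → g₁ k ≠ g₁ i) ∨ (∀ k, i < k → g₂ k ≠ g₂ i)) :
    Nat.card (ArrowEntry Q v ⊤) + Nat.card (FlagParam Q v c) ≤
      Nat.card (FlagParam Q v (g₁ ∘ c)) + Nat.card (FlagParam Q v (g₂ ∘ c)) := by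
  have hw := algebraicIndependent_genericParam (K := K) (v := v) (c := c)
  set w := genericParam K v c
  have hX := h.algebraicIndependent hw
  have hflag := isFlagged_flagPoint w
  set X := flagPoint w
  obtain ⟨n₁, B₁, h₁, hn₁⟩ := hflag.coarsen hg₁
  obtain ⟨n₂, B₂, h₂, hn₂⟩ := hflag.coarsen hg₂
  let S := Set.range (arrowEntries v ⊤ X) ∪ Set.range fun t : I × I => n₁ t.1 t.2
  let T := Set.range (arrowEntries v ⊤ X) ∪ Set.range fun t : I × I => n₂ t.1 t.2
  have hinter : (Nat.card (ArrowEntry Q v ⊤) : ℕ∞) ≤ algRank K (S ∩ T) := by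
    rw [← algRank_range_of_algebraicIndependent K hX]
    exact algRank_mono K ((Set.subset_inter Set.subset_union_left Set.subset_union_left).trans
      (subset_relAlgClosure K _))
  have hunion : (Nat.card (FlagParam Q v c) : ℕ∞) ≤ algRank K (S ∪ T) := by
    rw [← algRank_range_of_algebraicIndependent K hw]
    have hST : S ∪ T ⊆ relAlgClosure K (S ∪ T) := subset_relAlgClosure K _
    refine algRank_mono K (Set.range_subset_iff.mpr (mem_of_flagPoint_mem
      (fun t => hST (.inl (.inl ⟨t, rfl⟩))) fun t => ?_))
    rcases hg _ _ t.2.2 with hlt | hlt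
    · exact hn₁ t.1.2 (fun r => hlt (c r)) t.1.1 ▸ hST (.inl (.inr ⟨t.1, rfl⟩))
    · exact hn₂ t.1.2 (fun r => hlt (c r)) t.1.1 ▸ hST (.inr (.inr ⟨t.1, rfl⟩))
  have := (add_le_add hinter hunion).trans ((algRank_inter_add_algRank_union_le K S T).trans
    (add_le_add (h₁.algRank_le K) (h₂.algRank_le K)))
  exact_mod_cast this

open QuiverData in
/-- For a flag with three steps, the inequality between the two two-step coarsenings says that
the Euler form of the bottom and the top class is nonnegative. -/
theorem GenericallyFlagged.eulerExtPart_le {c : I → Fin 3} (h : GenericallyFlagged K v c) :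
    eulerExtPart Q (classDim v c 0) (classDim v c 2) ≤
      eulerHomPart Q (classDim v c 0) (classDim v c 2) := by
  have hcard := h.card_add_card_le (g₁ := (![0, 1, 1] : Fin 3 → Fin 2)) (g₂ := ![0, 0, 1])
    (by decide) (by decide) (by decide)
  have hall : Nat.card (ArrowEntry Q v ⊤) = _ := card_arrowEntry v c fun _ _ => True
  have hfine : Nat.card (FlagParam Q v c) = _ := card_flagParam v c id
  simp +decide only [hall, hfine, card_flagParam, Fin.sum_univ_three, id, ↓reduceIte] at hcard
  omega

end FlagInequality

section DualNumbers

theorem dualNumber_matrix_mul {I R : Type*} [Fintype I] [CommRing R] (A B A' B' : Matrix I I R) :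
    (A.map TrivSqZeroExt.inl + B.map TrivSqZeroExt.inr : Matrix I I (DualNumber R)) *
        (A'.map TrivSqZeroExt.inl + B'.map TrivSqZeroExt.inr) =
      (A * A').map TrivSqZeroExt.inl + (A * B' + B * A').map TrivSqZeroExt.inr := by
  ext p q
  · simp [Matrix.mul_apply, TrivSqZeroExt.fst_sum]
  · simp [Matrix.mul_apply, TrivSqZeroExt.snd_sum, Finset.sum_add_distrib, mul_comm]

variable {Q : QuiverData} {I α K : Type*} [Fintype I] [DecidableEq I] [LinearOrder α] [Field K]

/-- The hypothesis says that the parametrisation of flagged representations is a submersion at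
the coordinate flag and `B₀`. -/
theorem genericallyFlagged_of_surjective [Infinite K] {v : I → Fin Q.n} {c : I → α}
    {B₀ : Fin Q.numArrows → Matrix I I K}
    (hB₀ : ∀ a, SupportedOn (arrowRel Q v (fun p q => c p ≤ c q) a) (B₀ a))
    (h : ∀ Y : Fin Q.numArrows → Matrix I I K, (∀ a, SupportedOn (arrowRel Q v ⊤ a) (Y a)) →
      ∃ (m : Matrix I I K) (B₁ : Fin Q.numArrows → Matrix I I K),
        SupportedOn (homRel v fun p q => c q < c p) m ∧
        (∀ a, SupportedOn (arrowRel Q v (fun p q => c p ≤ c q) a) (B₁ a)) ∧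
        ∀ a, B₀ a * m + Y a = B₁ a + m * B₀ a) :
    GenericallyFlagged K v c := by
  refine algebraicIndependent_of_dualNumber _ (arrowEntries v ⊤ B₀) fun y => ?_
  obtain ⟨m, B₁, hm, hB₁, hcomm⟩ := h (ofArrowEntries y) fun a => supportedOn_ofEntries _
  have hflag : IsFlagged (R := DualNumber K) v c
      (fun a => (B₀ a).map TrivSqZeroExt.inl + (ofArrowEntries y a).map TrivSqZeroExt.inr)
      (m.map TrivSqZeroExt.inr)
      (fun a => (B₀ a).map TrivSqZeroExt.inl + (B₁ a).map TrivSqZeroExt.inr) :=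
    { lower := hm.map (TrivSqZeroExt.inr_zero K)
      upper := fun a =>
        ((hB₀ a).map (TrivSqZeroExt.inl_zero K)).add ((hB₁ a).map (TrivSqZeroExt.inr_zero K))
      comm := fun a => by
        have hone : (1 : Matrix I I (DualNumber K)) = (1 : Matrix I I K).map TrivSqZeroExt.inl :=
          (Matrix.map_one _ (TrivSqZeroExt.inl_zero K) (TrivSqZeroExt.inl_one K)).symm
        rw [hone, dualNumber_matrix_mul, dualNumber_matrix_mul, mul_one, mul_one, one_mul,
          one_mul, hcomm a] }
  refine ⟨_, fun t => (aeval_flagPolynomial _ t).trans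
    ((congrArg (fun X => arrowEntries v ⊤ X t) hflag.flagPoint_eq).trans ?_)⟩
  have hy : ofArrowEntries y t.1 t.2.1.1 t.2.1.2 = y t := ofEntries_apply _ t.2.2
  rw [← hy]
  rfl

end DualNumbers

section Subrepresentations

variable {Q : QuiverData} {I J α R S K F : Type*} [Fintype I] [Fintype J]
  [DecidableEq J] [LinearOrder α] [Field K] [Field F] [Algebra K F]
  {v : I → Fin Q.n} {v' : J → Fin Q.n} {c : I → α}

/-- The representation `X` has a subrepresentation spanned by the columns of a matrix with a left
inverse whose columns have degrees `v'`. -/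
def HasSubrep [CommRing R] (v : I → Fin Q.n) (v' : J → Fin Q.n)
    (X : Fin Q.numArrows → Matrix I I R) : Prop :=
  ∃ z : Matrix I J R, Graded v v' z ∧ (∃ b : Matrix J I R, b * z = 1) ∧
    ∀ a, ∃ y : Matrix J J R, X a * z = z * y

theorem IsFlagged.hasSubrep [DecidableEq I] [CommRing R] {X B : Fin Q.numArrows → Matrix I I R}
    {m : Matrix I I R} (h : IsFlagged v c X m B) (k : α) :
    HasSubrep v (fun q : {q // c q ≤ k} => v q) X := by
  refine ⟨(1 + m).submatrix id Subtype.val, h.graded.submatrix id Subtype.val,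
    ⟨(1 + m)⁻¹.submatrix Subtype.val id, ?_⟩,
    fun a => ⟨(B a).submatrix Subtype.val Subtype.val, ?_⟩⟩
  · rw [← Matrix.submatrix_mul _ _ _ _ _ Function.bijective_id,
      Matrix.nonsing_inv_mul _ h.isUnit_det]
    exact Matrix.submatrix_one _ Subtype.val_injective
  · ext p q
    have hcomm : (X a * (1 + m)) p q = ((1 + m) * B a) p q := by rw [h.comm a]
    refine hcomm.trans (Fintype.sum_of_injective Subtype.val Subtype.val_injective _ _
      (fun r hr => ?_) fun _ => rfl).symm
    exact mul_eq_zero_of_right _ (h.upper a r q fun hrq => hr ⟨⟨r, hrq.2.trans q.2⟩, rfl⟩)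

/-- The columns of `z` are a basis of a subrepresentation of `X`, normalised to have the identity
block in the rows `e`. -/
structure IsNormalizedSubrep [CommRing R] (v : I → Fin Q.n) (v' : J → Fin Q.n)
    (X : Fin Q.numArrows → Matrix I I R) (e : J → I) (z : Matrix I J R) : Prop where
  degree : ∀ q, v (e q) = v' q
  graded : Graded v v' z
  submatrix : z.submatrix e id = 1
  comm : ∀ a, X a * z = z * (X a * z).submatrix e id

namespace IsNormalizedSubrep

variable [CommRing R] [CommRing S] {X : Fin Q.numArrows → Matrix I I R} {e : J → I}
  {z : Matrix I J R}

theorem map (h : IsNormalizedSubrep v v' X e z) (f : R →+* S) :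
    IsNormalizedSubrep v v' (fun a => (X a).map f) e (z.map f) where
  degree := h.degree
  graded := h.graded.map f.map_zero
  submatrix := by
    rw [Matrix.submatrix_map, h.submatrix, Matrix.map_one _ f.map_zero f.map_one]
  comm a := by
    rw [← Matrix.map_mul, Matrix.submatrix_map, ← Matrix.map_mul, ← h.comm a]

theorem of_map {f : R →+* S} (hf : Function.Injective f)
    (h : IsNormalizedSubrep v v' (fun a => (X a).map f) e (z.map f)) :
    IsNormalizedSubrep v v' X e z where
  degree := h.degree
  graded p q hpq := hf ((h.graded p q hpq).trans f.map_zero.symm)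
  submatrix := Matrix.map_injective hf <| by
    beta_reduce
    rw [← Matrix.submatrix_map, h.submatrix, Matrix.map_one _ f.map_zero f.map_one]
  comm a := Matrix.map_injective hf <| by
    beta_reduce
    rw [Matrix.map_mul, Matrix.map_mul, ← Matrix.submatrix_map, Matrix.map_mul, ← h.comm a]

theorem hasSubrep (h : IsNormalizedSubrep v v' X e z) : HasSubrep v v' X := by
  classical
  refine ⟨z, h.graded, ⟨(1 : Matrix I I R).submatrix e id, ?_⟩, fun a => ⟨_, h.comm a⟩⟩
  rw [← h.submatrix]
  exact (Matrix.submatrix_mul _ _ _ id id Function.bijective_id).symm.trans (by rw [Matrix.one_mul])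

end IsNormalizedSubrep

theorem HasSubrep.exists_isNormalizedSubrep {X : Fin Q.numArrows → Matrix I I F}
    (h : HasSubrep v v' X) (O : ValuationSubring F) :
    ∃ e z, IsNormalizedSubrep v v' X e z ∧ ∀ p q, z p q ∈ O := by
  obtain ⟨z, hz, ⟨b, hb⟩, hy⟩ := h
  obtain ⟨e, E, he, hE, hdet, hone, hO⟩ := exists_normalized_columns O hz hb
  refine ⟨e, z * E, ⟨he, hz.mul hE fun _ _ _ => Eq.trans, hone, fun a => ?_⟩, hO⟩
  obtain ⟨y, hy⟩ := hy a
  have hXz : X a * (z * E) = z * E * (E⁻¹ * y * E) := by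
    rw [← Matrix.mul_assoc, hy]
    simp only [Matrix.mul_assoc, Matrix.mul_nonsing_inv_cancel_left _ _ hdet]
  have hblock : (X a * (z * E)).submatrix e id = E⁻¹ * y * E := by
    rw [hXz, Matrix.submatrix_mul _ _ _ id _ Function.bijective_id, hone, Matrix.submatrix_id_id,
      one_mul]
  rw [hblock, hXz]

/-- The generic representation has a subrepresentation; normalised with respect to a valuation
ring above the point `x`, its basis specialises to `x`. -/
theorem GenericallyFlagged.hasSubrep [DecidableEq I] [IsAlgClosed K]
    (h : GenericallyFlagged K v c) (k : α) {x : Fin Q.numArrows → Matrix I I K}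
    (hx : ∀ a, SupportedOn (arrowRel Q v ⊤ a) (x a)) :
    HasSubrep v (fun q : {q // c q ≤ k} => v q) x := by
  have hflag := isFlagged_flagPoint (genericParam K v c)
  have hX := h.algebraicIndependent algebraicIndependent_genericParam
  set X := flagPoint (genericParam K v c)
  obtain ⟨O, hO⟩ := exists_valuationSubring_specialization hX (arrowEntries v ⊤ x)
  obtain ⟨e, z, hz, hzO⟩ := (hflag.hasSubrep k).exists_isNormalizedSubrep O
  obtain ⟨R, φ, hzR, hφ⟩ := hO (Set.range fun t : I × {q // c q ≤ k} => z t.1 t.2)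
    (Set.finite_range _) (Set.forall_mem_range.mpr fun t => hzO t.1 t.2)
  let zR : Matrix I {q // c q ≤ k} R := Matrix.of fun p q => ⟨z p q, hzR ⟨(p, q), rfl⟩⟩
  let XR : Fin Q.numArrows → Matrix I I R :=
    ofArrowEntries fun t => ⟨arrowEntries v ⊤ X t, (hφ t).fst⟩
  have hXR (a) : (XR a).map (R.val : R →+* FlagField K v c) = X a :=
    (map_ofEntries _ (map_zero _)).trans (ofEntries_eq_self (hflag.supportedOn a))
  have hxR (a) : (XR a).map (φ : R →+* K) = x a := by
    refine (map_ofEntries _ (map_zero _)).trans (Eq.trans ?_ (ofEntries_eq_self (hx a)))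
    exact congrArg ofEntries (funext fun t => (hφ ⟨a, t⟩).snd)
  have hzR : IsNormalizedSubrep v (fun q : {q // c q ≤ k} => v q) XR e zR :=
    .of_map (f := (R.val : R →+* FlagField K v c)) Subtype.val_injective <| by
      rw [funext hXR]
      exact hz
  simpa only [hxR] using (hzR.map (φ : R →+* K)).hasSubrep

end Subrepresentations

section LinearAlgebra

variable {I J V F : Type*} [Field F]

theorem exists_mul_eq_one_of_linearIndependent_col [Fintype I] [Finite J] [DecidableEq J]
    {z : Matrix I J F} (hz : LinearIndependent F z.col) : ∃ b : Matrix J I F, b * z = 1 := by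
  classical
  have := Fintype.ofFinite J
  obtain ⟨g, hg⟩ := (Matrix.toLin' z).exists_leftInverse_of_injective
    (LinearMap.ker_eq_bot.mpr (Matrix.mulVec_injective_iff.mpr hz))
  refine ⟨LinearMap.toMatrix' g, ?_⟩
  rw [← LinearMap.toMatrix'_toLin' z, ← LinearMap.toMatrix'_comp, hg, LinearMap.toMatrix'_id]

theorem exists_kernel_basis_submatrix_eq_one [Fintype I] (D : Matrix J I F) :
    ∃ (k : ℕ) (z : Matrix I (Fin k) F) (e : Fin k → I),
      k + D.rank = Fintype.card I ∧ D * z = 0 ∧ z.submatrix e id = 1 := by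
  let b := Module.finBasis F (LinearMap.ker D.mulVecLin)
  let z : Matrix I (Fin _) F := Matrix.of fun p k => (b k : I → F) p
  have hz : D * z = 0 := Matrix.ext fun q k => congrFun (LinearMap.mem_ker.mp (b k).2) q
  have hcol : LinearIndependent F z.col :=
    b.linearIndependent.map' (Submodule.subtype _) (Submodule.ker_subtype _)
  obtain ⟨b', hb'⟩ := exists_mul_eq_one_of_linearIndependent_col hcol
  obtain ⟨e, E, -, -, -, he, -⟩ := exists_normalized_columns (v := fun _ => ()) (v' := fun _ => ())
    (⊤ : ValuationSubring F) (fun _ _ h => absurd rfl h) hb'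
  refine ⟨_, z * E, e, ?_, ?_, he⟩
  · rw [add_comm, Matrix.rank, LinearMap.finrank_range_add_finrank_ker,
      Module.finrank_fintype_fun_eq_card]
  · rw [← Matrix.mul_assoc, hz, Matrix.zero_mul]

theorem Graded.exists_eq_mul_inv_submatrix_mul [Finite I] [Finite J] {v : I → V} {v' : J → V}
    {f : Matrix I J F} (hf : Graded v v' f) : ∃ (k : ℕ) (s : Fin k → J) (e : Fin k → I),
      (∀ i, v (e i) = v' (s i)) ∧ IsUnit (f.submatrix e s).det ∧
      f.submatrix id s * (f.submatrix e s)⁻¹ * f.submatrix e id = f := by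
  have := Fintype.ofFinite I
  obtain ⟨κ, s', hs', hspan, hind⟩ := exists_linearIndependent' F f.col
  have := Finite.of_injective s' hs'
  let ε := (Finite.equivFin κ).symm
  let s := s' ∘ ε
  let z := f.submatrix id s
  obtain ⟨b, hb⟩ := exists_mul_eq_one_of_linearIndependent_col (z := z) (hind.comp ε ε.injective)
  obtain ⟨e, E, he, -, -, hone, -⟩ := exists_normalized_columns (⊤ : ValuationSubring F)
    (v := v) (v' := v' ∘ s) (z := z) (fun p q => hf p (s q)) hb
  have hE : f.submatrix e s * E = 1 := by
    rw [← hone, Matrix.submatrix_mul _ _ _ id _ Function.bijective_id]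
    rfl
  have hcols (q : J) : ∃ y : Fin _ → F, ∑ i, y i • f.col (s i) = f.col q := by
    refine (Submodule.mem_span_range_iff_exists_fun F).mp ?_
    have hrange : Set.range (fun i => f.col (s i)) = Set.range (f.col ∘ s') :=
      ε.surjective.range_comp (f.col ∘ s')
    rw [hrange, hspan]
    exact Submodule.subset_span ⟨q, rfl⟩
  choose y hy using hcols
  let Y : Matrix (Fin _) J F := Matrix.of fun i q => y q i
  have hf : z * Y = f := by
    ext p q
    rw [Matrix.mul_apply]
    refine Eq.trans ?_ (congrFun (hy q) p)
    rw [Finset.sum_apply]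
    exact Finset.sum_congr rfl fun i _ => mul_comm _ _
  have hfe : f.submatrix e id = f.submatrix e s * Y := by
    conv_lhs => rw [← hf]
    rfl
  refine ⟨_, s, e, he, Matrix.isUnit_det_of_right_inverse hE, ?_⟩
  rw [hfe, Matrix.mul_assoc,
    Matrix.nonsing_inv_mul_cancel_left _ _ (Matrix.isUnit_det_of_right_inverse hE)]
  exact hf

theorem injective_of_isUnit_det_submatrix {κ : Type*} [Fintype κ] [DecidableEq κ]
    {f : Matrix I J F} {e : κ → I} {s : κ → J} (h : IsUnit (f.submatrix e s).det) :
    Function.Injective e ∧ Function.Injective s := by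
  constructor
  · refine fun i j hij => by_contra fun hne => h.ne_zero (Matrix.det_zero_of_row_eq hne ?_)
    exact funext fun k => congrArg (f · (s k)) hij
  · refine fun i j hij => by_contra fun hne => h.ne_zero (Matrix.det_zero_of_column_eq hne ?_)
    exact fun k => congrArg (f (e k)) hij

end LinearAlgebra

section Classes

/-- Merges the classes of a four-step flag in consecutive pairs. -/
abbrev coarseClass : Fin 4 → Fin 2 := ![0, 0, 1, 1]

variable {Q : QuiverData} {I κ α : Type*}

theorem exists_classes_of_disjoint_range {c : I → Fin 2} {s e : κ → I} (hs : ∀ i, c (s i) = 0)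
    (he : ∀ i, c (e i) = 1) : ∃ c' : I → Fin 4, coarseClass ∘ c' = c ∧
      (∀ p, c' p = 1 ↔ p ∈ Set.range s) ∧ ∀ p, c' p = 2 ↔ p ∈ Set.range e := by
  classical
  have hse (p : I) (hp : p ∈ Set.range s) : p ∉ Set.range e := by
    rintro ⟨j, rfl⟩
    obtain ⟨i, hi⟩ := hp
    exact absurd ((hs i).symm.trans (hi ▸ he j)) (by decide)
  refine ⟨fun p => if p ∈ Set.range s then 1 else if p ∈ Set.range e then 2 else
    ![0, 3] (c p), funext fun p => ?_, fun p => ?_, fun p => ?_⟩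
  · simp only [Function.comp_apply]
    split_ifs with h₁ h₂
    · obtain ⟨i, rfl⟩ := h₁
      exact (hs i).symm
    · obtain ⟨i, rfl⟩ := h₂
      exact (he i).symm
    · generalize c p = k
      decide +revert
  · by_cases h₁ : p ∈ Set.range s
    · simp only [h₁, if_true]
    · simp only [h₁, if_false, iff_false]
      split_ifs
      · decide
      · generalize c p = k
        decide +revert
  · by_cases h₁ : p ∈ Set.range s
    · simp only [h₁, if_true, hse p h₁, iff_false]
      decide
    · simp only [h₁, if_false]
      split_ifs with h₂
      · exact iff_of_true rfl h₂
      · refine iff_of_false ?_ h₂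
        generalize c p = k
        decide +revert

theorem classDim_eq_of_range_eq {v : I → Fin Q.n} {c : I → α} {s : κ → I}
    (hs : Function.Injective s) {i : α} (hc : ∀ p, c p = i ↔ p ∈ Set.range s) (u : Fin Q.n) :
    classDim v c i u = Nat.card {k // v (s k) = u} := by
  refine (Nat.card_congr (Equiv.ofBijective
    (fun k => ⟨s k, k.2, (hc _).mpr ⟨k, rfl⟩⟩) ⟨fun k l h => ?_, ?_⟩)).symm
  · exact Subtype.ext (hs (congrArg Subtype.val h))
  · rintro ⟨_, hu, hp⟩
    obtain ⟨k, rfl⟩ := (hc _).mp hp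
    exact ⟨⟨k, hu⟩, rfl⟩

end Classes

section PartialInverse

variable {I V α : Type*} [DecidableEq I] [DecidableEq α]

/-- The projection onto the span of the basis vectors of class `i`. -/
def classProj {R : Type*} [Zero R] [One R] (c : I → α) (i : α) : Matrix I I R :=
  Matrix.diagonal fun p => if c p = i then 1 else 0

variable {R : Type*} [NonAssocSemiring R] {c : I → α} {i : α}

theorem classProj_apply (p q : I) :
    (classProj c i : Matrix I I R) p q = if c p = i then (1 : Matrix I I R) p q else 0 := by
  rw [classProj, Matrix.diagonal_apply, Matrix.one_apply]
  split_ifs <;> rfl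

theorem supportedOn_classProj :
    SupportedOn (fun p q => p = q ∧ c p = i) (classProj c i : Matrix I I R) := fun p q h => by
  rw [classProj_apply, Matrix.one_apply]
  split_ifs with hp hpq
  · exact absurd ⟨hpq, hp⟩ h
  all_goals rfl

theorem classProj_mul_eq_self [Fintype I] {m : Matrix I I R}
    (hm : SupportedOn (fun p _ => c p = i) m) : classProj c i * m = m := by
  ext p q
  rw [classProj, Matrix.diagonal_mul]
  split_ifs with hp
  · exact one_mul _
  · rw [zero_mul, hm p q hp]

theorem mul_classProj_eq_self [Fintype I] {m : Matrix I I R}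
    (hm : SupportedOn (fun _ q => c q = i) m) : m * classProj c i = m := by
  ext p q
  rw [classProj, Matrix.mul_diagonal]
  split_ifs with hq
  · exact mul_one _
  · rw [mul_zero, hm p q hq]

/-- The classes `{0, 1}` and `{2, 3}` span the source and the target of `f`; class `1` is
complementary to its kernel, class `3` to its image, and `g` inverts the block of `f` from class
`1` to class `2`. -/
structure IsPartialInverse [Fintype I] {R : Type*} [CommRing R] (v : I → V) (c : I → Fin 4)
    (f g : Matrix I I R) : Prop where
  supp_left : SupportedOn (homRel v fun p q => 2 ≤ c p ∧ c q ≤ 1) f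
  supp_right : SupportedOn (homRel v fun p q => c p = 1 ∧ c q = 2) g
  mul_mul : f * g * f = f
  kernel : SupportedOn (homRel v fun p q => c p = 1 ∧ c q = 0) (g * f - classProj c 1)
  image : SupportedOn (homRel v fun p q => c p = 3 ∧ c q = 2) (f * g - classProj c 2)

end PartialInverse

section PartialInverse

variable {Q : QuiverData} {I V κ F : Type*} [Field F]

theorem classes_of_isUnit_det_submatrix [Fintype κ] [DecidableEq κ] {c : I → Fin 2}
    {f : Matrix I I F} (hf : SupportedOn (fun p q => c q < c p) f) {e s : κ → I}
    (h : IsUnit (f.submatrix e s).det) : (∀ i, c (s i) = 0) ∧ ∀ i, c (e i) = 1 := by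
  have hlt {k l : Fin 2} (hkl : k < l) : k = 0 ∧ l = 1 := by decide +revert
  refine ⟨fun j => by_contra fun hj => h.ne_zero ?_, fun i => by_contra fun hi => h.ne_zero ?_⟩
  · exact Matrix.det_eq_zero_of_column_eq_zero j fun i => hf _ _ fun hij => hj (hlt hij).1
  · exact Matrix.det_eq_zero_of_row_eq_zero i fun j => hf _ _ fun hij => hi (hlt hij).2

variable [DecidableEq I]

theorem supportedOn_sub_classProj {α R : Type*} [DecidableEq α] [DecidableEq κ]
    [NonAssocRing R] {v : I → V} {s : I → I → Prop} {m : Matrix I I R}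
    (hm : SupportedOn (homRel v s) m) {c : I → α} {i : α} {e : κ → I} (he : Function.Injective e)
    (hc : ∀ p, c p = i ↔ p ∈ Set.range e) (hone : m.submatrix e e = 1) :
    SupportedOn (homRel v fun p q => s p q ∧ ¬ (c p = i ∧ c q = i)) (m - classProj c i) := by
  intro p q hpq
  rw [Matrix.sub_apply]
  by_cases h : c p = i ∧ c q = i
  · obtain ⟨k, rfl⟩ := (hc p).mp h.1
    obtain ⟨l, rfl⟩ := (hc q).mp h.2
    have hkl : m (e k) (e l) = (1 : Matrix κ κ R) k l := congrFun (congrFun hone k) l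
    rw [classProj_apply, if_pos h.1, hkl, Matrix.one_apply, Matrix.one_apply]
    simp only [he.eq_iff, sub_self]
  · rw [hm p q fun hs => hpq ⟨hs.1, hs.2, h⟩, supportedOn_classProj p q, sub_self]
    rintro ⟨rfl, hp⟩
    exact h ⟨hp, hp⟩

variable [Fintype κ] [DecidableEq κ]

/-- The inverse of the block of `f` at the rows `e` and the columns `s`, as a map from the span of
the basis vectors `e` to that of the basis vectors `s`. -/
noncomputable def blockInverse (f : Matrix I I F) (e s : κ → I) : Matrix I I F :=
  (1 : Matrix I I F).submatrix id s * (f.submatrix e s)⁻¹ * (1 : Matrix I I F).submatrix e id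

theorem supportedOn_blockInverse {v : I → V} {f : Matrix I I F} (hf : Graded v v f) {e s : κ → I}
    (hv : ∀ i, v (e i) = v (s i)) :
    SupportedOn (homRel v fun p q => p ∈ Set.range s ∧ q ∈ Set.range e) (blockInverse f e s) := by
  have hs : SupportedOn (fun p i => p = s i) ((1 : Matrix I I F).submatrix id s) :=
    fun p i => Matrix.one_apply_ne
  have he : SupportedOn (fun i q => e i = q) ((1 : Matrix I I F).submatrix e id) :=
    fun i q => Matrix.one_apply_ne
  have hinv : Graded (v ∘ s) (v ∘ s) (f.submatrix e s)⁻¹ :=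
    Graded.inv ((hf.submatrix e s).mono fun i j hij => (hv i).symm.trans hij)
  refine (hs.mul hinv (t := fun p j => v p = v (s j) ∧ p ∈ Set.range s) ?_).mul he ?_
  · rintro _ i j rfl hij
    exact ⟨hij, i, rfl⟩
  · rintro p i _ hpi rfl
    exact ⟨hpi.1.trans (hv i).symm, hpi.2, i, rfl⟩

theorem blockInverse_submatrix (f : Matrix I I F) {e s : κ → I} (he : Function.Injective e)
    (hs : Function.Injective s) : (blockInverse f e s).submatrix s e = (f.submatrix e s)⁻¹ := by
  have h : (blockInverse f e s).submatrix s e = (1 : Matrix I I F).submatrix s s *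
      (f.submatrix e s)⁻¹ * (1 : Matrix I I F).submatrix e e := rfl
  rw [h, Matrix.submatrix_one s hs, Matrix.submatrix_one e he, one_mul, mul_one]

variable [Fintype I]

theorem mul_blockInverse (f : Matrix I I F) (e s : κ → I) : f * blockInverse f e s =
    f.submatrix id s * (f.submatrix e s)⁻¹ * (1 : Matrix I I F).submatrix e id := by
  have hs : f * (1 : Matrix I I F).submatrix id s = f.submatrix id s :=
    (Matrix.submatrix_mul f 1 id id s Function.bijective_id).symm.trans (by rw [mul_one])
  rw [blockInverse, ← Matrix.mul_assoc, ← Matrix.mul_assoc, hs]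

theorem blockInverse_mul (f : Matrix I I F) (e s : κ → I) : blockInverse f e s * f =
    (1 : Matrix I I F).submatrix id s * (f.submatrix e s)⁻¹ * f.submatrix e id := by
  have he : (1 : Matrix I I F).submatrix e id * f = f.submatrix e id :=
    (Matrix.submatrix_mul 1 f e id id Function.bijective_id).symm.trans (by rw [one_mul])
  rw [blockInverse, Matrix.mul_assoc, he]

theorem isPartialInverse_blockInverse {v : I → V} {c : I → Fin 4} {f : Matrix I I F}
    (hf : SupportedOn (homRel v fun p q => 2 ≤ c p ∧ c q ≤ 1) f) {e s : κ → I}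
    (hv : ∀ i, v (e i) = v (s i)) (hc₁ : ∀ p, c p = 1 ↔ p ∈ Set.range s)
    (hc₂ : ∀ p, c p = 2 ↔ p ∈ Set.range e) (hdet : IsUnit (f.submatrix e s).det)
    (hmul : f.submatrix id s * (f.submatrix e s)⁻¹ * f.submatrix e id = f) :
    IsPartialInverse v c f (blockInverse f e s) := by
  obtain ⟨he, hs⟩ := injective_of_isUnit_det_submatrix hdet
  have hg := supportedOn_blockInverse hf.graded_of_homRel hv
  simp only [← hc₁, ← hc₂] at hg
  have hgf := hg.mul hf (t := homRel v fun p q => c p = 1 ∧ c q ≤ 1) fun _ _ _ hpq hqk =>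
    ⟨hpq.1.trans hqk.1, hpq.2.1, hqk.2.2⟩
  have hfg := hf.mul hg (t := homRel v fun p q => 2 ≤ c p ∧ c q = 2) fun _ _ _ hpq hqk =>
    ⟨hpq.1.trans hqk.1, hpq.2.1, hqk.2.2⟩
  have hgf_one : (blockInverse f e s * f).submatrix s s = 1 := by
    have h : (blockInverse f e s * f).submatrix s s =
        (1 : Matrix I I F).submatrix s s * (f.submatrix e s)⁻¹ * f.submatrix e s := by
      rw [blockInverse_mul]
      rfl
    rw [h, Matrix.submatrix_one s hs, one_mul, Matrix.nonsing_inv_mul _ hdet]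
  have hfg_one : (f * blockInverse f e s).submatrix e e = 1 := by
    have h : (f * blockInverse f e s).submatrix e e =
        f.submatrix e s * (f.submatrix e s)⁻¹ * (1 : Matrix I I F).submatrix e e := by
      rw [mul_blockInverse]
      rfl
    rw [h, Matrix.submatrix_one e he, mul_one, Matrix.mul_nonsing_inv _ hdet]
  refine ⟨hf, hg, ?_, ?_, ?_⟩
  · have hrows : (1 : Matrix I I F).submatrix e id * f = f.submatrix e id :=
      (Matrix.submatrix_mul 1 f e id id Function.bijective_id).symm.trans (by rw [one_mul])
    rw [mul_blockInverse, Matrix.mul_assoc, hrows, hmul]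
  · have hrel {k l : Fin 4} (h : (k = 1 ∧ l ≤ 1) ∧ ¬ (k = 1 ∧ l = 1)) : k = 1 ∧ l = 0 := by
      decide +revert
    exact (supportedOn_sub_classProj hgf hs hc₁ hgf_one).mono fun _ _ h => ⟨h.1, hrel h.2⟩
  · have hrel {k l : Fin 4} (h : (2 ≤ k ∧ l = 2) ∧ ¬ (k = 2 ∧ l = 2)) : k = 3 ∧ l = 2 := by
      decide +revert
    exact (supportedOn_sub_classProj hfg he hc₂ hfg_one).mono fun _ _ h => ⟨h.1, hrel h.2⟩

theorem exists_isPartialInverse {v : I → Fin Q.n} {c : I → Fin 2} {f : Matrix I I F}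
    (hf : SupportedOn (homRel v fun p q => c q < c p) f) :
    ∃ (c' : I → Fin 4) (g : Matrix I I F), coarseClass ∘ c' = c ∧ IsPartialInverse v c' f g ∧
      classDim v c' 1 = classDim v c' 2 ∧
      ∀ L : Subfield F, (∀ p q, c' p = 2 → c' q = 1 → f p q ∈ L) → g ∈ L.toSubring.matrix := by
  obtain ⟨k, s, e, hv, hdet, hmul⟩ := hf.graded_of_homRel.exists_eq_mul_inv_submatrix_mul
  obtain ⟨he, hs⟩ := injective_of_isUnit_det_submatrix hdet
  obtain ⟨hs₀, he₁⟩ := classes_of_isUnit_det_submatrix (hf.mono fun _ _ => And.right) hdet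
  obtain ⟨c', rfl, hc₁, hc₂⟩ := exists_classes_of_disjoint_range hs₀ he₁
  have hrel {k l : Fin 4} (h : coarseClass k < coarseClass l) : 2 ≤ l ∧ k ≤ 1 := by
    decide +revert
  refine ⟨c', blockInverse f e s, rfl, isPartialInverse_blockInverse
    (hf.mono fun _ _ h => ⟨h.1, hrel h.2⟩) hv hc₁ hc₂ hdet hmul, funext fun u => ?_, fun L hL => ?_⟩
  · rw [classDim_eq_of_range_eq hs hc₁, classDim_eq_of_range_eq he hc₂]
    simp only [hv]
  · have hinv : (f.submatrix e s)⁻¹ ∈ L.toSubring.matrix (n := Fin k) :=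
      inv_mem_matrix fun i j => hL _ _ ((hc₂ _).mpr ⟨i, rfl⟩) ((hc₁ _).mpr ⟨j, rfl⟩)
    refine (supportedOn_blockInverse hf.graded_of_homRel hv).mem_matrix ?_
    rintro ⟨⟨p, q⟩, -, ⟨i, hi : s i = p⟩, j, hj : e j = q⟩
    subst hi hj
    have hij : blockInverse f e s (s i) (e j) = (f.submatrix e s)⁻¹ i j :=
      congrFun (congrFun (blockInverse_submatrix f he hs) i) j
    exact hij ▸ hinv i j

end PartialInverse

section Shear

variable {Q : QuiverData} {I V R : Type*} [Fintype I] [DecidableEq I] [CommRing R] {v : I → V}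
  {c : I → Fin 4} {f g : Matrix I I R}

/-- The block of `f` from class `1` to class `2`. -/
def coreBlock (c : I → Fin 4) (f : Matrix I I R) : Matrix I I R :=
  classProj c 2 * f * classProj c 1

/-- `1 + shear c f g` carries the span of class `0` to the kernel of `f` and that of class `2` to
the image. -/
def shear (c : I → Fin 4) (f g : Matrix I I R) : Matrix I I R :=
  f * g - classProj c 2 - (g * f - classProj c 1)

namespace IsPartialInverse

theorem supportedOn_coreBlock (h : IsPartialInverse v c f g) :
    SupportedOn (homRel v fun p q => c p = 2 ∧ c q = 1) (coreBlock c f) := by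
  have h₂ : SupportedOn (homRel v fun p q => c p = 2 ∧ c q ≤ 1) (classProj c 2 * f) :=
    supportedOn_classProj.mul h.supp_left fun p q k hpq hqk =>
      ⟨(congrArg v hpq.1).trans hqk.1, hpq.2, hqk.2.2⟩
  exact h₂.mul supportedOn_classProj fun p q k hpq hqk =>
    ⟨hpq.1.trans (congrArg v hqk.1), hpq.2.1, hqk.1 ▸ hqk.2⟩

theorem supportedOn_shear (h : IsPartialInverse v c f g) :
    SupportedOn (homRel v fun p q => c p = 1 ∧ c q = 0 ∨ c p = 3 ∧ c q = 2) (shear c f g) :=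
  .sub (h.image.mono fun _ _ hpq => ⟨hpq.1, .inr hpq.2⟩)
    (h.kernel.mono fun _ _ hpq => ⟨hpq.1, .inl hpq.2⟩)

theorem supportedOn_shear_coarse (h : IsPartialInverse v c f g) :
    SupportedOn (homRel v fun p q => coarseClass (c p) = coarseClass (c q))
      (shear c f g) :=
  h.supportedOn_shear.mono fun p q hpq => ⟨hpq.1, by
    rcases hpq.2 with ⟨hp, hq⟩ | ⟨hp, hq⟩ <;> rw [hp, hq] <;> rfl⟩

theorem supportedOn_one_add_shear (h : IsPartialInverse v c f g) :
    SupportedOn (homRel v fun p q => coarseClass (c p) = coarseClass (c q))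
      (1 + shear c f g) :=
  .add (.one fun _ => ⟨rfl, rfl⟩) h.supportedOn_shear_coarse

theorem supportedOn_one_sub_shear (h : IsPartialInverse v c f g) :
    SupportedOn (homRel v fun p q => coarseClass (c p) = coarseClass (c q))
      (1 - shear c f g) :=
  .sub (.one fun _ => ⟨rfl, rfl⟩) h.supportedOn_shear_coarse

theorem shear_mul_shear (h : IsPartialInverse v c f g) : shear c f g * shear c f g = 0 :=
  h.supportedOn_shear.mul_eq_zero h.supportedOn_shear fun p q k hpq hqk => by
    rcases hpq.2 with hpq | hpq <;> rcases hqk.2 with hqk | hqk <;>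
      exact absurd (hpq.2.symm.trans hqk.1) (by decide)

theorem one_add_shear_mul (h : IsPartialInverse v c f g) :
    (1 + shear c f g) * (1 - shear c f g) = 1 := by
  rw [add_mul, one_mul, mul_sub, mul_one, h.shear_mul_shear]
  abel

theorem one_sub_shear_mul (h : IsPartialInverse v c f g) :
    (1 - shear c f g) * (1 + shear c f g) = 1 := by
  rw [sub_mul, one_mul, mul_add, mul_one, h.shear_mul_shear]
  abel

theorem mul_one_add_shear (h : IsPartialInverse v c f g) :
    f * (1 + shear c f g) = f * classProj c 1 := by
  have himage : f * (f * g - classProj c 2) = 0 :=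
    h.supp_left.mul_eq_zero h.image fun p q k hpq hqk =>
      absurd (hqk.2.1 ▸ hpq.2.2) (by decide)
  rw [shear, mul_add, mul_one, mul_sub, himage, mul_sub, ← mul_assoc, h.mul_mul]
  abel

theorem mul_classProj (h : IsPartialInverse v c f g) : g * classProj c 2 = g :=
  mul_classProj_eq_self (h.supp_right.mono fun _ _ hpq => hpq.2.2)

theorem classProj_mul (h : IsPartialInverse v c f g) : classProj c 1 * g = g :=
  classProj_mul_eq_self (h.supp_right.mono fun _ _ hpq => hpq.2.1)

theorem one_add_shear_mul_coreBlock (h : IsPartialInverse v c f g) :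
    (1 + shear c f g) * coreBlock c f = f * classProj c 1 := by
  have hkernel : (g * f - classProj c 1) * coreBlock c f = 0 :=
    h.kernel.mul_eq_zero h.supportedOn_coreBlock fun p q k hpq hqk =>
      absurd (hpq.2.2.symm.trans hqk.2.1) (by decide)
  have hproj : classProj c 2 * coreBlock c f = coreBlock c f :=
    classProj_mul_eq_self (h.supportedOn_coreBlock.mono fun _ _ hpq => hpq.2.1)
  have himage : f * g * coreBlock c f = f * classProj c 1 := by
    rw [coreBlock, ← mul_assoc, ← mul_assoc, mul_assoc f g, h.mul_classProj, h.mul_mul]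
  rw [shear, add_mul, one_mul, sub_mul, hkernel, sub_mul, himage, hproj]
  abel

theorem mul_coreBlock (h : IsPartialInverse v c f g) : g * coreBlock c f = classProj c 1 := by
  have hkernel : (g * f - classProj c 1) * classProj c 1 = 0 :=
    h.kernel.mul_eq_zero supportedOn_classProj fun p q k hpq hqk =>
      absurd (hpq.2.2.symm.trans hqk.2) (by decide)
  have hproj : (classProj c 1 * classProj c 1 : Matrix I I R) = classProj c 1 :=
    mul_classProj_eq_self (supportedOn_classProj.mono fun p q hpq => hpq.1 ▸ hpq.2)
  rwa [sub_mul, hproj, sub_eq_zero, ← h.mul_classProj, mul_assoc g, mul_assoc g] at hkernel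

theorem coreBlock_mul (h : IsPartialInverse v c f g) : coreBlock c f * g = classProj c 2 := by
  have himage : classProj c 2 * (f * g - classProj c 2) = 0 :=
    supportedOn_classProj.mul_eq_zero h.image fun p q k hpq hqk =>
      absurd (hqk.2.1.symm.trans (hpq.1 ▸ hpq.2)) (by decide)
  have hproj : (classProj c 2 * classProj c 2 : Matrix I I R) = classProj c 2 :=
    mul_classProj_eq_self (supportedOn_classProj.mono fun p q hpq => hpq.1 ▸ hpq.2)
  rw [mul_sub, hproj, sub_eq_zero] at himage
  rw [coreBlock, mul_assoc, h.classProj_mul, mul_assoc, himage]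

end IsPartialInverse
end Shear

section Refinement

variable {Q : QuiverData} {I R : Type*} [Fintype I] [DecidableEq I] [CommRing R]
  {v : I → Fin Q.n} {c : I → Fin 4} {f g : Matrix I I R}

/-- The arrow matrix `B` in the basis given by the columns of `1 + shear c f g`. -/
def shearConj (c : I → Fin 4) (f g B : Matrix I I R) : Matrix I I R :=
  (1 - shear c f g) * B * (1 + shear c f g)

theorem le_one_of_coarseClass_le {i : Fin 4} (h : coarseClass i ≤ coarseClass 1) : i ≤ 1 := by
  decide +revert

theorem two_le_of_coarseClass_le {i : Fin 4} (h : coarseClass 2 ≤ coarseClass i) : 2 ≤ i := by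
  decide +revert

theorem lt_of_coarseClass_lt {i j : Fin 4} (h : coarseClass i < coarseClass j) : i < j := by
  decide +revert

namespace IsPartialInverse

theorem coreBlock_mul_one_sub_shear (h : IsPartialInverse v c f g) :
    coreBlock c f * (1 - shear c f g) = (1 - shear c f g) * f := by
  calc coreBlock c f * (1 - shear c f g)
      = (1 - shear c f g) * ((1 + shear c f g) * coreBlock c f) * (1 - shear c f g) := by
        rw [← mul_assoc, h.one_sub_shear_mul, one_mul]
    _ = (1 - shear c f g) * f * ((1 + shear c f g) * (1 - shear c f g)) := by
        rw [h.one_add_shear_mul_coreBlock, ← h.mul_one_add_shear]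
        simp only [mul_assoc]
    _ = (1 - shear c f g) * f := by rw [h.one_add_shear_mul, mul_one]

theorem supportedOn_shearConj (h : IsPartialInverse v c f g) {a : Fin Q.numArrows}
    {B : Matrix I I R}
    (hB : SupportedOn (arrowRel Q v (fun p q => coarseClass (c p) ≤ coarseClass (c q)) a) B) :
    SupportedOn (arrowRel Q v (fun p q => coarseClass (c p) ≤ coarseClass (c q)) a)
      (shearConj c f g B) := by
  have h₁ : SupportedOn (arrowRel Q v (fun p q => coarseClass (c p) ≤ coarseClass (c q)) a)
      ((1 - shear c f g) * B) :=
    h.supportedOn_one_sub_shear.mul hB fun p q k hpq hqk =>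
      ⟨⟨hpq.1.trans hqk.1.1, hqk.1.2⟩, hpq.2.trans_le hqk.2⟩
  exact h₁.mul h.supportedOn_one_add_shear fun p q k hpq hqk =>
    ⟨⟨hpq.1.1, hqk.1.symm.trans hpq.1.2⟩, hpq.2.trans_eq hqk.2⟩

theorem shearConj_commutator (h : IsPartialInverse v c f g) (B : Matrix I I R) :
    shearConj c f g B * coreBlock c f - coreBlock c f * shearConj c f g B =
      shearConj c f g (B * f - f * B) := by
  have hadd : (1 + shear c f g) * coreBlock c f = f * (1 + shear c f g) :=
    h.one_add_shear_mul_coreBlock.trans h.mul_one_add_shear.symm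
  have hleft : shearConj c f g B * coreBlock c f = shearConj c f g (B * f) := by
    rw [shearConj, mul_assoc, hadd]
    simp only [shearConj, mul_assoc]
  have hright : coreBlock c f * shearConj c f g B = shearConj c f g (f * B) := by
    rw [shearConj, ← mul_assoc, ← mul_assoc, h.coreBlock_mul_one_sub_shear]
    simp only [shearConj, mul_assoc]
  rw [hleft, hright, shearConj, shearConj, shearConj, ← sub_mul, ← mul_sub]

section Commutator

variable {a : Fin Q.numArrows} {B : Matrix I I R}

theorem apply_eq_of_commutator (h : IsPartialInverse v c f g)
    (hD : SupportedOn (arrowRel Q v (fun p q => coarseClass (c p) ≤ coarseClass (c q)) a)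
      (B * coreBlock c f - coreBlock c f * B)) {p q : I} (hp : 2 ≤ c p) (hq : c q = 2) :
    B p q = (coreBlock c f * B * g) p q := by
  have hDg : ((B * coreBlock c f - coreBlock c f * B) * g) p q = 0 := by
    refine hD.mul h.supp_right (t := fun p _ => c p ≤ 1) (fun p q k hpq hqk => ?_) p q
      fun hp' => absurd (hp.trans hp') (by decide)
    exact le_one_of_coarseClass_le (hqk.2.1 ▸ hpq.2)
  rw [sub_mul, mul_assoc, h.coreBlock_mul, Matrix.sub_apply, sub_eq_zero] at hDg
  rw [← hDg, classProj, Matrix.mul_diagonal, if_pos hq, mul_one]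

theorem supportedOn_le_of_commutator (h : IsPartialInverse v c f g)
    (hB : SupportedOn (arrowRel Q v (fun p q => coarseClass (c p) ≤ coarseClass (c q)) a) B)
    (hD : SupportedOn (arrowRel Q v (fun p q => coarseClass (c p) ≤ coarseClass (c q)) a)
      (B * coreBlock c f - coreBlock c f * B)) :
    SupportedOn (arrowRel Q v (fun p q => c p ≤ c q) a) B := by
  intro p q hpq
  by_cases hc : arrowRel Q v (fun p q => coarseClass (c p) ≤ coarseClass (c q)) a p q
  swap
  · exact hB p q hc
  have hrel {i j : Fin 4} (h : coarseClass i ≤ coarseClass j) (hij : ¬ i ≤ j) :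
      i = 1 ∧ j = 0 ∨ i = 3 ∧ j = 2 := by
    decide +revert
  rcases hrel hc.2 fun hle => hpq ⟨hc.1, hle⟩ with ⟨hp, hq⟩ | ⟨hp, hq⟩
  · have hcol : SupportedOn (fun _ q => c q = 1) (g * B * coreBlock c f) :=
      SupportedOn.mul (r := fun _ _ => True) (fun _ _ h => absurd trivial h) h.supportedOn_coreBlock
        fun _ _ _ _ hqk => hqk.2.2
    have hD' : SupportedOn (fun _ q => 2 ≤ c q) (g * (B * coreBlock c f - coreBlock c f * B)) :=
      h.supp_right.mul hD fun p q k hpq hqk => two_le_of_coarseClass_le (hpq.2.2 ▸ hqk.2)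
    have hzero := hD' p q fun hq' => absurd (hq'.trans_eq hq) (by decide)
    rw [mul_sub, ← mul_assoc, ← mul_assoc, h.mul_coreBlock, Matrix.sub_apply,
      hcol p q fun hq' => absurd (hq.symm.trans hq') (by decide), zero_sub, neg_eq_zero] at hzero
    rwa [classProj, Matrix.diagonal_mul, if_pos hp, one_mul] at hzero
  · have hrow : SupportedOn (fun p _ => c p = 2) (coreBlock c f * (B * g)) :=
      h.supportedOn_coreBlock.mul (s := fun _ _ => True) (fun _ _ h => absurd trivial h)
        fun _ _ _ hpq _ => hpq.2.1
    rw [h.apply_eq_of_commutator hD (by rw [hp]; decide) hq, mul_assoc]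
    exact hrow p q fun hp' => absurd (hp.symm.trans hp') (by decide)

end Commutator

end IsPartialInverse

theorem IsPartialInverse.isFlagged {X B : Fin Q.numArrows → Matrix I I R} {m : Matrix I I R}
    (h : IsPartialInverse v c f g) (hX : IsFlagged v (coarseClass ∘ c) X m B)
    (hcomm : ∀ a, SupportedOn (arrowRel Q v (fun p q => coarseClass (c p) ≤ coarseClass (c q)) a)
      (B a * f - f * B a)) :
    IsFlagged v c X (m * (1 + shear c f g) + shear c f g) fun a => shearConj c f g (B a) where
  lower := by
    have hm := hX.lower.mul h.supportedOn_one_add_shear (t := homRel v fun p q => c q < c p)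
      fun p q k hpq hqk => ⟨hpq.1.trans hqk.1, lt_of_coarseClass_lt (hqk.2 ▸ hpq.2)⟩
    refine hm.add (h.supportedOn_shear.mono fun p q hpq => ⟨hpq.1, ?_⟩)
    rcases hpq.2 with ⟨hp, hq⟩ | ⟨hp, hq⟩ <;> rw [hp, hq] <;> decide
  upper a := h.supportedOn_le_of_commutator (h.supportedOn_shearConj (hX.upper a))
    (h.shearConj_commutator (B a) ▸ h.supportedOn_shearConj (hcomm a))
  comm a := by
    have hfactor : 1 + (m * (1 + shear c f g) + shear c f g) = (1 + m) * (1 + shear c f g) := by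
      rw [add_mul, one_mul]
      abel
    rw [hfactor, shearConj, ← mul_assoc, hX.comm a]
    calc (1 + m) * B a * (1 + shear c f g)
        = (1 + m) * ((1 + shear c f g) * (1 - shear c f g)) * B a * (1 + shear c f g) := by
          rw [h.one_add_shear_mul, mul_one]
      _ = (1 + m) * (1 + shear c f g) * ((1 - shear c f g) * B a * (1 + shear c f g)) := by
          simp only [mul_assoc]

end Refinement

section CoreCount

variable {Q : QuiverData} {I κ K F : Type*} [Fintype I] [DecidableEq I] [Field F]
  {v : I → Fin Q.n} {c : I → Fin 4} {f g : Matrix I I F} {L : Subfield F}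

theorem coreBlock_apply {p q : I} (hp : c p = 2) (hq : c q = 1) : coreBlock c f p q = f p q := by
  rw [coreBlock, classProj, classProj, Matrix.mul_diagonal, Matrix.diagonal_mul, if_pos hp,
    if_pos hq, one_mul, mul_one]

namespace IsPartialInverse

theorem mem_of_shear_add_coreBlock_mem (h : IsPartialInverse v c f g)
    (hL : shear c f g + coreBlock c f ∈ L.toSubring.matrix (n := I)) :
    shear c f g ∈ L.toSubring.matrix ∧ coreBlock c f ∈ L.toSubring.matrix := by
  have hcore : coreBlock c f ∈ L.toSubring.matrix :=
    h.supportedOn_coreBlock.mem_matrix fun ⟨(p, q), hpq⟩ => by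
      have hshear : shear c f g p q = 0 := h.supportedOn_shear p q fun hs => by
        rcases hs.2 with hs | hs
        · exact absurd (hs.1.symm.trans hpq.2.1) (by decide)
        · exact absurd (hs.1.symm.trans hpq.2.1) (by decide)
      have hsum := hL p q
      rwa [Matrix.add_apply, hshear, zero_add] at hsum
  exact ⟨(add_sub_cancel_right (shear c f g) (coreBlock c f)) ▸ sub_mem hL hcore, hcore⟩

theorem mem_of_commutator (h : IsPartialInverse v c f g) {a : Fin Q.numArrows}
    {B : Matrix I I F}
    (hB : SupportedOn (arrowRel Q v (fun p q => coarseClass (c p) ≤ coarseClass (c q)) a) B)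
    (hD : SupportedOn (arrowRel Q v (fun p q => coarseClass (c p) ≤ coarseClass (c q)) a)
      (B * coreBlock c f - coreBlock c f * B))
    (hcore : coreBlock c f ∈ L.toSubring.matrix (n := I)) (hg : g ∈ L.toSubring.matrix (n := I))
    (hL : ∀ t : Entry (arrowRel Q v (fun p q => c p ≤ c q ∧ ¬ (c p = 2 ∧ c q = 2)) a),
      B t.1.1 t.1.2 ∈ L) : B ∈ L.toSubring.matrix := by
  have hle := h.supportedOn_le_of_commutator hB hD
  have hblock : classProj c 1 * B * classProj c 1 ∈ L.toSubring.matrix (n := I) := fun p q => by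
    rw [classProj, Matrix.mul_diagonal, Matrix.diagonal_mul]
    split_ifs with hp hq hq
    · rw [one_mul, mul_one]
      by_cases hpq : arrowRel Q v (fun p q => c p ≤ c q) a p q
      · exact hL ⟨(p, q), hpq.1, hpq.2, fun h₂ => absurd (hp.symm.trans h₂.1) (by decide)⟩
      · exact hle p q hpq ▸ zero_mem L
    all_goals
      simp only [zero_mul, mul_zero]
      exact zero_mem L
  refine hle.mem_matrix fun ⟨(p, q), hpq⟩ => ?_
  by_cases h₂ : c p = 2 ∧ c q = 2
  · have hproj : coreBlock c f * classProj c 1 = coreBlock c f :=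
      mul_classProj_eq_self (h.supportedOn_coreBlock.mono fun _ _ hpq => hpq.2.2)
    have hcycle : coreBlock c f * B * g =
        coreBlock c f * (classProj c 1 * B * classProj c 1) * g := by
      conv_lhs => rw [← hproj, ← h.classProj_mul]
      simp only [mul_assoc]
    rw [h.apply_eq_of_commutator hD h₂.1.ge h₂.2, hcycle]
    exact mul_mem (mul_mem hcore hblock) hg p q
  · exact hL ⟨(p, q), hpq.1, hpq.2, h₂⟩

theorem eq_mul_coreBlock_mul (h : IsPartialInverse v c f g) :
    f = (1 + shear c f g) * coreBlock c f * (1 - shear c f g) := by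
  rw [mul_assoc, h.coreBlock_mul_one_sub_shear, ← mul_assoc, h.one_add_shear_mul, one_mul]

theorem eq_mul_shearConj_mul (h : IsPartialInverse v c f g) (B : Matrix I I F) :
    B = (1 + shear c f g) * shearConj c f g B * (1 - shear c f g) := by
  rw [shearConj, ← mul_assoc, ← mul_assoc, h.one_add_shear_mul, mul_assoc, h.one_add_shear_mul,
    one_mul, mul_one]

end IsPartialInverse

/-- Coordinates of a generating set for the field of definition of a map `f` between the two steps
of a flag and of a flagged representation whose commutator with `f` is flagged: the entries of
`shear c f g + coreBlock c f` and those of the sheared representation, except the block of class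
`(2, 2)`, which `f` identifies with that of class `(1, 1)`. -/
abbrev CoreParam (Q : QuiverData) (v : I → Fin Q.n) (c : I → Fin 4) : Type _ :=
  Entry (homRel v fun p q => (c q : ℕ) + 1 = c p) ⊕
    ArrowEntry Q v fun p q => c p ≤ c q ∧ ¬ (c p = 2 ∧ c q = 2)

/-- The generators of type `CoreParam Q v c`. -/
def coreParam (v : I → Fin Q.n) (c : I → Fin 4) (f g : Matrix I I F)
    (B : Fin Q.numArrows → Matrix I I F) : CoreParam Q v c → F :=
  Sum.elim (fun t => (shear c f g + coreBlock c f) t.1.1 t.1.2)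
    (arrowEntries v _ fun a => shearConj c f g (B a))

theorem IsPartialInverse.mem_of_coreParam_mem (h : IsPartialInverse v c f g)
    {B : Fin Q.numArrows → Matrix I I F}
    (hB : ∀ a,
      SupportedOn (arrowRel Q v (fun p q => coarseClass (c p) ≤ coarseClass (c q)) a) (B a))
    (hcomm : ∀ a, SupportedOn (arrowRel Q v (fun p q => coarseClass (c p) ≤ coarseClass (c q)) a)
      (B a * f - f * B a))
    (hg : (∀ p q, c p = 2 → c q = 1 → f p q ∈ L) → g ∈ L.toSubring.matrix)
    (hL : ∀ t, coreParam v c f g B t ∈ L) :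
    f ∈ L.toSubring.matrix ∧ ∀ a, B a ∈ L.toSubring.matrix := by
  have hsum : SupportedOn (homRel v fun p q => (c q : ℕ) + 1 = c p)
      (shear c f g + coreBlock c f) := by
    refine .add (h.supportedOn_shear.mono fun p q hpq => ⟨hpq.1, ?_⟩)
      (h.supportedOn_coreBlock.mono fun p q hpq => ⟨hpq.1, ?_⟩)
    · rcases hpq.2 with ⟨hp, hq⟩ | ⟨hp, hq⟩ <;> rw [hp, hq] <;> rfl
    · beta_reduce
      rw [hpq.2.1, hpq.2.2]
      rfl
  obtain ⟨hshear, hcore⟩ :=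
    h.mem_of_shear_add_coreBlock_mem (hsum.mem_matrix fun t => hL (.inl t))
  have hgL := hg fun p q hp hq => coreBlock_apply (f := f) hp hq ▸ hcore p q
  have hadd : 1 + shear c f g ∈ L.toSubring.matrix (n := I) := add_mem (one_mem _) hshear
  have hsub : 1 - shear c f g ∈ L.toSubring.matrix (n := I) := sub_mem (one_mem _) hshear
  refine ⟨h.eq_mul_coreBlock_mul ▸ mul_mem (mul_mem hadd hcore) hsub, fun a => ?_⟩
  rw [h.eq_mul_shearConj_mul (B a)]
  refine mul_mem (mul_mem hadd ?_) hsub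
  exact h.mem_of_commutator (h.supportedOn_shearConj (hB a))
    (h.shearConj_commutator (B a) ▸ h.supportedOn_shearConj (hcomm a)) hcore hgL
    fun t => hL (.inr ⟨a, t⟩)

variable [Field K] [Algebra K F] [Finite κ]

theorem IsPartialInverse.card_add_card_le (h : IsPartialInverse v c f g)
    {B : Fin Q.numArrows → Matrix I I F}
    (hB : ∀ a,
      SupportedOn (arrowRel Q v (fun p q => coarseClass (c p) ≤ coarseClass (c q)) a) (B a))
    (hcomm : ∀ a, SupportedOn (arrowRel Q v (fun p q => coarseClass (c p) ≤ coarseClass (c q)) a)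
      (B a * f - f * B a))
    (hg : ∀ L : Subfield F, (∀ p q, c p = 2 → c q = 1 → f p q ∈ L) → g ∈ L.toSubring.matrix)
    {t : κ → F} (ht : ∀ k, ∃ p q, f p q = t k)
    (hind : AlgebraicIndependent K
      (Sum.elim t (arrowEntries v (fun p q => coarseClass (c p) ≤ coarseClass (c q)) B))) :
    Nat.card κ + Nat.card (ArrowEntry Q v fun p q => coarseClass (c p) ≤ coarseClass (c q)) ≤
      Nat.card (CoreParam Q v c) := by
  let y := coreParam v c f g B
  obtain ⟨hf, hBL⟩ := h.mem_of_coreParam_mem hB hcomm (hg _)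
    fun t => subset_relAlgClosure K (Set.range y) ⟨t, rfl⟩
  have hrange : Set.range (Sum.elim t (arrowEntries v
      (fun p q => coarseClass (c p) ≤ coarseClass (c q)) B)) ⊆ relAlgClosure K (Set.range y) := by
    rintro _ ⟨k | k, rfl⟩
    · obtain ⟨p, q, hpq⟩ := ht k
      exact hpq.subst (motive := (· ∈ relAlgClosure K (Set.range y))) (hf p q)
    · exact hBL _ _ _
  have hle := (algRank_mono K hrange).trans (algRank_range_le K y)
  rw [algRank_range_of_algebraicIndependent K hind, Nat.card_sum] at hle
  exact_mod_cast hle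

end CoreCount

section Dimension

theorem classDim_comp {Q : QuiverData} {I α β : Type*} {v : I → Fin Q.n} {c : I → α}
    {g : α → β} {i : α} {j : β}
    (h : ∀ k, g k = j ↔ k = i) : classDim v (g ∘ c) j = classDim v c i :=
  funext fun u => by simp only [classDim, Function.comp_apply, h]

variable {Q : QuiverData} {I κ K F : Type*} [Fintype I] [DecidableEq I] [Field F] [Field K]
  [Algebra K F] [Finite κ] {v : I → Fin Q.n}

open QuiverData in
theorem IsFlagged.eulerExtPart_outer_le {c : I → Fin 4} {X B : Fin Q.numArrows → Matrix I I F}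
    {m : Matrix I I F} (hX : IsFlagged v c X m B)
    (hind : AlgebraicIndependent K (arrowEntries v ⊤ X)) :
    eulerExtPart Q (classDim v c 0) (classDim v c 3) ≤
      eulerHomPart Q (classDim v c 0) (classDim v c 3) := by
  let g : Fin 4 → Fin 3 := ![0, 1, 1, 2]
  have hg : Monotone g := by decide
  obtain ⟨n, B', hn, -⟩ := hX.coarsen hg
  have hle := (hn.genericallyFlagged hind).eulerExtPart_le
  rwa [classDim_comp (i := 0) (by decide), classDim_comp (i := 3) (by decide)] at hle

theorem card_add_card_le_of_commutator {c : I → Fin 2} {X B : Fin Q.numArrows → Matrix I I F}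
    {m f : Matrix I I F} (hX : IsFlagged v c X m B)
    (hXind : AlgebraicIndependent K (arrowEntries v ⊤ X))
    (hf : SupportedOn (homRel v fun p q => c q < c p) f)
    (hcomm : ∀ a, SupportedOn (arrowRel Q v (fun p q => c p ≤ c q) a) (B a * f - f * B a))
    {t : κ → F} (ht : ∀ k, ∃ p q, f p q = t k)
    (hind : AlgebraicIndependent K (Sum.elim t (arrowEntries v (fun p q => c p ≤ c q) B))) :
    Nat.card κ + Nat.card (ArrowEntry Q v fun p q => c q < c p) ≤
      Nat.card (Entry (homRel v fun p q => c q < c p)) := by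
  obtain ⟨c, g, rfl, h, hdim, hg⟩ := exists_isPartialInverse hf
  have hcore := h.card_add_card_le hX.upper hcomm hg ht hind
  have houter := (h.isFlagged hX hcomm).eulerExtPart_outer_le hXind
  rw [Nat.card_sum, card_entry_homRel v c fun i j => (j : ℕ) + 1 = i,
    card_arrowEntry v c fun i j => i ≤ j ∧ ¬ (i = 2 ∧ j = 2),
    card_arrowEntry v c fun i j => coarseClass i ≤ coarseClass j] at hcore
  have hA : Nat.card (ArrowEntry Q v fun p q => (coarseClass ∘ c) q < (coarseClass ∘ c) p) = _ :=
    card_arrowEntry v c fun i j => coarseClass j < coarseClass i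
  have hH : Nat.card (Entry (homRel v fun p q => (coarseClass ∘ c) q < (coarseClass ∘ c) p)) = _ :=
    card_entry_homRel v c fun i j => coarseClass j < coarseClass i
  simp +decide only [Fin.sum_univ_four, hdim, ↓reduceIte] at hcore hA hH houter
  omega

end Dimension

section FullRank

open scoped Matrix

variable {m n F : Type*} [Fintype m] [DecidableEq m] [Fintype n] [Field F] {D : Matrix m n F}

theorem exists_det_submatrix_ne_zero_of_rank_eq (hD : D.rank = Fintype.card m) :
    ∃ e : m → n, (D.submatrix id e).det ≠ 0 := by
  classical
  have hsurj : Function.Surjective D.mulVec := LinearMap.range_eq_top.mp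
    (Submodule.eq_top_of_finrank_eq (hD.trans (Module.finrank_fintype_fun_eq_card F).symm))
  obtain ⟨b, hb⟩ := Matrix.mulVec_surjective_iff_exists_right_inverse.mp hsurj
  obtain ⟨e, he⟩ := exists_det_submatrix_ne_zero (z := Dᵀ) (b := bᵀ) <| by
    rw [← Matrix.transpose_mul, hb, Matrix.transpose_one]
  exact ⟨e, by rwa [← Matrix.det_transpose, Matrix.transpose_submatrix]⟩

theorem mulVec_surjective_of_det_submatrix_ne_zero {e : m → n}
    (he : (D.submatrix id e).det ≠ 0) : Function.Surjective D.mulVec := by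
  classical
  refine Matrix.mulVec_surjective_iff_exists_right_inverse.mpr
    ⟨(1 : Matrix n n F).submatrix id e * (D.submatrix id e)⁻¹, ?_⟩
  have hsub : D * (1 : Matrix n n F).submatrix id e = D.submatrix id e := by
    rw [← Matrix.submatrix_id_id D, ← Matrix.submatrix_mul _ _ _ id _ Function.bijective_id,
      Matrix.mul_one]
    rfl
  rw [← Matrix.mul_assoc, hsub, Matrix.mul_nonsing_inv _ he.isUnit]

end FullRank

section Commutators

open scoped Matrix

variable {Q : QuiverData} {I R S K : Type*} [CommRing R] [CommRing S] {v : I → Fin Q.n}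
  {s : I → I → Prop}

open Classical in
/-- The matrix of the linear map sending `f` to the family of commutators `B a * f - f * B a`, in
the coordinates on `s`. -/
noncomputable def commutatorMatrix (v : I → Fin Q.n) (s : I → I → Prop)
    (B : Fin Q.numArrows → Matrix I I R) : Matrix (ArrowEntry Q v s) (Entry (homRel v s)) R :=
  Matrix.of fun t u => (if t.2.1.2 = u.1.2 then B t.1 t.2.1.1 u.1.1 else 0) -
    if t.2.1.1 = u.1.1 then B t.1 u.1.2 t.2.1.2 else 0

theorem commutatorMatrix_map (B : Fin Q.numArrows → Matrix I I R) (f : R →+* S) :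
    (commutatorMatrix v s B).map f = commutatorMatrix v s fun a => (B a).map f := by
  ext t u
  simp only [commutatorMatrix, Matrix.map_apply, Matrix.of_apply, map_sub, apply_ite f, map_zero]

theorem map_det_submatrix_commutatorMatrix [Fintype (ArrowEntry Q v s)]
    [DecidableEq (ArrowEntry Q v s)] {s' : I → I → Prop} (w : ArrowEntry Q v s' → R) (f : R →+* S)
    (e : ArrowEntry Q v s → Entry (homRel v s)) :
    f ((commutatorMatrix v s (ofArrowEntries w)).submatrix id e).det =
      ((commutatorMatrix v s (ofArrowEntries (f ∘ w))).submatrix id e).det := by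
  have hw : (fun a => (ofArrowEntries w a).map f) = ofArrowEntries (f ∘ w) :=
    funext fun a => map_ofEntries _ f.map_zero
  rw [← hw, ← commutatorMatrix_map, RingHom.map_det]
  rfl

variable [Fintype I] [Fintype (Entry (homRel v s))]

theorem commutatorMatrix_mulVec (B : Fin Q.numArrows → Matrix I I R)
    (w : Entry (homRel v s) → R) :
    commutatorMatrix v s B *ᵥ w =
      arrowEntries v s fun a => B a * ofEntries w - ofEntries w * B a := by
  classical
  funext ⟨a, ⟨p, q⟩, hpq⟩
  have hsum (g : I × I → R) : ∑ u : Entry (homRel v s), g u.1 * w u =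
      ∑ k, ∑ l, g (k, l) * ofEntries w k l := by
    rw [← Fintype.sum_prod_type']
    refine Fintype.sum_of_injective Subtype.val Subtype.val_injective _ _ (fun x hx => ?_)
      fun u => by rw [ofEntries_apply w u.2]
    rw [supportedOn_ofEntries w x.1 x.2 fun h => hx ⟨⟨x, h⟩, rfl⟩, mul_zero]
  have hleft := hsum fun x => if q = x.2 then B a p x.1 else 0
  have hright := hsum fun x => if p = x.1 then B a x.2 q else 0
  simp only [ite_mul, zero_mul, Finset.sum_ite_eq, Finset.mem_univ, if_true] at hleft
  rw [Finset.sum_comm] at hright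
  simp only [ite_mul, zero_mul, Finset.sum_ite_eq, Finset.mem_univ, if_true] at hright
  simp only [commutatorMatrix, Matrix.mulVec, dotProduct, Matrix.of_apply, arrowEntries,
    Matrix.sub_apply, Matrix.mul_apply, sub_mul, Finset.sum_sub_distrib, ite_mul, zero_mul]
  rw [hleft, hright]
  simp only [mul_comm]

theorem supportedOn_commutator_sub {α : Type*} [LinearOrder α] {c : I → α}
    [Fintype (Entry (homRel v fun p q => c q < c p))] {B Y : Fin Q.numArrows → Matrix I I R}
    (hB : ∀ a, SupportedOn (arrowRel Q v ⊤ a) (B a))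
    (hY : ∀ a, SupportedOn (arrowRel Q v ⊤ a) (Y a))
    {w : Entry (homRel v fun p q => c q < c p) → R}
    (hw : commutatorMatrix v (fun p q => c q < c p) B *ᵥ w = arrowEntries v _ Y)
    (a : Fin Q.numArrows) :
    SupportedOn (arrowRel Q v (fun p q => c p ≤ c q) a)
      (B a * ofEntries w - ofEntries w * B a - Y a) := by
  have hf := (supportedOn_ofEntries w).graded_of_homRel
  have hD : SupportedOn (arrowRel Q v ⊤ a) (B a * ofEntries w - ofEntries w * B a) :=
    ((hB a).mul hf fun _ _ _ h h' => ⟨⟨h.1.1, h'.symm.trans h.1.2⟩, trivial⟩).sub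
      (hf.mul (hB a) fun _ _ _ h h' => ⟨⟨h.trans h'.1.1, h'.1.2⟩, trivial⟩)
  intro p q hpq
  by_cases harrow : arrowRel Q v ⊤ a p q
  · rw [commutatorMatrix_mulVec] at hw
    exact sub_eq_zero.mpr
      (congrFun hw ⟨a, (p, q), harrow.1, lt_of_not_ge fun h => hpq ⟨harrow.1, h⟩⟩)
  · exact hD.sub (hY a) p q harrow

theorem supportedOn_commutator_of_mul_eq_zero {α κ : Type*} [LinearOrder α] [Fintype κ] {c : I → α}
    [Fintype (Entry (homRel v fun p q => c q < c p))] {B : Fin Q.numArrows → Matrix I I R}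
    (hB : ∀ a, SupportedOn (arrowRel Q v ⊤ a) (B a))
    {z : Matrix (Entry (homRel v fun p q => c q < c p)) κ R}
    (hz : commutatorMatrix v (fun p q => c q < c p) B * z = 0) (φ : R →+* S) (t : κ → S)
    (a : Fin Q.numArrows) : SupportedOn (arrowRel Q v (fun p q => c p ≤ c q) a)
      ((B a).map φ * ofEntries (z.map φ *ᵥ t) - ofEntries (z.map φ *ᵥ t) * (B a).map φ) := by
  have hker : commutatorMatrix v (fun p q => c q < c p) (fun a => (B a).map φ) *ᵥ
      (z.map φ *ᵥ t) = arrowEntries v _ 0 := by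
    rw [← commutatorMatrix_map, Matrix.mulVec_mulVec, ← Matrix.map_mul, hz,
      Matrix.map_zero _ φ.map_zero, Matrix.zero_mulVec]
    rfl
  have hsub := supportedOn_commutator_sub (Y := 0) (fun a => (hB a).map φ.map_zero)
    (fun _ _ _ _ => rfl) hker a
  rwa [Pi.zero_apply, sub_zero] at hsub

end Commutators

section GenericCommutators

open scoped Matrix

variable {Q : QuiverData} {I K : Type*} [Fintype I] [DecidableEq I] [Field K] {v : I → Fin Q.n}
  {c : I → Fin 2}

open Classical in
/-- The generic element of the kernel of the commutator map, whose coordinates over a kernel basis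
are new independent parameters, makes the counting inequality apply. -/
theorem GenericallyFlagged.rank_commutatorMatrix (h : GenericallyFlagged K v c) :
    (commutatorMatrix v (fun p q => c q < c p)
      (ofArrowEntries (genericParam K v c ∘ Sum.inr))).rank =
        Nat.card (ArrowEntry Q v fun p q => c q < c p) := by
  have hw := algebraicIndependent_genericParam (K := K) (v := v) (c := c)
  set w := genericParam K v c
  have hflag := isFlagged_flagPoint w
  set B := ofArrowEntries (Q := Q) (w ∘ Sum.inr)
  set D := commutatorMatrix v (fun p q => c q < c p) B
  obtain ⟨k, z, e, hk, hz, he⟩ := exists_kernel_basis_submatrix_eq_one D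
  let A := MvPolynomial (Fin k) (FlagField K v c)
  let F' := FractionRing A
  let φ := algebraMap (FlagField K v c) F'
  let t : Fin k → F' := fun i => algebraMap A F' (MvPolynomial.X i)
  have ht : AlgebraicIndependent (FlagField K v c) t :=
    (MvPolynomial.algebraicIndependent_X _ _).map'
      (f := IsScalarTower.toAlgHom _ A F') (IsFractionRing.injective _ _)
  let f : Matrix I I F' := ofEntries (z.map φ *ᵥ t)
  have hcomm := supportedOn_commutator_of_mul_eq_zero
    (fun a => (hflag.upper a).mono fun _ _ h => ⟨h.1, trivial⟩) hz φ t
  have hft (i) : f (e i).1.1 (e i).1.2 = t i := by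
    have he' : (z.map φ).submatrix e id = 1 := by
      rw [Matrix.submatrix_map, he, Matrix.map_one _ φ.map_zero φ.map_one]
    exact (ofEntries_apply _ (e i).2).trans
      ((congrFun (congrArg (· *ᵥ t) he') i).trans (congrFun (Matrix.one_mulVec t) i))
  have hXind : AlgebraicIndependent K
      (arrowEntries v ⊤ fun a => (flagPoint w a).map φ) :=
    (h.algebraicIndependent hw).map' (f := IsScalarTower.toAlgHom K _ F') φ.injective
  have hind : AlgebraicIndependent K
      (Sum.elim t (arrowEntries v (fun p q => c p ≤ c q) fun a => (B a).map φ)) := by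
    have hB : (arrowEntries v (fun p q => c p ≤ c q) fun a => (B a).map φ) =
        φ ∘ w ∘ Sum.inr :=
      funext fun u => congrArg φ (ofEntries_apply _ u.2.2)
    rw [hB]
    exact (hw.comp _ Sum.inr_injective).sumElim_comp ht
  have hle := card_add_card_le_of_commutator (hflag.map φ) hXind (supportedOn_ofEntries _) hcomm
    (fun i => ⟨_, _, hft i⟩) hind
  have hrank := D.rank_le_card_height
  rw [← Nat.card_eq_fintype_card] at hk hrank
  rw [Nat.card_fin] at hle
  omega

theorem GenericallyFlagged.exists_commutator [Infinite K] (h : GenericallyFlagged K v c) :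
    ∃ B : Fin Q.numArrows → Matrix I I K,
      (∀ a, SupportedOn (arrowRel Q v (fun p q => c p ≤ c q) a) (B a)) ∧
      ∀ Y : Fin Q.numArrows → Matrix I I K, (∀ a, SupportedOn (arrowRel Q v ⊤ a) (Y a)) →
        ∃ f, SupportedOn (homRel v fun p q => c q < c p) f ∧
          ∀ a, SupportedOn (arrowRel Q v (fun p q => c p ≤ c q) a)
            (B a * f - f * B a - Y a) := by
  classical
  let s (p q : I) : Prop := c q < c p
  let A := MvPolynomial (FlagParam Q v c) K
  let D : Matrix (ArrowEntry Q v s) (Entry (homRel v s)) A :=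
    commutatorMatrix v s (ofArrowEntries (MvPolynomial.X ∘ Sum.inr))
  have hrank := h.rank_commutatorMatrix
  rw [Nat.card_eq_fintype_card] at hrank
  obtain ⟨e, he⟩ := exists_det_submatrix_ne_zero_of_rank_eq hrank
  have hne : (D.submatrix id e).det ≠ 0 := fun h0 => he <|
    (map_det_submatrix_commutatorMatrix (MvPolynomial.X ∘ Sum.inr)
      (algebraMap A (FlagField K v c)) e).symm.trans ((congrArg _ h0).trans (map_zero _))
  obtain ⟨w, hw⟩ : ∃ w, MvPolynomial.eval w (D.submatrix id e).det ≠ 0 := by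
    by_contra! hall
    exact hne (MvPolynomial.funext fun w => (hall w).trans (map_zero _).symm)
  rw [map_det_submatrix_commutatorMatrix] at hw
  refine ⟨ofArrowEntries (MvPolynomial.eval w ∘ MvPolynomial.X ∘ Sum.inr),
    fun a => supportedOn_ofEntries _, fun Y hY => ?_⟩
  obtain ⟨f, hf⟩ := mulVec_surjective_of_det_submatrix_ne_zero hw (arrowEntries v s Y)
  exact ⟨ofEntries f, supportedOn_ofEntries f, supportedOn_commutator_sub
    (fun a => (supportedOn_ofEntries _).mono fun _ _ h => ⟨h.1, trivial⟩) hY hf⟩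

end GenericCommutators

section Representations

open scoped Matrix

variable {Q : QuiverData} {K : Type} [Field K] {d d' dx dy : Fin Q.n → ℕ}

/-- The standard basis of the carrier of a representation of dimension vector `d`. -/
abbrev CarrierIndex (d : Fin Q.n → ℕ) : Type := Σ i, Fin (d i)

/-- The matrix by which the arrow `a` acts on the whole carrier of the representation `x`. -/
noncomputable def arrowMatrix (x : Q.RepSpace d K) (a : Fin Q.numArrows) :
    Matrix (CarrierIndex d) (CarrierIndex d) K :=
  LinearMap.toMatrix' (Q.arrowMap d K x a)

theorem toLin'_arrowMatrix (x : Q.RepSpace d K) (a : Fin Q.numArrows) :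
    Matrix.toLin' (arrowMatrix x a) = Q.arrowMap d K x a :=
  Matrix.toLin'_toMatrix' _

theorem arrowMatrix_apply_mk (x : Q.RepSpace d K) (a : Fin Q.numArrows) (i : Fin (d (Q.tgt a)))
    (j : Fin (d (Q.src a))) : arrowMatrix x a ⟨Q.tgt a, i⟩ ⟨Q.src a, j⟩ = x ⟨a, i, j⟩ := by
  simp [arrowMatrix, QuiverData.arrowMap, LinearMap.toMatrix'_apply, Pi.single_apply]

theorem supportedOn_arrowMatrix (x : Q.RepSpace d K) (a : Fin Q.numArrows) :
    SupportedOn (arrowRel Q Sigma.fst ⊤ a) (arrowMatrix x a) := by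
  rintro ⟨i, k⟩ ⟨j, l⟩ h
  by_cases hi : i = Q.tgt a
  · have hj (w : Fin (d (Q.src a))) : (⟨Q.src a, w⟩ : CarrierIndex d) ≠ ⟨j, l⟩ :=
      fun hw => h ⟨⟨hi, (congrArg Sigma.fst hw).symm⟩, trivial⟩
    simp [arrowMatrix, QuiverData.arrowMap, LinearMap.toMatrix'_apply, hi, hj]
  · simp [arrowMatrix, QuiverData.arrowMap, LinearMap.toMatrix'_apply, hi]

theorem exists_arrowMatrix_eq {X : Fin Q.numArrows → Matrix (CarrierIndex d) (CarrierIndex d) K}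
    (hX : ∀ a, SupportedOn (arrowRel Q Sigma.fst ⊤ a) (X a)) :
    ∃ x : Q.RepSpace d K, arrowMatrix x = X := by
  refine ⟨fun t => X t.1 ⟨_, t.2.1⟩ ⟨_, t.2.2⟩, funext fun a => Matrix.ext fun p q => ?_⟩
  by_cases h : arrowRel Q Sigma.fst ⊤ a p q
  · obtain ⟨i, k⟩ := p
    obtain ⟨j, l⟩ := q
    obtain ⟨⟨rfl : i = _, rfl : j = _⟩, -⟩ := h
    exact arrowMatrix_apply_mk _ a k l
  · rw [supportedOn_arrowMatrix _ a p q h, hX a p q h]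

theorem toLin'_diagonal_eq_proj (i : Fin Q.n) :
    Matrix.toLin' (Matrix.diagonal fun p : CarrierIndex d => if p.1 = i then (1 : K) else 0) =
      Q.proj d K i := by
  refine LinearMap.ext fun m => funext fun p => ?_
  simp [QuiverData.proj, Matrix.mulVec_diagonal]

theorem graded_iff_toLin'_comp_proj {m : Matrix (CarrierIndex dy) (CarrierIndex dx) K} :
    Graded Sigma.fst Sigma.fst m ↔
      ∀ i, Matrix.toLin' m ∘ₗ Q.proj dx K i = Q.proj dy K i ∘ₗ Matrix.toLin' m := by
  simp only [← toLin'_diagonal_eq_proj, ← Matrix.toLin'_mul, EmbeddingLike.apply_eq_iff_eq,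
    ← Matrix.ext_iff, Matrix.mul_diagonal, Matrix.diagonal_mul]
  refine ⟨fun h i p q => ?_, fun h p q hpq => ?_⟩
  · by_cases hpq : p.1 = q.1
    · rw [hpq, mul_comm]
    · rw [h p q hpq, zero_mul, mul_zero]
  · simpa only [if_true, if_neg hpq, mul_one, zero_mul] using h q.1 p q

theorem repHom_toLin'_iff {x : Q.RepSpace dx K} {y : Q.RepSpace dy K}
    {m : Matrix (CarrierIndex dy) (CarrierIndex dx) K} :
    Q.RepHom K dx dy x y (Matrix.toLin' m) ↔
      Graded Sigma.fst Sigma.fst m ∧ ∀ a, m * arrowMatrix x a = arrowMatrix y a * m := by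
  simp only [QuiverData.RepHom, graded_iff_toLin'_comp_proj, ← toLin'_arrowMatrix,
    ← Matrix.toLin'_mul, EmbeddingLike.apply_eq_iff_eq]
  exact and_comm

theorem finrank_range_proj (i : Fin Q.n) :
    Module.finrank K (LinearMap.range (Q.proj d K i)) = d i := by
  classical
  rw [← toLin'_diagonal_eq_proj]
  refine (Matrix.rank_diagonal _).trans ?_
  simp only [ne_eq, ite_eq_right_iff, one_ne_zero, imp_false, not_not]
  exact (Fintype.card_congr (Equiv.sigmaSubtype i)).trans (Fintype.card_fin _)

theorem HasSubrep.exists_stable {x : Q.RepSpace d K}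
    (h : HasSubrep Sigma.fst (Sigma.fst : CarrierIndex d' → Fin Q.n) (arrowMatrix x)) :
    ∃ N, Q.Stable d K x N ∧ ∀ i, Q.vdim d K N i = d' i := by
  obtain ⟨z, hz, ⟨b, hb⟩, hy⟩ := h
  have hproj (i : Fin Q.n) : (LinearMap.range (Matrix.toLin' z)).map (Q.proj d K i) =
      (LinearMap.range (Q.proj d' K i)).map (Matrix.toLin' z) := by
    rw [← LinearMap.range_comp, ← LinearMap.range_comp, graded_iff_toLin'_comp_proj.mp hz i]
  have hinj : Function.Injective (Matrix.toLin' z) :=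
    Function.LeftInverse.injective (g := Matrix.toLin' b) fun u => by
      rw [← Matrix.toLin'_mul_apply, hb, Matrix.toLin'_one, LinearMap.id_apply]
  refine ⟨LinearMap.range (Matrix.toLin' z), ⟨fun a => ?_, fun i => ?_⟩, fun i => ?_⟩
  · obtain ⟨y, hy⟩ := hy a
    rw [← LinearMap.range_comp, ← toLin'_arrowMatrix, ← Matrix.toLin'_mul, hy, Matrix.toLin'_mul]
    exact LinearMap.range_comp_le_range _ _
  · rw [hproj i]
    exact LinearMap.map_le_range
  · rw [QuiverData.vdim, hproj i, ← finrank_range_proj (K := K) (d := d') i]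
    exact (Submodule.equivMapOfInjective _ hinj _).finrank_eq.symm

theorem exists_graded_range_eq {N : Submodule K (Q.Carrier d K)}
    (hN : ∀ i, N.map (Q.proj d K i) ≤ N) (hdim : ∀ i, Q.vdim d K N i = d' i) :
    ∃ z : Matrix (CarrierIndex d) (CarrierIndex d') K, Graded Sigma.fst Sigma.fst z ∧
      LinearIndependent K z.col ∧ LinearMap.range (Matrix.toLin' z) = N := by
  let b (i : Fin Q.n) : Module.Basis (Fin (d' i)) K (N.map (Q.proj d K i)) :=
    Module.finBasisOfFinrankEq K _ (hdim i)
  have hb (i : Fin Q.n) (u : N.map (Q.proj d K i)) (p : CarrierIndex d) (hp : p.1 ≠ i) :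
      (u : Q.Carrier d K) p = 0 := by
    obtain ⟨-, m, -, rfl⟩ := u
    exact if_neg hp
  let z : Matrix (CarrierIndex d) (CarrierIndex d') K :=
    Matrix.of fun p q => (b q.1 q.2 : Q.Carrier d K) p
  let part (w : Q.Carrier d' K) (i : Fin Q.n) : N.map (Q.proj d K i) :=
    (b i).equivFun.symm fun k => w ⟨i, k⟩
  have hsum (w : Q.Carrier d' K) : z *ᵥ w = ∑ i, (part w i : Q.Carrier d K) := funext fun p => by
    simp [part, z, Matrix.mulVec, dotProduct, Fintype.sum_sigma, Module.Basis.equivFun_symm_apply,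
      mul_comm]
  have hpart (w : Q.Carrier d' K) (p : CarrierIndex d) :
      (z *ᵥ w) p = (part w p.1 : Q.Carrier d K) p := by
    rw [hsum, Finset.sum_apply]
    exact Fintype.sum_eq_single p.1 fun i hi => hb i _ p hi.symm
  refine ⟨z, fun p q hpq => hb q.1 (b q.1 q.2) p hpq, ?_, le_antisymm ?_ fun u hu => ?_⟩
  · refine Matrix.mulVec_injective_iff.mp <| (injective_iff_map_eq_zero z.mulVecLin).mpr
      fun w (hw : z *ᵥ w = 0) => funext fun q => ?_
    have hzero : part w q.1 = 0 := by
      refine Subtype.ext (funext fun p => ?_)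
      by_cases hp : q.1 = p.1
      · rw [hp, ← hpart, hw]
        rfl
      · exact hb q.1 _ p (Ne.symm hp)
    exact congrFun ((LinearEquiv.map_eq_zero_iff _).mp hzero) q.2
  · rintro - ⟨w, rfl⟩
    rw [Matrix.toLin'_apply, hsum]
    exact Submodule.sum_mem _ fun i _ => hN i (part w i).2
  · have hu' (i : Fin Q.n) := Submodule.mem_map_of_mem (f := Q.proj d K i) hu
    let w (i : Fin Q.n) : Fin (d' i) → K := (b i).equivFun ⟨_, hu' i⟩
    have hw (i : Fin Q.n) : part (fun q => w q.1 q.2) i = ⟨_, hu' i⟩ :=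
      (b i).equivFun.symm_apply_apply ⟨_, hu' i⟩
    refine ⟨fun q => w q.1 q.2, funext fun p => ?_⟩
    rw [Matrix.toLin'_apply, hpart, hw]
    exact if_pos rfl

theorem hasSubrep_of_stable {x : Q.RepSpace d K} {N : Submodule K (Q.Carrier d K)}
    (hN : Q.Stable d K x N) (hdim : ∀ i, Q.vdim d K N i = d' i) :
    HasSubrep Sigma.fst (Sigma.fst : CarrierIndex d' → Fin Q.n) (arrowMatrix x) := by
  obtain ⟨z, hz, hcol, rfl⟩ := exists_graded_range_eq hN.2 hdim
  refine ⟨z, hz, exists_mul_eq_one_of_linearIndependent_col hcol, fun a => ?_⟩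
  have hmem (q : CarrierIndex d') : ∃ w, z *ᵥ w = arrowMatrix x a *ᵥ z.col q := by
    have h := hN.1 a (Submodule.mem_map_of_mem ⟨Pi.single q 1, rfl⟩)
    rwa [← toLin'_arrowMatrix, Matrix.toLin'_apply z, Matrix.mulVec_single_one] at h
  choose y hy using hmem
  exact ⟨(Matrix.of y)ᵀ, Matrix.ext fun p q => (congrFun (hy q) p).symm⟩

end Representations

section Extensions

open scoped Matrix

variable {Q : QuiverData} {K : Type} [Field K] {d d' dx dy : Fin Q.n → ℕ}

/-- The vertex grading of a direct sum of representations of dimension vectors `dx` and `dy`. -/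
abbrev sumVertex (dx dy : Fin Q.n → ℕ) : CarrierIndex dx ⊕ CarrierIndex dy → Fin Q.n :=
  Sum.elim Sigma.fst Sigma.fst

/-- The two-step flag of a direct sum whose lower step is the summand of dimension vector `dx`. -/
abbrev sumBlock (dx dy : Fin Q.n → ℕ) : CarrierIndex dx ⊕ CarrierIndex dy → Fin 2 :=
  Sum.elim (fun _ => 0) fun _ => 1

theorem exists_equiv_sum_of_injective (hd : ∀ i, d i = dx i + dy i)
    {e : CarrierIndex dx → CarrierIndex d} (he : Function.Injective e)
    (hdeg : ∀ q, (e q).1 = q.1) :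
    ∃ E : CarrierIndex dx ⊕ CarrierIndex dy ≃ CarrierIndex d,
      (∀ p, (E p).1 = sumVertex dx dy p) ∧ ∀ q, E (Sum.inl q) = e q := by
  classical
  have hfiber (f : Fin Q.n → ℕ) (i : Fin Q.n) :
      Fintype.card {p : CarrierIndex f // p.1 = i} = f i :=
    (Fintype.card_congr (Equiv.sigmaSubtype i)).trans (Fintype.card_fin _)
  let E₀ := ((Equiv.ofInjective e he).sumCongr (Equiv.refl _)).trans
    (Equiv.Set.sumCompl (Set.range e))
  have hcard (i : Fin Q.n) : Fintype.card {q : CarrierIndex dy // q.1 = i} =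
      Fintype.card {p : {p // p ∉ Set.range e} // p.1.1 = i} := by
    have hE₀ (p) : Sum.elim Sigma.fst (fun p => p.1.1) p = i ↔ (E₀ p).1 = i := by
      rcases p with q | q
      · exact (hdeg q).symm ▸ Iff.rfl
      · exact Iff.rfl
    have hsum := Fintype.card_congr <|
      (E₀.subtypeEquiv (q := fun p => p.1 = i) hE₀).symm.trans Equiv.subtypeSum
    rw [Fintype.card_sum, hfiber d i, hd i] at hsum
    exact (hfiber dy i).trans (Nat.add_left_cancel (hsum.trans (congrArg (· + _) (hfiber dx i))))
  let E' : CarrierIndex dy ≃ {p // p ∉ Set.range e} :=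
    Equiv.ofFiberEquiv (g := fun p => p.1.1) fun i => Fintype.equivOfCardEq (hcard i)
  refine ⟨((Equiv.refl _).sumCongr E').trans E₀, ?_, fun q => rfl⟩
  rintro (q | q)
  · exact hdeg q
  · exact Equiv.ofFiberEquiv_map (g := fun p : {p // p ∉ Set.range e} => p.1.1) _ q

theorem exists_equiv_sum (hd : ∀ i, d i = dx i + dy i) :
    ∃ E : CarrierIndex dx ⊕ CarrierIndex dy ≃ CarrierIndex d, ∀ p, (E p).1 = sumVertex dx dy p := by
  let incl (q : CarrierIndex dx) : CarrierIndex d :=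
    q.map id fun i => Fin.castLE (hd i ▸ Nat.le_add_right _ _)
  have hincl : Function.Injective incl :=
    Function.injective_id.sigma_map fun i => Fin.castLE_injective _
  obtain ⟨E, hE, -⟩ := exists_equiv_sum_of_injective hd hincl fun _ => rfl
  exact ⟨E, hE⟩

theorem ker_toLin'_eq_range {I J L : Type*} [Fintype I] [DecidableEq I] [Fintype J]
    [DecidableEq J] [Fintype L] {ι : Matrix I J K} {π : Matrix L I K} {ρ : Matrix J I K}
    {σ : Matrix I L K} (hπι : π * ι = 0) (hsum : ι * ρ + σ * π = 1) :
    LinearMap.ker (Matrix.toLin' π) = LinearMap.range (Matrix.toLin' ι) := by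
  refine le_antisymm (fun u hu => ⟨ρ *ᵥ u, ?_⟩) ?_
  · rintro - ⟨w, rfl⟩
    rw [LinearMap.mem_ker, ← Matrix.toLin'_mul_apply, hπι, map_zero, LinearMap.zero_apply]
  · have hu : π *ᵥ u = 0 := hu
    calc ι *ᵥ ρ *ᵥ u = (ι * ρ) *ᵥ u + σ *ᵥ π *ᵥ u := by
          rw [hu, Matrix.mulVec_zero, add_zero, Matrix.mulVec_mulVec]
      _ = u := by rw [Matrix.mulVec_mulVec, ← Matrix.add_mulVec, hsum, Matrix.one_mulVec]

theorem mul_mul_cancel_of_ker_eq_range {I J L N : Type*} [Fintype I] [DecidableEq I] [Fintype J]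
    [DecidableEq J] {ι : Matrix I J K} {π : Matrix L I K} {ρ : Matrix J I K} (hρι : ρ * ι = 1)
    (hker : LinearMap.ker (Matrix.toLin' π) = LinearMap.range (Matrix.toLin' ι))
    {m : Matrix I N K} (hm : π * m = 0) : ι * (ρ * m) = m := by
  refine Matrix.ext_col fun q => ?_
  have hq : m.col q ∈ LinearMap.ker (Matrix.toLin' π) := congrArg (Matrix.col · q) hm
  rw [hker] at hq
  obtain ⟨w, hw : ι *ᵥ w = m.col q⟩ := hq
  calc (ι * (ρ * m)).col q = ι *ᵥ ρ *ᵥ m.col q := rfl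
    _ = m.col q := by
      rw [← hw, Matrix.mulVec_mulVec _ ρ, hρι, Matrix.one_mulVec]

theorem exists_section_of_ext1Zero {x : Q.RepSpace dx K} {y : Q.RepSpace dy K}
    (h : Q.Ext1Zero K (fun _ => Set.univ) dx dy x y) {z : Q.RepSpace (fun i => dx i + dy i) K}
    {ι : Matrix (CarrierIndex fun i => dx i + dy i) (CarrierIndex dy) K}
    {π : Matrix (CarrierIndex dx) (CarrierIndex fun i => dx i + dy i) K}
    (hι : Graded Sigma.fst Sigma.fst ι) (hπ : Graded Sigma.fst Sigma.fst π)
    (hzι : ∀ a, ι * arrowMatrix y a = arrowMatrix z a * ι)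
    (hzπ : ∀ a, π * arrowMatrix z a = arrowMatrix x a * π)
    {ρ : Matrix (CarrierIndex dy) (CarrierIndex fun i => dx i + dy i) K}
    {σ : Matrix (CarrierIndex fun i => dx i + dy i) (CarrierIndex dx) K}
    (hρι : ρ * ι = 1) (hπσ : π * σ = 1) (hπι : π * ι = 0) (hsum : ι * ρ + σ * π = 1) :
    ∃ S : Matrix (CarrierIndex fun i => dx i + dy i) (CarrierIndex dx) K,
      Graded Sigma.fst Sigma.fst S ∧ (∀ a, S * arrowMatrix x a = arrowMatrix z a * S) ∧
        π * S = 1 := by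
  obtain ⟨s, hs, hsplit⟩ := h z trivial (Matrix.toLin' ι) (Matrix.toLin' π)
    (repHom_toLin'_iff.mpr ⟨hι, hzι⟩) (repHom_toLin'_iff.mpr ⟨hπ, hzπ⟩)
    (Function.LeftInverse.injective (g := Matrix.toLin' ρ) fun u => by
      rw [← Matrix.toLin'_mul_apply, hρι, Matrix.toLin'_one, LinearMap.id_apply])
    (Function.RightInverse.surjective (g := Matrix.toLin' σ) fun u => by
      rw [← Matrix.toLin'_mul_apply, hπσ, Matrix.toLin'_one, LinearMap.id_apply])
    (ker_toLin'_eq_range hπι hsum)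
  obtain ⟨S, rfl⟩ := Matrix.toLin'.surjective s
  obtain ⟨hS, hxS⟩ := repHom_toLin'_iff.mp hs
  exact ⟨S, hS, hxS, Matrix.toLin'.injective (by rw [Matrix.toLin'_mul, hsplit, Matrix.toLin'_one])⟩

theorem exists_section_of_ext1Zero_of_equiv {x : Q.RepSpace dx K} {y : Q.RepSpace dy K}
    (h : Q.Ext1Zero K (fun _ => Set.univ) dx dy x y) {I : Type*} [Fintype I] [DecidableEq I]
    {v : I → Fin Q.n} (E : I ≃ CarrierIndex fun i => dx i + dy i) (hE : ∀ p, (E p).1 = v p)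
    {W : Fin Q.numArrows → Matrix I I K} (hW : ∀ a, SupportedOn (arrowRel Q v ⊤ a) (W a))
    {ι : Matrix I (CarrierIndex dy) K} {π : Matrix (CarrierIndex dx) I K}
    (hι : Graded v Sigma.fst ι) (hπ : Graded Sigma.fst v π)
    (hWι : ∀ a, ι * arrowMatrix y a = W a * ι) (hWπ : ∀ a, π * W a = arrowMatrix x a * π)
    {ρ : Matrix (CarrierIndex dy) I K} {σ : Matrix I (CarrierIndex dx) K}
    (hρι : ρ * ι = 1) (hπσ : π * σ = 1) (hπι : π * ι = 0) (hsum : ι * ρ + σ * π = 1) :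
    ∃ S : Matrix I (CarrierIndex dx) K, Graded v Sigma.fst S ∧
      (∀ a, S * arrowMatrix x a = W a * S) ∧ π * S = 1 := by
  have hE' (p) : v (E.symm p) = p.1 := by rw [← hE, E.apply_symm_apply]
  obtain ⟨z, hz⟩ := exists_arrowMatrix_eq (X := fun a => (W a).submatrix E.symm E.symm) fun a =>
    ((hW a).submatrix E.symm E.symm).mono fun p q h =>
      ⟨⟨(hE' p).symm.trans h.1.1, (hE' q).symm.trans h.1.2⟩, trivial⟩
  have hz (a : Fin Q.numArrows) : arrowMatrix z a = (W a).submatrix E.symm E.symm := congrFun hz a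
  obtain ⟨S, hS, hxS, hπS⟩ := exists_section_of_ext1Zero h (z := z)
    (ι := ι.submatrix E.symm id) (π := π.submatrix id E.symm)
    (ρ := ρ.submatrix id E.symm) (σ := σ.submatrix E.symm id)
    ((hι.submatrix E.symm id).mono fun p q h => (hE' p).symm.trans h)
    ((hπ.submatrix id E.symm).mono fun p q h => h.trans (hE' q))
    (fun a => by
      rw [hz, Matrix.submatrix_mul_equiv, ← hWι,
        Matrix.submatrix_mul _ _ _ id _ Function.bijective_id, Matrix.submatrix_id_id])
    (fun a => by
      rw [hz, Matrix.submatrix_mul_equiv, hWπ,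
        Matrix.submatrix_mul _ _ _ id _ Function.bijective_id, Matrix.submatrix_id_id])
    (by rw [Matrix.submatrix_mul_equiv, hρι, Matrix.submatrix_id_id])
    (by rw [Matrix.submatrix_mul_equiv, hπσ, Matrix.submatrix_id_id])
    (by rw [Matrix.submatrix_mul_equiv, hπι, Matrix.submatrix_zero]; rfl)
    (by
      rw [← Matrix.submatrix_mul _ _ _ id _ Function.bijective_id,
        ← Matrix.submatrix_mul _ _ _ id _ Function.bijective_id]
      exact (congrArg (Matrix.submatrix · E.symm E.symm) hsum).trans (Matrix.submatrix_one_equiv _))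
  refine ⟨S.submatrix E id, (hS.submatrix E id).mono fun p q h => (hE p).symm.trans h,
    fun a => ?_, ?_⟩
  · calc S.submatrix E id * arrowMatrix x a = (S * arrowMatrix x a).submatrix E id :=
          (Matrix.submatrix_mul _ _ _ id _ Function.bijective_id).symm
      _ = W a * S.submatrix E id := by
          rw [hxS, hz, Matrix.submatrix_mul _ _ _ E _ E.bijective, Matrix.submatrix_submatrix,
            E.symm_comp_self, Matrix.submatrix_id_id]
  · rw [← hπS, ← Matrix.submatrix_id_id (_ * S), Matrix.submatrix_mul _ _ _ E _ E.bijective,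
      Matrix.submatrix_submatrix, E.symm_comp_self, Function.comp_id, Matrix.submatrix_id_id]

theorem exists_eq_of_ext1Zero {x : Q.RepSpace dx K} {y : Q.RepSpace dy K}
    (h : Q.Ext1Zero K (fun _ => Set.univ) dx dy x y)
    {e : Fin Q.numArrows → Matrix (CarrierIndex dy) (CarrierIndex dx) K}
    (he : ∀ a, SupportedOn (fun p q => p.1 = Q.tgt a ∧ q.1 = Q.src a) (e a)) :
    ∃ f : Matrix (CarrierIndex dy) (CarrierIndex dx) K, Graded Sigma.fst Sigma.fst f ∧
      ∀ a, f * arrowMatrix x a - arrowMatrix y a * f = e a := by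
  obtain ⟨E, hE⟩ := exists_equiv_sum (dx := dx) (dy := dy) fun _ => rfl
  obtain ⟨S, hS, hxS, hπS⟩ := exists_section_of_ext1Zero_of_equiv h E hE
    (W := fun a => Matrix.fromBlocks (arrowMatrix x a) 0 (e a) (arrowMatrix y a))
    (ι := Matrix.fromRows 0 1) (π := Matrix.fromCols 1 0)
    (ρ := Matrix.fromCols 0 1) (σ := Matrix.fromRows 1 0)
    (fun a => by
      rintro (p | p) (q | q) h
      · exact supportedOn_arrowMatrix x a p q h
      · rfl
      · exact he a p q fun h' => h ⟨h', trivial⟩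
      · exact supportedOn_arrowMatrix y a p q h)
    (by
      rintro (p | p) q h
      · rfl
      · exact Matrix.one_apply_ne fun hpq => h (congrArg Sigma.fst hpq))
    (by
      rintro p (q | q) h
      · exact Matrix.one_apply_ne fun hpq => h (congrArg Sigma.fst hpq)
      · rfl)
    (fun a => by simp [Matrix.fromRows_mul, Matrix.fromBlocks_mul_fromRows])
    (fun a => by simp [Matrix.mul_fromCols, Matrix.fromCols_mul_fromBlocks])
    (by simp [Matrix.fromCols_mul_fromRows])
    (by simp [Matrix.fromCols_mul_fromRows])
    (by simp [Matrix.fromCols_mul_fromRows])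
    (by
      rw [Matrix.fromRows_mul_fromCols, Matrix.fromRows_mul_fromCols, Matrix.fromBlocks_add]
      simp)
  obtain ⟨s, f, rfl⟩ : ∃ s f, S = Matrix.fromRows s f := ⟨_, _, (Matrix.fromRows_toRows S).symm⟩
  obtain rfl : s = 1 := by simpa [Matrix.fromCols_mul_fromRows] using hπS
  refine ⟨f, fun p q h => hS (Sum.inr p) q h, fun a => ?_⟩
  have hfx := hxS a
  rw [Matrix.fromRows_mul, Matrix.fromBlocks_mul_fromRows] at hfx
  rw [(Matrix.fromRows_inj.eq_iff.mp hfx).2, Matrix.mul_one, add_sub_cancel_right]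

theorem exists_graded_leftInverse {m : Matrix (CarrierIndex d) (CarrierIndex d') K}
    (hm : Graded Sigma.fst Sigma.fst m) (hinj : Function.Injective (Matrix.toLin' m)) :
    ∃ r : Matrix (CarrierIndex d') (CarrierIndex d) K,
      Graded Sigma.fst Sigma.fst r ∧ r * m = 1 := by
  obtain ⟨r, hr⟩ := LinearMap.exists_leftInverse_of_injective _ (LinearMap.ker_eq_bot.mpr hinj)
  obtain ⟨r, rfl⟩ := Matrix.toLin'.surjective r
  have hrm : r * m = 1 := Matrix.toLin'.injective <| by
    rw [Matrix.toLin'_mul, hr, Matrix.toLin'_one]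
  refine ⟨gradedPart _ _ r, graded_gradedPart _, ?_⟩
  rw [← gradedPart_mul_right r hm, hrm, gradedPart_eq_self (SupportedOn.one fun _ => rfl)]

theorem exists_graded_rightInverse {m : Matrix (CarrierIndex d) (CarrierIndex d') K}
    (hm : Graded Sigma.fst Sigma.fst m) (hsurj : Function.Surjective (Matrix.toLin' m)) :
    ∃ s : Matrix (CarrierIndex d') (CarrierIndex d) K,
      Graded Sigma.fst Sigma.fst s ∧ m * s = 1 := by
  obtain ⟨s, hs⟩ :=
    LinearMap.exists_rightInverse_of_surjective _ (LinearMap.range_eq_top.mpr hsurj)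
  obtain ⟨s, rfl⟩ := Matrix.toLin'.surjective s
  have hms : m * s = 1 := Matrix.toLin'.injective <| by
    rw [Matrix.toLin'_mul, hs, Matrix.toLin'_one]
  refine ⟨gradedPart _ _ s, graded_gradedPart _, ?_⟩
  rw [← gradedPart_mul_left hm, hms, gradedPart_eq_self (SupportedOn.one fun _ => rfl)]

theorem ext1Zero_of_forall_exists_eq {x : Q.RepSpace dx K} {y : Q.RepSpace dy K}
    (h : ∀ e : Fin Q.numArrows → Matrix (CarrierIndex dy) (CarrierIndex dx) K,
      (∀ a, SupportedOn (fun p q => p.1 = Q.tgt a ∧ q.1 = Q.src a) (e a)) →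
      ∃ f : Matrix (CarrierIndex dy) (CarrierIndex dx) K, Graded Sigma.fst Sigma.fst f ∧
        ∀ a, f * arrowMatrix x a - arrowMatrix y a * f = e a) :
    Q.Ext1Zero K (fun _ => Set.univ) dx dy x y := by
  intro z _ ι π hι hπ hιinj hπsurj hker
  obtain ⟨I, rfl⟩ := Matrix.toLin'.surjective ι
  obtain ⟨P, rfl⟩ := Matrix.toLin'.surjective π
  obtain ⟨hI, hzI⟩ := repHom_toLin'_iff.mp hι
  obtain ⟨hP, hzP⟩ := repHom_toLin'_iff.mp hπ
  obtain ⟨R, hR, hRI⟩ := exists_graded_leftInverse hI hιinj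
  obtain ⟨S, hS, hPS⟩ := exists_graded_rightInverse hP hπsurj
  have hPI : P * I = 0 := Matrix.toLin'.injective <| by
    rw [Matrix.toLin'_mul, map_zero, ← LinearMap.range_le_ker_iff, hker]
  have hdefect (a : Fin Q.numArrows) : P * (arrowMatrix z a * S - S * arrowMatrix x a) = 0 := by
    rw [Matrix.mul_sub, ← Matrix.mul_assoc, hzP, Matrix.mul_assoc, ← Matrix.mul_assoc P, hPS,
      Matrix.mul_one, Matrix.one_mul, sub_self]
  obtain ⟨f, hf, hfe⟩ := h (fun a => R * (arrowMatrix z a * S - S * arrowMatrix x a)) fun a => by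
    have hzS := (supportedOn_arrowMatrix z a).mul hS
      (t := fun p q => p.1 = Q.tgt a ∧ q.1 = Q.src a) fun p q k h h' => ⟨h.1.1, h'.symm.trans h.1.2⟩
    have hSx := hS.mul (supportedOn_arrowMatrix x a)
      (t := fun p q => p.1 = Q.tgt a ∧ q.1 = Q.src a) fun p q k h h' => ⟨h.trans h'.1.1, h'.1.2⟩
    exact hR.mul (hzS.sub hSx) fun p q k h h' => ⟨h.trans h'.1, h'.2⟩
  refine ⟨Matrix.toLin' (S + I * f), repHom_toLin'_iff.mpr
    ⟨hS.add (hI.mul hf fun _ _ _ h h' => h.trans h'), fun a => ?_⟩, ?_⟩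
  · have hIf : I * (f * arrowMatrix x a) - I * (arrowMatrix y a * f) =
        arrowMatrix z a * S - S * arrowMatrix x a := by
      rw [← Matrix.mul_sub, hfe, mul_mul_cancel_of_ker_eq_range hRI hker (hdefect a)]
    rw [← Matrix.mul_assoc I, ← Matrix.mul_assoc I, hzI] at hIf
    rw [Matrix.add_mul, Matrix.mul_add, ← Matrix.mul_assoc, add_comm]
    exact sub_eq_sub_iff_add_eq_add.mp hIf
  · rw [← Matrix.toLin'_mul, Matrix.mul_add, hPS, ← Matrix.mul_assoc, hPI, Matrix.zero_mul,
      add_zero, Matrix.toLin'_one]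

end Extensions

section ExtGeneric

variable {Q : QuiverData} {K : Type} [Field K] {dx dy : Fin Q.n → ℕ}

theorem genericallyFlagged_of_ext1Zero [Infinite K] {x : Q.RepSpace dx K} {y : Q.RepSpace dy K}
    (h : Q.Ext1Zero K (fun _ => Set.univ) dx dy x y) :
    GenericallyFlagged K (sumVertex dx dy) (sumBlock dx dy) := by
  refine genericallyFlagged_of_surjective
    (B₀ := fun a => Matrix.fromBlocks (arrowMatrix x a) 0 0 (arrowMatrix y a)) ?_ fun Y hY => ?_
  · rintro a (p | p) (q | q) h
    · exact supportedOn_arrowMatrix x a p q fun h' => h ⟨h'.1, le_rfl⟩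
    · rfl
    · rfl
    · exact supportedOn_arrowMatrix y a p q fun h' => h ⟨h'.1, le_rfl⟩
  · obtain ⟨f, hf, hfY⟩ := exists_eq_of_ext1Zero h (e := fun a => (Y a).toBlocks₂₁)
      fun a p q h => hY a (Sum.inr p) (Sum.inl q) fun h' => h h'.1
    refine ⟨Matrix.fromBlocks 0 0 f 0, fun a => Matrix.fromBlocks (Y a).toBlocks₁₁ (Y a).toBlocks₁₂
      0 (Y a).toBlocks₂₂, ?_, ?_, fun a => ?_⟩
    · rintro (p | p) (q | q) h
      · rfl
      · rfl
      · exact hf p q fun h' => h ⟨h', Fin.zero_lt_one⟩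
      · rfl
    · rintro a (p | p) (q | q) h
      · exact hY a (Sum.inl p) (Sum.inl q) fun h' => h ⟨h'.1, le_rfl⟩
      · exact hY a (Sum.inl p) (Sum.inr q) fun h' => h ⟨h'.1, Fin.zero_le _⟩
      · rfl
      · exact hY a (Sum.inr p) (Sum.inr q) fun h' => h ⟨h'.1, le_rfl⟩
    · have hlower : arrowMatrix y a * f + (Y a).toBlocks₂₁ = f * arrowMatrix x a :=
        (add_comm _ _).trans (sub_eq_iff_eq_add.mp (hfY a)).symm
      conv_lhs => rw [← Matrix.fromBlocks_toBlocks (Y a)]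
      simp [Matrix.fromBlocks_multiply, Matrix.fromBlocks_add, hlower]

theorem GenericallyFlagged.exists_ext1Zero [Infinite K]
    (h : GenericallyFlagged K (sumVertex dx dy) (sumBlock dx dy)) :
    ∃ (x : Q.RepSpace dx K) (y : Q.RepSpace dy K), Q.Ext1Zero K (fun _ => Set.univ) dx dy x y := by
  obtain ⟨B, hB, hcomm⟩ := h.exists_commutator
  obtain ⟨x, hx⟩ := exists_arrowMatrix_eq (X := fun a => (B a).toBlocks₁₁) fun a p q h =>
    hB a (Sum.inl p) (Sum.inl q) fun h' => h ⟨h'.1, trivial⟩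
  obtain ⟨y, hy⟩ := exists_arrowMatrix_eq (X := fun a => (B a).toBlocks₂₂) fun a p q h =>
    hB a (Sum.inr p) (Sum.inr q) fun h' => h ⟨h'.1, trivial⟩
  refine ⟨x, y, ext1Zero_of_forall_exists_eq fun e he => ?_⟩
  obtain ⟨f, hf, hfe⟩ := hcomm (fun a => Matrix.fromBlocks 0 0 (-e a) 0) fun a => by
    rintro (p | p) (q | q) h
    · rfl
    · rfl
    · exact (he a).neg p q fun h' => h ⟨h', trivial⟩
    · rfl
  refine ⟨f.toBlocks₂₁, fun p q h => hf (Sum.inr p) (Sum.inl q) fun h' => h h'.1, fun a => ?_⟩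
  have hB₂₁ : (B a).toBlocks₂₁ = 0 := Matrix.ext fun p q =>
    hB a (Sum.inr p) (Sum.inl q) fun h' => Fin.zero_lt_one.not_ge h'.2
  have hf₁₁ : f.toBlocks₁₁ = 0 :=
    Matrix.ext fun p q => hf (Sum.inl p) (Sum.inl q) fun h' => lt_irrefl _ h'.2
  have hf₂₂ : f.toBlocks₂₂ = 0 :=
    Matrix.ext fun p q => hf (Sum.inr p) (Sum.inr q) fun h' => lt_irrefl _ h'.2
  have hlower : (B a * f).toBlocks₂₁ - (f * B a).toBlocks₂₁ - -e a = 0 :=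
    Matrix.ext fun p q => hfe a (Sum.inr p) (Sum.inl q) fun h' => Fin.zero_lt_one.not_ge h'.2
  rw [← Matrix.fromBlocks_toBlocks (B a), ← Matrix.fromBlocks_toBlocks f, hB₂₁, hf₁₁, hf₂₂,
    Matrix.fromBlocks_multiply, Matrix.fromBlocks_multiply, Matrix.toBlocks_fromBlocks₂₁,
    Matrix.toBlocks_fromBlocks₂₁, Matrix.zero_mul, zero_add, Matrix.mul_zero, add_zero] at hlower
  rw [← sub_eq_zero, ← neg_eq_zero, ← hlower, hx, hy]
  abel

end ExtGeneric

section GenericSubrep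

variable {Q : QuiverData} {K : Type} [Field K] {d d' dx dy : Fin Q.n → ℕ}

theorem HasSubrep.submatrix {I I' J J' R : Type*} [CommRing R] [Fintype I] [Fintype I'] [Fintype J]
    [Fintype J'] [DecidableEq J] [DecidableEq J'] {v : I → Fin Q.n} {v' : J → Fin Q.n}
    {X : Fin Q.numArrows → Matrix I I R} (h : HasSubrep v v' X) (E : I' ≃ I) (F : J' ≃ J) :
    HasSubrep (v ∘ E) (v' ∘ F) fun a => (X a).submatrix E E := by
  obtain ⟨z, hz, ⟨b, hb⟩, hy⟩ := h
  refine ⟨z.submatrix E F, hz.submatrix E F, ⟨b.submatrix F E, ?_⟩, fun a => ?_⟩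
  · rw [Matrix.submatrix_mul_equiv, hb, Matrix.submatrix_one_equiv]
  · obtain ⟨y, hy⟩ := hy a
    exact ⟨y.submatrix F F, by rw [Matrix.submatrix_mul_equiv, hy, Matrix.submatrix_mul_equiv]⟩

theorem exists_stable_of_genericallyFlagged [IsAlgClosed K] (hd : ∀ i, d i = dx i + dy i)
    (h : GenericallyFlagged K (sumVertex dx dy) (sumBlock dx dy)) (x : Q.RepSpace d K) :
    ∃ N, Q.Stable d K x N ∧ ∀ i, Q.vdim d K N i = dx i := by
  obtain ⟨E, hE⟩ := exists_equiv_sum hd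
  let F : CarrierIndex dx ≃ {q // sumBlock dx dy q ≤ 0} :=
    Equiv.ofBijective (fun q => ⟨Sum.inl q, le_rfl⟩)
      ⟨fun p q hpq => Sum.inl_injective (congrArg Subtype.val hpq), by
        rintro ⟨q | q, hq⟩
        · exact ⟨q, rfl⟩
        · exact absurd hq Fin.zero_lt_one.not_ge⟩
  have hX (a : Fin Q.numArrows) : SupportedOn (arrowRel Q (sumVertex dx dy) ⊤ a)
      ((arrowMatrix x a).submatrix E E) :=
    ((supportedOn_arrowMatrix x a).submatrix E E).mono fun p q h =>
      ⟨⟨(hE p).symm.trans h.1.1, (hE q).symm.trans h.1.2⟩, trivial⟩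
  have hsub := (h.hasSubrep 0 hX).submatrix E.symm F
  have hv : sumVertex dx dy ∘ E.symm = Sigma.fst := funext fun p => by
    rw [Function.comp_apply, ← hE, E.apply_symm_apply]
  simp only [Matrix.submatrix_submatrix, E.self_comp_symm, Matrix.submatrix_id_id, hv] at hsub
  exact hsub.exists_stable

end GenericSubrep

section DenseSubrep

variable {Q : QuiverData} {K : Type} [Field K] {d dx dy : Fin Q.n → ℕ}

theorem IsNormalizedSubrep.submatrix_equiv {I I' J R : Type*} [CommRing R] [Fintype I] [Fintype I']
    [Fintype J] [DecidableEq J] {v : I → Fin Q.n} {v' : J → Fin Q.n}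
    {X : Fin Q.numArrows → Matrix I I R} {e : J → I} {z : Matrix I J R}
    (h : IsNormalizedSubrep v v' X e z) {E : I' ≃ I} {e' : J → I'} (he : ∀ q, E (e' q) = e q) :
    IsNormalizedSubrep (v ∘ E) v' (fun a => (X a).submatrix E E) e' (z.submatrix E id) := by
  obtain rfl : E ∘ e' = e := funext he
  refine ⟨h.degree, h.graded.submatrix E id, h.submatrix, fun a => ?_⟩
  have hXz : (X a).submatrix E E * z.submatrix E id = (X a * z).submatrix E id :=
    Matrix.submatrix_mul_equiv ..
  rw [hXz, Matrix.submatrix_submatrix, Function.id_comp]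
  exact (congrArg (Matrix.submatrix · E id) (h.comm a)).trans
    (Matrix.submatrix_mul _ _ _ id _ Function.bijective_id)

theorem mul_mul_apply_inr_inl_eq_zero {J L R : Type*} [CommRing R] [Fintype J] [Fintype L]
    [DecidableEq J] [DecidableEq L] {P P' X : Matrix (J ⊕ L) (J ⊕ L) R} {Y : Matrix J J R}
    (hP : P' * P = 1) (hX : X * P.submatrix id Sum.inl = P.submatrix id Sum.inl * Y)
    (p : L) (q : J) : (P' * X * P) (Sum.inr p) (Sum.inl q) = 0 := by
  have hcol (A B : Matrix (J ⊕ L) (J ⊕ L) R) :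
      (A * B).submatrix id Sum.inl = A * B.submatrix id Sum.inl :=
    Matrix.submatrix_mul A B id id Sum.inl Function.bijective_id
  have hconj : (P' * X * P).submatrix id Sum.inl =
      (1 : Matrix (J ⊕ L) (J ⊕ L) R).submatrix id Sum.inl * Y := by
    rw [hcol, Matrix.mul_assoc, hX, ← Matrix.mul_assoc, ← hcol, hP]
  refine (congrFun₂ hconj (Sum.inr p) q).trans ?_
  simp [Matrix.mul_apply]

/- The inclusion is the column block of the unipotent matrix `1 + m`, so conjugating by `1 + m`
kills the lower left blocks of the arrows. -/
theorem IsNormalizedSubrep.exists_isFlagged {J L R : Type*} [CommRing R] [Fintype J] [Fintype L]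
    [DecidableEq J] [DecidableEq L] {v : J ⊕ L → Fin Q.n} {v' : J → Fin Q.n}
    {X : Fin Q.numArrows → Matrix (J ⊕ L) (J ⊕ L) R}
    (hX : ∀ a, SupportedOn (arrowRel Q v ⊤ a) (X a)) {z : Matrix (J ⊕ L) J R}
    (h : IsNormalizedSubrep v v' X Sum.inl z) :
    ∃ m B, IsFlagged v (Sum.elim (fun _ => 0) fun _ => 1 : J ⊕ L → Fin 2) X m B := by
  let m : Matrix (J ⊕ L) (J ⊕ L) R := Matrix.fromBlocks 0 0 z.toRows₂ 0
  have hm : SupportedOn (homRel v fun p q =>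
      (Sum.elim (fun _ => 0) fun _ => 1 : J ⊕ L → Fin 2) q <
        (Sum.elim (fun _ => 0) fun _ => 1 : J ⊕ L → Fin 2) p) m := by
    rintro (p | p) (q | q) hpq
    · rfl
    · rfl
    · exact h.graded (Sum.inr p) q fun h' => hpq ⟨h'.trans (h.degree q).symm, Fin.zero_lt_one⟩
    · rfl
  have hmm : m * m = 0 := by simp [m, Matrix.fromBlocks_multiply]
  have hleft : (1 - m) * (1 + m) = 1 := by linear_combination (norm := noncomm_ring) -hmm
  have hright : (1 + m) * (1 - m) = 1 := mul_eq_one_comm.mp hleft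
  have hcol : (1 + m).submatrix id Sum.inl = z := by
    ext (p | p) q
    · simpa [m, Matrix.one_apply] using (congrFun₂ h.submatrix p q).symm
    · simp [m, Matrix.toRows₂]
  have hone : Graded v v (1 : Matrix (J ⊕ L) (J ⊕ L) R) := .one fun _ => rfl
  have hgraded : Graded v v m := hm.graded_of_homRel
  have hB (a : Fin Q.numArrows) : SupportedOn (arrowRel Q v ⊤ a) ((1 - m) * X a * (1 + m)) :=
    (hX a).mul_mul_of_graded (hone.sub hgraded) (hone.add hgraded)
  refine ⟨m, fun a => (1 - m) * X a * (1 + m), hm, fun a => ?_, fun a => ?_⟩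
  · rintro (p | p) (q | q) hpq
    · exact hB a _ _ fun h' => hpq ⟨h'.1, le_rfl⟩
    · exact hB a _ _ fun h' => hpq ⟨h'.1, Fin.zero_le _⟩
    · exact mul_mul_apply_inr_inl_eq_zero hleft (hcol.symm ▸ h.comm a) p q
    · exact hB a _ _ fun h' => hpq ⟨h'.1, le_rfl⟩
  · rw [← mul_assoc, ← mul_assoc, hright, one_mul]

theorem IsFlagged.eval_arrowEntries_eq_zero {I α : Type*} [Fintype I] [DecidableEq I]
    [LinearOrder α] {v : I → Fin Q.n} {c : I → α} {X B : Fin Q.numArrows → Matrix I I K}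
    {m : Matrix I I K} (h : IsFlagged v c X m B) {p : MvPolynomial (ArrowEntry Q v ⊤) K}
    (hp : MvPolynomial.aeval (flagPolynomial K v c) p = 0) :
    MvPolynomial.eval (arrowEntries v ⊤ X) p = 0 := by
  let w : FlagParam Q v c → K := Sum.elim (fun t => m t.1.1 t.1.2) (arrowEntries v _ B)
  have hX : arrowEntries v ⊤ X = fun t => MvPolynomial.aeval w (flagPolynomial K v c t) :=
    funext fun t => by rw [aeval_flagPolynomial, h.flagPoint_eq]
  rw [hX, ← MvPolynomial.aeval_eq_eval, ← MvPolynomial.comp_aeval_apply, hp, map_zero]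

theorem exists_coords_arrowEntries {I : Type*} {v : I → Fin Q.n} {e : I → CarrierIndex d}
    (he : Function.Injective e) (hv : ∀ p, (e p).1 = v p) :
    ∃ κ : ArrowEntry Q v ⊤ → Q.Coords d, Function.Injective κ ∧ ∀ x : Q.RepSpace d K,
      arrowEntries v ⊤ (fun a => (arrowMatrix x a).submatrix e e) = x ∘ κ := by
  have hκ (t : ArrowEntry Q v ⊤) : ∃ κ : Q.Coords d, t.1 = κ.1 ∧
      e t.2.1.1 = ⟨Q.tgt κ.1, κ.2.1⟩ ∧ e t.2.1.2 = ⟨Q.src κ.1, κ.2.2⟩ := by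
    obtain ⟨a, ⟨⟨p, q⟩, ⟨⟨hp, hq⟩, -⟩⟩⟩ := t
    have hp : (e p).1 = Q.tgt a := (hv p).trans hp
    have hq : (e q).1 = Q.src a := (hv q).trans hq
    exact ⟨⟨a, hp ▸ (e p).2, hq ▸ (e q).2⟩, rfl, Sigma.ext hp (by simp), Sigma.ext hq (by simp)⟩
  choose κ hκ hκp hκq using hκ
  refine ⟨κ, fun t t' h => ?_, fun x => funext fun t => ?_⟩
  · have ha : t.1 = t'.1 := by rw [hκ, hκ, h]
    have hp : t.2.1.1 = t'.2.1.1 := he (by rw [hκp, hκp, h])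
    have hq : t.2.1.2 = t'.2.1.2 := he (by rw [hκq, hκq, h])
    obtain ⟨a, ⟨⟨p, q⟩, _⟩⟩ := t
    obtain ⟨a', ⟨⟨p', q'⟩, _⟩⟩ := t'
    obtain rfl : a = a' := ha
    obtain rfl : p = p' := hp
    obtain rfl : q = q' := hq
    rfl
  · rw [arrowEntries, Matrix.submatrix_apply, hκp, hκq, hκ]
    exact arrowMatrix_apply_mk ..

theorem IsNormalizedSubrep.injective {I J R : Type*} [CommRing R] [Nontrivial R] [Fintype J]
    [DecidableEq J] [Fintype I] {v : I → Fin Q.n} {v' : J → Fin Q.n}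
    {X : Fin Q.numArrows → Matrix I I R} {e : J → I} {z : Matrix I J R}
    (h : IsNormalizedSubrep v v' X e z) : Function.Injective e := fun q q' hq => by
  by_contra hne
  have hrow : z (e q) q' = 0 := (congrFun₂ h.submatrix q q').trans (Matrix.one_apply_ne hne)
  have hrow' : z (e q') q' = 1 := (congrFun₂ h.submatrix q' q').trans (Matrix.one_apply_eq q')
  exact one_ne_zero (hrow'.symm.trans (hq ▸ hrow))

theorem exists_equiv_isFlagged_of_stable (hd : ∀ i, d i = dx i + dy i) {x : Q.RepSpace d K}
    {N : Submodule K (Q.Carrier d K)} (hN : Q.Stable d K x N) (hdim : ∀ i, Q.vdim d K N i = dx i) :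
    ∃ (E : CarrierIndex dx ⊕ CarrierIndex dy ≃ CarrierIndex d),
      (∀ p, (E p).1 = sumVertex dx dy p) ∧ ∃ m B, IsFlagged (sumVertex dx dy) (sumBlock dx dy)
        (fun a => (arrowMatrix x a).submatrix E E) m B := by
  obtain ⟨e, z, hz, -⟩ := (hasSubrep_of_stable hN hdim).exists_isNormalizedSubrep ⊤
  obtain ⟨E, hE, hEe⟩ := exists_equiv_sum_of_injective hd hz.injective hz.degree
  have hzE := hz.submatrix_equiv (e' := Sum.inl) hEe
  have hv : Sigma.fst ∘ E = sumVertex dx dy := funext hE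
  rw [hv] at hzE
  exact ⟨E, hE, hzE.exists_isFlagged fun a =>
    ((supportedOn_arrowMatrix x a).submatrix E E).mono fun p q h =>
      ⟨⟨(hE p).symm.trans h.1.1, (hE q).symm.trans h.1.2⟩, trivial⟩⟩

theorem exists_eval_ne_zero_of_dense [Infinite K] {U : Set (Q.RepSpace d K)} (hU : Dense U)
    {P : MvPolynomial (Q.Coords d) K} (hP : P ≠ 0) : ∃ x ∈ U, MvPolynomial.eval x P ≠ 0 := by
  obtain ⟨x₀, hx₀⟩ : ∃ x, MvPolynomial.eval x P ≠ 0 := by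
    by_contra! h0
    exact hP (MvPolynomial.funext fun x => (h0 x).trans (map_zero _).symm)
  have hopen : IsOpen {x : Q.RepSpace d K | MvPolynomial.eval x P ≠ 0} :=
    TopologicalSpace.isOpen_generateFrom_of_mem ⟨P, rfl⟩
  obtain ⟨x, hxP, hxU⟩ := hU.inter_open_nonempty _ hopen ⟨x₀, hx₀⟩
  exact ⟨x, hxU, hxP⟩

/- Otherwise a relation `p` among the coordinates of flagged representations, multiplied over all
ways of splitting the basis, is a nonzero polynomial vanishing on `U`. -/
theorem genericallyFlagged_of_dense [Infinite K] (hd : ∀ i, d i = dx i + dy i)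
    {U : Set (Q.RepSpace d K)} (hU : Dense U)
    (h : ∀ x ∈ U, ∃ N, Q.Stable d K x N ∧ ∀ i, Q.vdim d K N i = dx i) :
    GenericallyFlagged K (sumVertex dx dy) (sumBlock dx dy) := by
  classical
  by_contra hgen
  rw [GenericallyFlagged, algebraicIndependent_iff] at hgen
  push Not at hgen
  obtain ⟨p, hp, hp0⟩ := hgen
  have hκ (E : {E : CarrierIndex dx ⊕ CarrierIndex dy ≃ CarrierIndex d //
    ∀ p, (E p).1 = sumVertex dx dy p}) := exists_coords_arrowEntries (K := K) E.1.injective E.2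
  choose κ hκinj hκ using hκ
  have hP : ∏ E, MvPolynomial.rename (κ E) p ≠ 0 := Finset.prod_ne_zero_iff.mpr fun E _ =>
    (map_ne_zero_iff _ (MvPolynomial.rename_injective _ (hκinj E))).mpr hp0
  obtain ⟨x, hxU, hxP⟩ := exists_eval_ne_zero_of_dense hU hP
  obtain ⟨N, hN, hdim⟩ := h x hxU
  obtain ⟨E, hE, m, B, hflag⟩ := exists_equiv_isFlagged_of_stable hd hN hdim
  have hfactor : MvPolynomial.eval x (MvPolynomial.rename (κ ⟨E, hE⟩) p) = 0 := by
    rw [MvPolynomial.eval_rename, ← hκ]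
    exact hflag.eval_arrowEntries_eq_zero hp
  rw [map_prod] at hxP
  exact Finset.prod_ne_zero_iff.mp hxP ⟨E, hE⟩ (Finset.mem_univ _) hfactor

end DenseSubrep

open QuiverData in
theorem statement_6_general (K : Type) [Field K] [IsAlgClosed K] (Q : QuiverData)
    (d d' : Fin Q.n → ℕ) (hle : ∀ i, d' i ≤ d i) :
    ((∃ U : Set (RepSpace Q d K), IsOpen U ∧ Dense U ∧
        ∀ x ∈ U, ∃ N, Stable Q d K x N ∧ ∀ i, vdim Q d K N i = d' i)
      ↔ ∃ (y : RepSpace Q d' K) (z : RepSpace Q (fun i => d i - d' i) K),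
          Ext1Zero Q K (fun _ => Set.univ) d' (fun i => d i - d' i) y z) ∧
    ((∀ x : RepSpace Q d K, ∃ N, Stable Q d K x N ∧ ∀ i, vdim Q d K N i = d' i)
      ↔ ∃ (y : RepSpace Q d' K) (z : RepSpace Q (fun i => d i - d' i) K),
          Ext1Zero Q K (fun _ => Set.univ) d' (fun i => d i - d' i) y z) := by
  have hinf : Infinite K := IsAlgClosed.instInfinite
  have hd (i : Fin Q.n) : d i = d' i + (d i - d' i) := (Nat.add_sub_of_le (hle i)).symm
  refine ⟨⟨?_, fun ⟨y, z, hext⟩ => ?_⟩, fun hall => ?_, fun ⟨y, z, hext⟩ => ?_⟩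
  · rintro ⟨U, -, hdense, hU⟩
    exact (genericallyFlagged_of_dense hd hdense hU).exists_ext1Zero
  · exact ⟨Set.univ, isOpen_univ, dense_univ, fun x _ =>
      exists_stable_of_genericallyFlagged hd (genericallyFlagged_of_ext1Zero hext) x⟩
  · exact (genericallyFlagged_of_dense hd dense_univ fun x _ => hall x).exists_ext1Zero
  · exact exists_stable_of_genericallyFlagged hd (genericallyFlagged_of_ext1Zero hext)

open QuiverData in
/-- Schofield. For an acyclic quiver `Q` and dimension vectors
`d' ≤ d`, the following are equivalent: (a) generically, `d`-dimensional representations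
of `KQ` have a subrepresentation of dimension vector `d'`; (b) every `d`-dimensional
representation has a subrepresentation of dimension vector `d'`;
(c) `ext(d', d − d') = 0`. (Stated as (a) ↔ (c) and (b) ↔ (c).) -/
theorem statement_6 (K : Type) [Field K] [IsAlgClosed K]
    (Q : QuiverData) (hacyc : Acyclic Q)
    (d d' : Fin Q.n → ℕ) (hle : ∀ i, d' i ≤ d i) :
    ((∃ U : Set (RepSpace Q d K), IsOpen U ∧ Dense U ∧
        ∀ x ∈ U, ∃ N, Stable Q d K x N ∧ ∀ i, vdim Q d K N i = d' i)
      ↔ ∃ (y : RepSpace Q d' K) (z : RepSpace Q (fun i => d i - d' i) K),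
          Ext1Zero Q K (fun _ => Set.univ) d' (fun i => d i - d' i) y z) ∧
    ((∀ x : RepSpace Q d K, ∃ N, Stable Q d K x N ∧ ∀ i, vdim Q d K N i = d' i)
      ↔ ∃ (y : RepSpace Q d' K) (z : RepSpace Q (fun i => d i - d' i) K),
          Ext1Zero Q K (fun _ => Set.univ) d' (fun i => d i - d' i) y z) :=
  statement_6_general K Q d d' hle
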